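/- Let A = F ⊕ A_1 ⊕ A_2 ⊕ ··· be a graded algebra generated in degree 1 which is piecewise-Koszul with period p = 3 and jump degree d > 3. Then there exists an A∞-structure {m_q} on the Koszul dual E(A), with m_1 = 0, m_2 the Yoneda product, and m_q = 0 unless q = k(d−3)+2 for some k ∈ ℕ, such that (E(A), {m_q}) is an A∞-algebra generated by E^1(A) = Ext^1_A(F,F). -/

import Mathlib

noncomputable section

/-- The jump function `δ^d_p(n) = ((n − (n mod p))/p)·d + (n mod p)`. -/
def jump (d p n : ℕ) : ℕ := (n - n % p) / p * d + n % p

/-- A positively graded `F`-algebra `A = ⊕_{i≥0} A_i`. -/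
structure GradedAlg (F : Type) [Field F] where
  A : Type
  [ringA : Ring A]
  [algA : Algebra F A]
  grading : ℕ → Submodule F A
  [graded : GradedAlgebra grading]

attribute [instance] GradedAlg.ringA GradedAlg.algA GradedAlg.graded

namespace GradedAlg

variable {F : Type} [Field F] (𝒜 : GradedAlg F)

/-- The graded Jacobson radical `J = ⊕_{i≥1} A_i`, i.e. the irrelevant ideal. -/
def jideal : Ideal 𝒜.A := (HomogeneousIdeal.irrelevant 𝒜.grading).toIdeal

/-- The standing assumptions: `A_0` is a semisimple Artin algebra, `A` is generated in
degrees 0 and 1 (`A_i · A_j = A_{i+j}`), and `A_1` is finite dimensional over `F`. -/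
structure Standing : Prop where
  semisimple : IsSemisimpleRing ↥(𝒜.grading 0)
  artinian : IsArtinianRing ↥(𝒜.grading 0)
  gen01 : ∀ i j : ℕ, 𝒜.grading i * 𝒜.grading j = 𝒜.grading (i + j)
  findim : FiniteDimensional F ↥(𝒜.grading 1)

/-- A (ℤ-)graded module over the graded algebra `𝒜`. -/
structure GMod where
  M : Type
  [acg : AddCommGroup M]
  [modF : Module F M]
  [modA : Module 𝒜.A M]
  [tower : IsScalarTower F 𝒜.A M]
  [scomm : SMulCommClass 𝒜.A F M]
  grading : ℤ → Submodule F M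
  sup_eq_top : (⨆ j : ℤ, grading j) = ⊤
  indep : iSupIndep grading
  smul_mem : ∀ {i : ℕ} {j : ℤ} {a : 𝒜.A} {m : M},
    a ∈ 𝒜.grading i → m ∈ grading j → a • m ∈ grading ((i : ℤ) + j)

attribute [instance] GMod.acg GMod.modF GMod.modA GMod.tower GMod.scomm

variable {𝒜}

/-- A degree-zero morphism of graded modules. -/
structure GHom (M N : 𝒜.GMod) where
  lin : M.M →ₗ[𝒜.A] N.M
  grad : ∀ (j : ℤ) (x : M.M), x ∈ M.grading j → lin x ∈ N.grading j

/-- A graded module is generated in degree `s` if `A · M_s = M`. -/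
def GMod.GenInDeg (M : 𝒜.GMod) (s : ℤ) : Prop :=
  Submodule.span 𝒜.A (M.grading s : Set M.M) = ⊤

/-- `T` is the trivial graded module `A_0 = A/J`, concentrated in degree `0`. -/
def IsTrivialGMod (T : 𝒜.GMod) : Prop :=
  (∀ j : ℤ, j ≠ 0 → T.grading j = ⊥) ∧
    Nonempty (T.M ≃ₗ[𝒜.A] (𝒜.A ⧸ 𝒜.jideal))

/-- A minimal graded projective resolution
`⋯ → P_{n+1} → P_n → ⋯ → P_0 → M → 0` of the graded module `M`,
with finitely generated terms. -/
structure MinRes (M : 𝒜.GMod) where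
  P : ℕ → 𝒜.GMod
  d : ∀ n : ℕ, GHom (P (n + 1)) (P n)
  aug : GHom (P 0) M
  fg : ∀ n, Module.Finite 𝒜.A (P n).M
  projective : ∀ n, Module.Projective 𝒜.A (P n).M
  aug_surj : Function.Surjective aug.lin
  exact_aug : LinearMap.range (d 0).lin = LinearMap.ker aug.lin
  exact : ∀ n, LinearMap.range (d (n + 1)).lin = LinearMap.ker (d n).lin
  minimal : ∀ n, LinearMap.range (d n).lin ≤ 𝒜.jideal • (⊤ : Submodule 𝒜.A (P n).M)

variable (𝒜)

/-- `M` is a piecewise-Koszul module (period `p`, jump degree `d`, shift `s`):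
it has a minimal graded projective resolution with `P_n` generated in degree `δ^d_p(n) + s`. -/
def IsPKMod (p d : ℕ) (s : ℤ) (M : 𝒜.GMod) : Prop :=
  ∃ R : MinRes M, ∀ n : ℕ, (R.P n).GenInDeg ((jump d p n : ℤ) + s)

/-- `A` is a piecewise-Koszul algebra (period `p`, jump degree `d`): the trivial module `T`
admits a minimal graded projective resolution with `P_n` generated in degree `δ^d_p(n)`. -/
def IsPKAlg (p d : ℕ) (T : 𝒜.GMod) : Prop := IsPKMod 𝒜 p d 0 T

/-- A Koszul module: a minimal graded projective resolution with `P_n` generated in degree `n`. -/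
def IsKoszulMod (M : 𝒜.GMod) : Prop :=
  ∃ R : MinRes M, ∀ n : ℕ, (R.P n).GenInDeg (n : ℤ)

variable {𝒜}

section Ext

variable (T : 𝒜.GMod) {M : 𝒜.GMod}

/-- The space of `A`-linear maps `P_n → T` (cochains). -/
abbrev HomSp (R : MinRes M) (n : ℕ) := (R.P n).M →ₗ[𝒜.A] T.M

/-- Precomposition, as an `F`-linear map on cochains. -/
def precompF {M₁ M₂ : 𝒜.GMod} (g : M₁.M →ₗ[𝒜.A] M₂.M) :
    (M₂.M →ₗ[𝒜.A] T.M) →ₗ[F] (M₁.M →ₗ[𝒜.A] T.M) where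
  toFun f := f ∘ₗ g
  map_add' f₁ f₂ := by ext x; simp
  map_smul' c f := by ext x; simp

/-- Cocycles: maps `P_n → T` vanishing on the image of `P_{n+1}`. -/
def cocyc (R : MinRes M) (n : ℕ) : Submodule F (HomSp T R n) :=
  LinearMap.ker (precompF T (R.d n).lin)

/-- Coboundaries: maps `P_n → T` factoring through `d_{n-1}`. -/
def cobound (R : MinRes M) : (n : ℕ) → Submodule F (HomSp T R n)
  | 0 => ⊥
  | n + 1 => LinearMap.range (precompF T (R.d n).lin)

/-- The coboundaries, viewed inside the cocycles. -/
def extRel (R : MinRes M) (n : ℕ) : Submodule F ↥(cocyc T R n) :=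
  (cobound T R n).comap (cocyc T R n).subtype

/-- `Ext^n_A(M, T)`, computed from the resolution `R` of `M`. -/
abbrev ExtQ (R : MinRes M) (n : ℕ) := ↥(cocyc T R n) ⧸ extRel T R n

/-- The class in `Ext^n_A(M,T)` of a cocycle. -/
def extCls {R : MinRes M} {n : ℕ} {f : HomSp T R n} (hf : f ∈ cocyc T R n) :
    ExtQ T R n :=
  Submodule.Quotient.mk ⟨f, hf⟩

/-- Cochains of shift-degree `j`: maps `P_n → T` vanishing on every `(P_n)_i` with `i ≠ j`. -/
def homDeg (R : MinRes M) (n : ℕ) (j : ℤ) : Submodule F (HomSp T R n) where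
  carrier := {f | ∀ i : ℤ, i ≠ j → ∀ x ∈ (R.P n).grading i, f x = 0}
  add_mem' := fun hf hg i hi x hx => by
    simp only [LinearMap.add_apply, hf i hi x hx, hg i hi x hx, add_zero]
  zero_mem' := fun i hi x hx => rfl
  smul_mem' := fun c f hf i hi x hx => by
    simp only [LinearMap.smul_apply, hf i hi x hx, smul_zero]

/-- The shift-degree `j` component `Ext^n_A(M,T)_j`. -/
def extComp (R : MinRes M) (n : ℕ) (j : ℤ) : Submodule F (ExtQ T R n) :=
  Submodule.map (extRel T R n).mkQ ((homDeg T R n j).comap (cocyc T R n).subtype)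

/-- Transport `Ext` along an equality of cohomological degrees. -/
def extCast (R : MinRes M) {a b : ℕ} (h : a = b) : ExtQ T R a ≃ₗ[F] ExtQ T R b :=
  h ▸ LinearEquiv.refl F (ExtQ T R a)

/-- A chain map lifting of a cochain `g : P_j → T` over the resolutions `RM` of `M`
and `RT` of `T`. -/
structure ChainLift (RT : MinRes T) (RM : MinRes M) (j : ℕ)
    (g : (RM.P j).M →ₗ[𝒜.A] T.M) where
  ℓ : ∀ m k : ℕ, m = k + j → ((RM.P m).M →ₗ[𝒜.A] (RT.P k).M)
  comm_aug : RT.aug.lin ∘ₗ ℓ j 0 (by omega) = g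
  comm : ∀ k : ℕ, (RT.d k).lin ∘ₗ ℓ (k + j + 1) (k + 1) (by omega) =
    ℓ (k + j) k rfl ∘ₗ (RM.d (k + j)).lin

/-- `μ` is the (bigraded family of) Yoneda product(s)
`Ext^i(T,T) ⊗ Ext^j(M,T) → Ext^{i+j}(M,T)`: it is computed by composing a cocycle
`f : P_i → T` with a chain lifting of a cocycle `g : Q_j → T`. -/
def IsYonedaMul (RT : MinRes T) (RM : MinRes M)
    (μ : ∀ i j : ℕ, ExtQ T RT i →ₗ[F] ExtQ T RM j →ₗ[F] ExtQ T RM (i + j)) : Prop :=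
  ∀ (i j : ℕ) (f : HomSp T RT i) (hf : f ∈ cocyc T RT i)
    (g : HomSp T RM j) (hg : g ∈ cocyc T RM j)
    (L : ChainLift T RT RM j g)
    (hc : f ∘ₗ L.ℓ (i + j) i (by omega) ∈ cocyc T RM (i + j)),
    μ i j (extCls T hf) (extCls T hg) = extCls T hc

/-- `E(A) = Ext^*_A(A_0,A_0)` is generated in the ext-degrees belonging to `S`. -/
def ExtGenIn (RT : MinRes T)
    (μ : ∀ i j : ℕ, ExtQ T RT i →ₗ[F] ExtQ T RT j →ₗ[F] ExtQ T RT (i + j))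
    (S : Set ℕ) : Prop :=
  ∀ W : (n : ℕ) → Submodule F (ExtQ T RT n),
    (∀ n ∈ S, W n = ⊤) →
    (∀ (i j : ℕ) (x : ExtQ T RT i) (y : ExtQ T RT j),
      x ∈ W i → y ∈ W j → μ i j x y ∈ W (i + j)) →
    ∀ n, W n = ⊤

/-- `E(M) = Ext^*_A(M,A_0)` is generated in degree `0` as a graded `E(A)`-module. -/
def ExtModGenInZero (RT : MinRes T) (RM : MinRes M)
    (μ : ∀ i j : ℕ, ExtQ T RT i →ₗ[F] ExtQ T RM j →ₗ[F] ExtQ T RM (i + j)) : Prop :=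
  ∀ W : (n : ℕ) → Submodule F (ExtQ T RM n),
    W 0 = ⊤ →
    (∀ (i j : ℕ) (x : ExtQ T RT i) (y : ExtQ T RM j),
      y ∈ W j → μ i j x y ∈ W (i + j)) →
    ∀ n, W n = ⊤

end Ext

/-- `JM` is (a graded module isomorphic to) the submodule `J·M` of `M`. -/
def IsJM (M JM : 𝒜.GMod) : Prop :=
  ∃ e : JM.M ≃ₗ[𝒜.A] ↥(𝒜.jideal • (⊤ : Submodule 𝒜.A M.M)),
    ∀ (j : ℤ) (x : JM.M), x ∈ JM.grading j ↔ ((e x : M.M) ∈ M.grading j)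

/-- `Q` is (a graded module isomorphic to) the quotient `M/JM`. -/
def IsQuotJM (M Q : 𝒜.GMod) : Prop :=
  ∃ e : Q.M ≃ₗ[𝒜.A] (M.M ⧸ (𝒜.jideal • (⊤ : Submodule 𝒜.A M.M))),
    ∀ j : ℤ, Q.grading j = Submodule.map
      ((e.symm.toLinearMap ∘ₗ (𝒜.jideal • (⊤ : Submodule 𝒜.A M.M)).mkQ).restrictScalars F)
      (M.grading j)

/-- `W` is (isomorphic to) the `n`-th syzygy `Ω^n(M)` of `M` in the minimal graded
projective resolution `R`. -/
def IsSyzygy {M : 𝒜.GMod} (R : MinRes M) : ℕ → 𝒜.GMod → Prop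
  | 0, W => ∃ e : W.M ≃ₗ[𝒜.A] M.M,
      ∀ (j : ℤ) (x : W.M), x ∈ W.grading j ↔ e x ∈ M.grading j
  | 1, W => ∃ e : W.M ≃ₗ[𝒜.A] ↥(LinearMap.ker R.aug.lin),
      ∀ (j : ℤ) (x : W.M), x ∈ W.grading j ↔ ((e x : (R.P 0).M) ∈ (R.P 0).grading j)
  | (n + 2), W => ∃ e : W.M ≃ₗ[𝒜.A] ↥(LinearMap.ker (R.d n).lin),
      ∀ (j : ℤ) (x : W.M), x ∈ W.grading j ↔ ((e x : (R.P (n + 1)).M) ∈ (R.P (n + 1)).grading j)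

end GradedAlg

namespace AInf

variable (F : Type) [Field F]

theorem mem_decomp_le {n : ℕ} {rs : ℕ × ℕ}
    (h : rs ∈ ((Finset.range (n + 1)) ×ˢ (Finset.Icc 1 n)).filter
      fun rs => rs.1 + rs.2 ≤ n) :
    rs.1 + rs.2 ≤ n := (Finset.mem_filter.mp h).2

theorem mem_decomp_one_le {n : ℕ} {rs : ℕ × ℕ}
    (h : rs ∈ ((Finset.range (n + 1)) ×ˢ (Finset.Icc 1 n)).filter
      fun rs => rs.1 + rs.2 ≤ n) :
    1 ≤ rs.2 :=
  (Finset.mem_Icc.mp (Finset.mem_product.mp (Finset.mem_filter.mp h).1).2).1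

/-- The tuple `(x_1, …, x_r, m_s(x_{r+1}, …, x_{r+s}), x_{r+s+1}, …, x_n)` appearing in
the Stasheff identity `SI(n)`. -/
def insertAt {V : Type} [AddCommGroup V] [Module F V]
    (m : (q : ℕ) → MultilinearMap F (fun _ : Fin q => V) V)
    (n r s : ℕ) (hrs : r + s ≤ n) (hs : 1 ≤ s) (x : Fin n → V) :
    Fin (r + 1 + (n - r - s)) → V := fun k =>
  if hk : (k : ℕ) < r then x ⟨(k : ℕ), by omega⟩
  else if hk' : (k : ℕ) = r then
    m s (fun l => x ⟨r + (l : ℕ), by have := l.isLt; omega⟩)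
  else x ⟨(k : ℕ) + s - 1, by have := k.isLt; omega⟩

/-- A (minimal, bigraded) `A_∞`-algebra over `F`: a bigraded vector space
`E = ⊕ E^n_j` (first degree the cohomological/ext degree, second degree the
shift degree) together with multilinear operations `m_q` of degree `(2 − q, 0)`
satisfying the Stasheff identities `SI(n)` (with Koszul signs) on homogeneous
elements, and with `m_1 = 0`. -/
structure BigradedAInfty where
  V : Type
  [acg : AddCommGroup V]
  [modF : Module F V]
  comp : ℤ → ℤ → Submodule F V
  m : (q : ℕ) → MultilinearMap F (fun _ : Fin q => V) V
  m_one : m 1 = 0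
  sup_comp : (⨆ n : ℤ, ⨆ j : ℤ, comp n j) = ⊤
  hom_degree : ∀ (q : ℕ), 1 ≤ q → ∀ (ι σ : Fin q → ℤ) (x : Fin q → V),
    (∀ t, x t ∈ comp (ι t) (σ t)) →
    m q x ∈ comp ((∑ t, ι t) + 2 - q) (∑ t, σ t)
  stasheff : ∀ (n : ℕ) (ι σ : Fin n → ℤ) (x : Fin n → V),
    (∀ t, x t ∈ comp (ι t) (σ t)) →
    ∑ rs ∈ (((Finset.range (n + 1)) ×ˢ (Finset.Icc 1 n)).filter
        fun rs => rs.1 + rs.2 ≤ n).attach,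
      (((Int.negOnePow ((rs.1.1 : ℤ) + (rs.1.2 : ℤ) * ((n - rs.1.1 - rs.1.2 : ℕ) : ℤ) +
          (rs.1.2 : ℤ) *
            ∑ t ∈ Finset.univ.filter (fun t : Fin n => (t : ℕ) < rs.1.1), ι t)) : ℤˣ) : ℤ) •
        m (rs.1.1 + 1 + (n - rs.1.1 - rs.1.2))
          (insertAt F m n rs.1.1 rs.1.2 (mem_decomp_le rs.2) (mem_decomp_one_le rs.2) x)
      = 0

attribute [instance] BigradedAInfty.acg BigradedAInfty.modF

variable {F}

/-- The ext-degree-`n` component `E^n = ⊕_j E^n_j`. -/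
def Edeg (S : BigradedAInfty F) (n : ℤ) : Submodule F S.V := ⨆ j : ℤ, S.comp n j

variable (F)

open GradedAlg in
/-- The bigraded `A_∞`-algebra `S` is an `A_∞`-structure *on the Koszul dual `E(A)`*:
its components vanish in negative ext-degrees and are identified with the bigraded Ext
groups `Ext^n_A(A_0,A_0)_j` in such a way that `m_2` is the Yoneda product `μ`. -/
structure AInftyOnExt {F : Type} [Field F] (𝒜 : GradedAlg F) (T : 𝒜.GMod)
    (R : GradedAlg.MinRes T)
    (μ : ∀ i j : ℕ, ExtQ T R i →ₗ[F] ExtQ T R j →ₗ[F] ExtQ T R (i + j))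
    (S : BigradedAInfty F) where
  comp_neg : ∀ n j : ℤ, n < 0 → S.comp n j = ⊥
  ψ : ∀ n : ℕ, ↥(Edeg S (n : ℤ)) ≃ₗ[F] ExtQ T R n
  ψ_comp : ∀ (n : ℕ) (j : ℤ),
    Submodule.map (ψ n).toLinearMap
        ((S.comp (n : ℤ) j).comap (Edeg S (n : ℤ)).subtype) = extComp T R n j
  ψ_mul : ∀ (i j : ℕ) (x y : S.V) (hx : x ∈ Edeg S (i : ℤ)) (hy : y ∈ Edeg S (j : ℤ))
    (hm : S.m 2 ![x, y] ∈ Edeg S ((i + j : ℕ) : ℤ)),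
    ψ (i + j) ⟨S.m 2 ![x, y], hm⟩ = μ i j (ψ i ⟨x, hx⟩) (ψ j ⟨y, hy⟩)

variable {F}

/-- `E` is generated by `E^1` as an `A_∞`-algebra: for every `n ≥ 2`,
`E^n = Σ_{i+j=n} m_2(E^i ⊗ E^j) + Σ m_q(E^{i_1} ⊗ ⋯ ⊗ E^{i_q})`, the sums running over
decompositions `i_1 + ⋯ + i_q + 2 − q = n` with all `i_t ≥ 1`. -/
def GeneratedByE1 (S : BigradedAInfty F) : Prop :=
  ∀ n : ℤ, 2 ≤ n →
    Edeg S n = Submodule.span F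
      {v : S.V | ∃ (q : ℕ) (ι : Fin q → ℤ) (x : Fin q → S.V),
        2 ≤ q ∧ (∀ t, 1 ≤ ι t ∧ x t ∈ Edeg S (ι t)) ∧
        ((∑ t, ι t) + 2 - q = n) ∧ v = S.m q x}

/-- A reduced `(2,l)`-algebra `E` is generated by `E^1`: for every `n ≥ 2`,
`E^n = Σ_{i+j=n, i,j≥1} m_2(E^i ⊗ E^j) + Σ m_l(E^{i_1} ⊗ ⋯ ⊗ E^{i_l})`, the second sum
over decompositions `i_1 + ⋯ + i_l + 2 − l = n` with all `i_t ≥ 1`. -/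
def ReducedGenByE1 (S : BigradedAInfty F) (l : ℕ) : Prop :=
  ∀ n : ℤ, 2 ≤ n →
    Edeg S n = Submodule.span F
      {v : S.V |
        (∃ (i j : ℤ) (x y : S.V), 1 ≤ i ∧ 1 ≤ j ∧ i + j = n ∧
          x ∈ Edeg S i ∧ y ∈ Edeg S j ∧ v = S.m 2 ![x, y]) ∨
        (∃ (ι : Fin l → ℤ) (x : Fin l → S.V),
          (∀ t, 1 ≤ ι t ∧ x t ∈ Edeg S (ι t)) ∧
          ((∑ t, ι t) + 2 - l = n) ∧ v = S.m l x)}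

end AInf


namespace PKA

section FreeBasics
variable {F : Type} [Field F] {X : Type}

/-- The word basis element attached to a list of letters. -/
def Wd (F : Type) [Field F] {X : Type} (l : List X) : FreeAlgebra F X :=
  (l.map (FreeAlgebra.ι F)).prod

@[simp] lemma Wd_nil : Wd F ([] : List X) = 1 := rfl

lemma Wd_cons (x : X) (l : List X) : Wd F (x :: l) = FreeAlgebra.ι F x * Wd F l := by
  simp [Wd]

lemma Wd_single (x : X) : Wd F [x] = FreeAlgebra.ι F x := by simp [Wd]

lemma Wd_append (l l' : List X) : Wd F (l ++ l') = Wd F l * Wd F l' := by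
  simp [Wd]

/-- The basis of words. -/
def wb (F : Type) [Field F] (X : Type) : Module.Basis (List X) F (FreeAlgebra F X) :=
  (FreeAlgebra.basisFreeMonoid F X).reindex FreeMonoid.toList

lemma wb_apply (l : List X) : wb F X l = Wd F l := by
  simp only [wb, Module.Basis.reindex_apply, FreeAlgebra.basisFreeMonoid]
  induction l with
  | nil => 
    simp [FreeAlgebra.equivMonoidAlgebraFreeMonoid]
  | cons x l ih =>
    rw [Wd_cons, ← ih]
    simp [FreeAlgebra.equivMonoidAlgebraFreeMonoid, FreeMonoid.lift_apply]

/-- Linear extension from words. -/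
def lin {M : Type} [AddCommGroup M] [Module F M] (f : List X → M) : FreeAlgebra F X →ₗ[F] M :=
  (wb F X).constr F f

@[simp] lemma lin_Wd {M : Type} [AddCommGroup M] [Module F M] (f : List X → M) (l : List X) :
    lin f (Wd F l) = f l := by
  rw [lin, ← wb_apply, Module.Basis.constr_basis]

lemma Tind {p : FreeAlgebra F X → Prop} (h0 : p 0) (hadd : ∀ a b, p a → p b → p (a + b))
    (hsmul : ∀ (r : F) a, p a → p (r • a)) (hW : ∀ l, p (Wd F l)) (t : FreeAlgebra F X) : p t := by
  have : t ∈ Submodule.span F (Set.range (wb F X)) := by rw [(wb F X).span_eq]; trivial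
  induction this using Submodule.span_induction with
  | mem x h => obtain ⟨l, rfl⟩ := h; rw [wb_apply]; exact hW l
  | zero => exact h0
  | add x y _ _ hx hy => exact hadd _ _ hx hy
  | smul r x _ hx => exact hsmul _ _ hx

lemma Text {M : Type} [AddCommGroup M] [Module F M] {f g : FreeAlgebra F X →ₗ[F] M}
    (h : ∀ l, f (Wd F l) = g (Wd F l)) : f = g := by
  apply (wb F X).ext
  intro l; rw [wb_apply]; exact h l

/-- The sign automorphism. -/
def sgm (s : X → F) : FreeAlgebra F X →ₐ[F] FreeAlgebra F X :=
  FreeAlgebra.lift F (fun x => s x • FreeAlgebra.ι F x)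

@[simp] lemma sgm_ι (s : X → F) (x : X) : 
    sgm s (FreeAlgebra.ι F x) = s x • FreeAlgebra.ι F x := by simp [sgm]

/-- The word level formula of the derivation. -/
def derW (s : X → F) (c : X → FreeAlgebra F X) : List X → FreeAlgebra F X
  | [] => 0
  | x :: l => c x * Wd F l + s x • (FreeAlgebra.ι F x * derW s c l)

/-- The twisted derivation of the free algebra with given values on letters. -/
def der (s : X → F) (c : X → FreeAlgebra F X) : FreeAlgebra F X →ₗ[F] FreeAlgebra F X :=
  lin (derW s c)

variable (s : X → F) (c : X → FreeAlgebra F X)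

@[simp] lemma der_one : der s c 1 = 0 := by
  rw [← Wd_nil, der, lin_Wd]; rfl

@[simp] lemma der_ι (x : X) : der s c (FreeAlgebra.ι F x) = c x := by
  rw [← Wd_single, der, lin_Wd]; simp [derW]

lemma der_ι_mul (x : X) (b : FreeAlgebra F X) : der s c (FreeAlgebra.ι F x * b) =
    c x * b + s x • (FreeAlgebra.ι F x * der s c b) := by
  induction b using Tind with
  | h0 => simp
  | hadd a b ha hb => simp only [mul_add, map_add, ha, hb, smul_add]; abel
  | hsmul r a ha => simp only [mul_smul_comm, map_smul, ha, smul_add, smul_comm r]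
  | hW l => rw [← Wd_cons, der, lin_Wd, lin_Wd]; rfl

lemma der_mul (a b : FreeAlgebra F X) :
    der s c (a * b) = der s c a * b + sgm s a * der s c b := by
  induction a using Tind with
  | h0 => simp
  | hadd a a' ha hb => simp only [add_mul, map_add, ha, hb]; abel
  | hsmul r a ha => simp only [smul_mul_assoc, map_smul, ha, smul_add]
  | hW l =>
    induction l with
    | nil => simp
    | cons x l ih =>
      rw [Wd_cons, mul_assoc, der_ι_mul, ih, der_ι_mul, map_mul, sgm_ι]
      simp only [mul_add, add_mul, mul_assoc, smul_add, smul_mul_assoc]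
      abel

lemma sgm_sgm (hs : ∀ x, s x * s x = 1) (a : FreeAlgebra F X) : sgm s (sgm s a) = a := by
  induction a using FreeAlgebra.induction with
  | grade0 r => simp
  | grade1 x => simp [smul_smul, hs]
  | mul a b ha hb => simp [ha, hb]
  | add a b ha hb => simp [ha, hb]

lemma der_sgm (hc : ∀ x, sgm s (c x) = - (s x • c x)) (a : FreeAlgebra F X) :
    der s c (sgm s a) = - sgm s (der s c a) := by
  induction a using FreeAlgebra.induction with
  | grade0 r => simp [Algebra.algebraMap_eq_smul_one]
  | grade1 x => simp [hc]
  | mul a b ha hb => simp [ha, hb, der_mul]; abel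
  | add a b ha hb => simp [ha, hb]; abel

lemma der_der (hc : ∀ x, sgm s (c x) = - (s x • c x))
    (a : FreeAlgebra F X) (ha : ∀ x, der s c (c x) = 0) : der s c (der s c a) = 0 := by
  induction a using FreeAlgebra.induction with
  | grade0 r => simp [Algebra.algebraMap_eq_smul_one]
  | grade1 x => simp [ha]
  | mul a b ha hb => simp [ha, hb, der_mul, der_sgm s c hc]
  | add a b ha hb => simp [ha, hb]

end FreeBasics
end PKA


namespace PKA
open FreeAlgebra (ι)

section Phi
variable {F : Type} [Field F] {X : Type} {A : Type} [Ring A] [Algebra F A]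

/-- The constant coefficient. -/
def cst : FreeAlgebra F X →ₐ[F] F := FreeAlgebra.lift F (fun _ => 0)

@[simp] lemma cst_ι (x : X) : cst (ι F x) = 0 := by simp [cst]

/-- The algebra map to `A`. -/
def pim (a : X → A) : FreeAlgebra F X →ₐ[F] A := FreeAlgebra.lift F a

@[simp] lemma pim_ι (a : X → A) (x : X) : pim a (ι F x) = a x := by simp [pim]

/-- Word formula for the map `w x ↦ π(w) ⊗ x`. -/
def phiW (a : X → A) : List X → (X →₀ A)
  | [] => 0
  | [x] => Finsupp.single x 1
  | x :: y :: l => a x • phiW a (y :: l)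

/-- The map `w x ↦ π(w) ⊗ x`. -/
def phi (F : Type) [Field F] {X : Type} {A : Type} [Ring A] [Algebra F A] 
    (a : X → A) : FreeAlgebra F X →ₗ[F] (X →₀ A) := lin (phiW a)

@[simp] lemma phi_one (a : X → A) : phi F a 1 = 0 := by
  rw [← Wd_nil, phi, lin_Wd]; rfl

@[simp] lemma phi_ι (a : X → A) (x : X) : phi F a (ι F x) = Finsupp.single x 1 := by
  rw [← Wd_single, phi, lin_Wd]; rfl

lemma phiW_snoc (a : X → A) (l : List X) (x : X) :
    phiW a (l ++ [x]) = Finsupp.single x (pim a (Wd F l)) := by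
  induction l with
  | nil => simp [phiW]
  | cons y l ih =>
    have : phiW a (y :: l ++ [x]) = a y • phiW a (l ++ [x]) := by
      cases l <;> rfl
    rw [this, ih, Wd_cons, map_mul, pim_ι]; simp

lemma phi_mul_ι (a : X → A) (t : FreeAlgebra F X) (x : X) :
    phi F a (t * ι F x) = Finsupp.single x (pim a t) := by
  induction t using Tind with
  | h0 => simp
  | hadd t t' h h' => simp [add_mul, h, h']
  | hsmul r t h => simp [h]
  | hW l => rw [← Wd_single, ← Wd_append, phi, lin_Wd, phiW_snoc (F := F)]

/-- Induction with words growing on the right. -/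
lemma TindR {p : FreeAlgebra F X → Prop} (h0 : p 0) (hadd : ∀ a b, p a → p b → p (a + b))
    (hsmul : ∀ (r : F) a, p a → p (r • a)) (h1 : p 1) (hW : ∀ l x, p (Wd F l * ι F x)) 
    (t : FreeAlgebra F X) : p t := by
  refine Tind h0 hadd hsmul ?_ t
  intro l
  rcases List.eq_nil_or_concat l with rfl | ⟨l, x, rfl⟩
  · simpa using h1
  · rw [List.concat_eq_append, Wd_append, Wd_single]; exact hW l x

lemma phi_mul (a : X → A) (t u : FreeAlgebra F X) :
    phi F a (t * u) = pim a t • phi F a u + cst u • phi F a t := by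
  induction u using TindR with
  | h0 => simp
  | hadd u u' h h' => simp only [mul_add, map_add, h, h', smul_add, add_smul]; abel
  | hsmul r u h => 
    simp only [mul_smul_comm, map_smul, h, smul_add, smul_assoc]
    rw [smul_comm]
  | h1 => simp
  | hW l x => 
    rw [← mul_assoc, phi_mul_ι, phi_mul_ι]; simp

/-- Word formula of the decomposition by the last letter. -/
def lamW (F : Type) [Field F] {X : Type} (l : List X) : X →₀ FreeAlgebra F X :=
  if h : l ≠ [] then Finsupp.single (l.getLast h) (Wd F l.dropLast) else 0

/-- Decomposition by the last letter. -/
def lam : FreeAlgebra F X →ₗ[F] (X →₀ FreeAlgebra F X) := lin (lamW F)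

@[simp] lemma lam_one : lam (1 : FreeAlgebra F X) = 0 := by
  rw [← Wd_nil, lam, lin_Wd]; simp [lamW]

lemma lam_mul_ι (t : FreeAlgebra F X) (x : X) :
    lam (t * ι F x) = Finsupp.single x t := by
  induction t using Tind with
  | h0 => simp
  | hadd t t' h h' => simp [add_mul, h, h']
  | hsmul r t h => simp [h]
  | hW l => rw [← Wd_single, ← Wd_append, lam, lin_Wd]; simp [lamW]

lemma lam_mul (t u : FreeAlgebra F X) :
    lam (t * u) = t • lam u + cst u • lam t := by
  induction u using TindR with
  | h0 => simp
  | hadd u u' h h' => simp only [mul_add, map_add, h, h', smul_add, add_smul]; abel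
  | hsmul r u h => 
    simp only [mul_smul_comm, map_smul, h, smul_add, smul_assoc]
    rw [smul_comm]
  | h1 => simp
  | hW l x => 
    rw [← mul_assoc, lam_mul_ι, lam_mul_ι]; simp

/-- Recombination. -/
def rho : (X →₀ FreeAlgebra F X) →ₗ[F] FreeAlgebra F X :=
  Finsupp.lsum F (fun x => LinearMap.mulRight F (ι F x))

@[simp] lemma rho_single (x : X) (t : FreeAlgebra F X) : 
    rho (Finsupp.single x t) = t * ι F x := by simp [rho]

lemma lam_rho (u : X →₀ FreeAlgebra F X) : lam (rho u) = u := by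
  induction u using Finsupp.induction_linear with
  | zero => simp
  | add u v hu hv => simp [hu, hv]
  | single x t => rw [rho_single, lam_mul_ι]

lemma rho_lam (t : FreeAlgebra F X) : rho (lam t) = t - cst t • (1 : FreeAlgebra F X) := by
  induction t using TindR with
  | h0 => simp
  | hadd u u' h h' => simp only [map_add, h, h', add_smul]; abel
  | hsmul r u h => simp only [map_smul, h, smul_sub, smul_assoc]
  | h1 => simp
  | hW l x => rw [lam_mul_ι]; simp

lemma phi_rho (a : X → A) (u : X →₀ FreeAlgebra F X) (x : X) : 
    phi F a (rho u) x = pim a (u x) := by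
  induction u using Finsupp.induction_linear with
  | zero => simp
  | add u v hu hv => simp [hu, hv]
  | single y t => 
    rw [rho_single, phi_mul_ι]
    classical
    simp only [Finsupp.single_apply]; split_ifs <;> simp

lemma pim_eq (a : X → A) (t : FreeAlgebra F X) (ht : cst t = 0) :
    pim a t = Finsupp.linearCombination A a (phi F a t) := by
  have h : ∀ t : FreeAlgebra F X, pim a t = Finsupp.linearCombination A a (phi F a t) +
      algebraMap F A (cst t) := by
    intro t
    induction t using TindR with
    | h0 => simp
    | hadd u u' h h' => rw [map_add, h, h']; simp only [map_add]; abel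
    | hsmul r u h => 
      rw [map_smul, h, map_smul (phi F a), LinearMap.map_smul_of_tower, smul_add]
      congr 1
      simp [Algebra.smul_def]
    | h1 => simp
    | hW l x => rw [phi_mul_ι]; simp
  rw [h, ht]; simp

end Phi

section Graded
variable {F : Type} [Field F] {X : Type} (deg wt : X → ℕ)

/-- Bihomogeneous components of the free algebra. -/
def TT (F : Type) [Field F] {X : Type} (deg wt : X → ℕ) (N j : ℕ) : 
    Submodule F (FreeAlgebra F X) :=
  Submodule.span F {t | ∃ l : List X, (l.map wt).sum = N ∧ (l.map deg).sum = j ∧ t = Wd F l}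

variable {deg wt}

lemma TT_ind {N j : ℕ} {p : FreeAlgebra F X → Prop} (h0 : p 0) 
    (hadd : ∀ a b, p a → p b → p (a + b))
    (hsmul : ∀ (r : F) a, p a → p (r • a)) 
    (hW : ∀ l : List X, (l.map wt).sum = N → (l.map deg).sum = j → p (Wd F l)) 
    {t : FreeAlgebra F X} (ht : t ∈ TT F deg wt N j) : p t := by
  induction ht using Submodule.span_induction with
  | mem x h => obtain ⟨l, h1, h2, rfl⟩ := h; exact hW l h1 h2
  | zero => exact h0
  | add x y _ _ hx hy => exact hadd _ _ hx hy
  | smul r x _ hx => exact hsmul _ _ hx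

lemma Wd_mem_TT (l : List X) : Wd F l ∈ TT F deg wt (l.map wt).sum (l.map deg).sum :=
  Submodule.subset_span ⟨l, rfl, rfl, rfl⟩

lemma ι_mem_TT (x : X) : ι F x ∈ TT F deg wt (wt x) (deg x) := by
  simpa [Wd_single] using Wd_mem_TT (F := F) (deg := deg) (wt := wt) [x]

lemma one_mem_TT : (1 : FreeAlgebra F X) ∈ TT F deg wt 0 0 := by
  simpa using Wd_mem_TT (F := F) (deg := deg) (wt := wt) []

lemma mul_mem_TT {N j N' j' : ℕ} {t u : FreeAlgebra F X} (ht : t ∈ TT F deg wt N j)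
    (hu : u ∈ TT F deg wt N' j') : t * u ∈ TT F deg wt (N + N') (j + j') := by
  refine TT_ind (p := fun t => t * u ∈ TT F deg wt (N + N') (j + j')) ?_ ?_ ?_ ?_ ht
  · simp
  · intro a b ha hb; rw [add_mul]; exact add_mem ha hb
  · intro r a ha; rw [smul_mul_assoc]; exact Submodule.smul_mem _ _ ha
  · intro l h1 h2
    refine TT_ind (p := fun u => Wd F l * u ∈ TT F deg wt (N + N') (j + j')) ?_ ?_ ?_ ?_ hu
    · simp
    · intro a b ha hb; rw [mul_add]; exact add_mem ha hb
    · intro r a ha; rw [mul_smul_comm]; exact Submodule.smul_mem _ _ ha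
    · intro l' h1' h2'
      rw [← Wd_append]
      have := Wd_mem_TT (F := F) (deg := deg) (wt := wt) (l ++ l')
      simpa [h1, h2, h1', h2'] using this

lemma cst_TT {N j : ℕ} (hN : N ≠ 0) {t : FreeAlgebra F X} (ht : t ∈ TT F deg wt N j) :
    cst t = 0 := by
  refine TT_ind (p := fun t => cst t = 0) ?_ ?_ ?_ ?_ ht
  · simp
  · intro a b ha hb; simp [ha, hb]
  · intro r a ha; simp [ha]
  · intro l h1 h2
    cases l with
    | nil => simp at h1; exact absurd h1.symm hN
    | cons x l => simp [Wd_cons]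

/-- The sign function. -/
def sg (F : Type) [Field F] {X : Type} (deg : X → ℕ) (x : X) : F := (-1) ^ deg x

lemma sgm_TT {N j : ℕ} {t : FreeAlgebra F X} (ht : t ∈ TT F deg wt N j) :
    sgm (sg F deg) t = (-1 : F) ^ j • t := by
  refine TT_ind (p := fun t => sgm (sg F deg) t = (-1 : F) ^ j • t) ?_ ?_ ?_ ?_ ht
  · simp
  · intro a b ha hb; simp [ha, hb]
  · intro r a ha; simp only [map_smul, ha]; rw [smul_comm]
  · intro l h1 h2
    clear h1
    subst h2
    clear ht
    induction l with
    | nil => simp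
    | cons x l ih => simp [Wd_cons, ih, sg, pow_add, smul_smul, mul_comm]

variable {A : Type} [Ring A] [Algebra F A] (𝒜 : ℕ → Submodule F A) [GradedAlgebra 𝒜]

lemma pim_TT {a : X → A} (ha : ∀ x, a x ∈ 𝒜 (wt x)) {N j : ℕ} {t : FreeAlgebra F X} 
    (ht : t ∈ TT F deg wt N j) : pim a t ∈ 𝒜 N := by
  refine TT_ind (p := fun t => pim a t ∈ 𝒜 N) ?_ ?_ ?_ ?_ ht
  · simp
  · intro a b ha hb; rw [map_add]; exact add_mem ha hb
  · intro r a ha; rw [map_smul]; exact Submodule.smul_mem _ _ ha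
  · intro l h1 h2
    clear h2
    subst h1
    clear ht
    induction l with
    | nil => simpa using SetLike.GradedOne.one_mem
    | cons x l ih => 
      simp only [Wd_cons, map_mul, List.map_cons, List.sum_cons, pim_ι]
      exact SetLike.GradedMul.mul_mem (ha x) ih

lemma pim_TT_pos {a : X → A} (ha : ∀ x, deg x ≠ 0 → a x = 0) {N j : ℕ} {t : FreeAlgebra F X} 
    (hj : j ≠ 0) (ht : t ∈ TT F deg wt N j) : pim a t = 0 := by
  refine TT_ind (p := fun t => pim a t = 0) ?_ ?_ ?_ ?_ ht
  · simp
  · intro a b ha hb; simp [ha, hb]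
  · intro r a ha; simp [ha]
  · intro l h1 h2
    clear h1
    subst h2
    clear ht
    induction l with
    | nil => simp at hj
    | cons x l ih => 
      simp only [Wd_cons, map_mul, pim_ι]
      by_cases hx : deg x = 0
      · rw [ih (by simpa [hx] using hj)]; simp
      · rw [ha x hx]; simp

lemma pim_sgm {a : X → A} (ha : ∀ x, deg x ≠ 0 → a x = 0) (t : FreeAlgebra F X) : 
    pim a (sgm (sg F deg) t) = pim a t := by
  induction t using FreeAlgebra.induction with
  | grade0 r => simp
  | grade1 x => 
    by_cases hx : deg x = 0
    · simp [sg, hx]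
    · simp [ha x hx]
  | mul a b ha hb => simp [ha, hb]
  | add a b ha hb => simp [ha, hb]

/-- Homogeneity of the values of a derivation of degree `-1` on letters. -/
def Hom (deg wt : X → ℕ) (c : X → FreeAlgebra F X) : Prop :=
  ∀ x, c x ∈ TT F deg wt (wt x) (deg x - 1) ∧ (deg x = 0 → c x = 0)

lemma Hom.sgm {c : X → FreeAlgebra F X} (hc : Hom deg wt c) (x : X) :
    PKA.sgm (sg F deg) (c x) = - (sg F deg x • c x) := by
  by_cases hx : deg x = 0
  · simp [(hc x).2 hx]
  · rw [sgm_TT (hc x).1, sg]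
    obtain ⟨n, hn⟩ := Nat.exists_eq_succ_of_ne_zero hx
    rw [hn]; simp [pow_succ]

lemma der_TT {c : X → FreeAlgebra F X} (hc : Hom deg wt c) {N j : ℕ} {t : FreeAlgebra F X} 
    (ht : t ∈ TT F deg wt N j) : 
    der (sg F deg) c t ∈ TT F deg wt N (j - 1) ∧ (j = 0 → der (sg F deg) c t = 0) := by
  refine TT_ind (p := fun t => der (sg F deg) c t ∈ TT F deg wt N (j - 1) ∧ 
    (j = 0 → der (sg F deg) c t = 0)) ?_ ?_ ?_ ?_ ht
  · simp
  · intro a b ha hb; rw [map_add]; 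
    exact ⟨add_mem ha.1 hb.1, fun h => by rw [ha.2 h, hb.2 h, add_zero]⟩
  · intro r a ha; rw [map_smul]; 
    exact ⟨Submodule.smul_mem _ _ ha.1, fun h => by rw [ha.2 h, smul_zero]⟩
  · intro l h1 h2
    subst h1 h2
    clear ht
    induction l with
    | nil => simp
    | cons x l ih => 
      simp only [Wd_cons, List.map_cons, List.sum_cons, der_ι_mul]
      constructor
      · refine add_mem ?_ (Submodule.smul_mem _ _ ?_)
        · by_cases hx : deg x = 0
          · rw [(hc x).2 hx]; simp
          · have := mul_mem_TT (hc x).1 (Wd_mem_TT (F := F) (deg := deg) (wt := wt) l)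
            convert this using 2; omega
        · by_cases hl : (l.map deg).sum = 0
          · rw [ih.2 hl]; simp
          · have := mul_mem_TT (ι_mem_TT x) ih.1
            convert this using 2; omega
      · intro h
        rw [(hc x).2 (by omega), ih.2 (by omega)]; simp

lemma der_congr_TT {c c' : X → FreeAlgebra F X} {s : X → F} {N j : ℕ} {t : FreeAlgebra F X} 
    (h : ∀ x, wt x ≤ N → deg x ≤ j → c x = c' x)
    (ht : t ∈ TT F deg wt N j) : der s c t = der s c' t := by
  refine TT_ind (p := fun t => der s c t = der s c' t) ?_ ?_ ?_ ?_ ht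
  · simp
  · intro a b ha hb; simp [ha, hb]
  · intro r a ha; simp [ha]
  · intro l h1 h2
    subst h1 h2
    clear ht
    induction l with
    | nil => simp
    | cons x l ih => 
      simp only [List.map_cons, List.sum_cons] at h
      rw [Wd_cons, der_ι_mul, der_ι_mul, h x (by omega) (by omega), ih]
      intro y h1 h2
      exact h y (by omega) (by omega)

/-- Components of the target of `lam`. -/
def TTx (F : Type) [Field F] {X : Type} (deg wt : X → ℕ) (N j : ℕ) (x : X) : 
    Submodule F (FreeAlgebra F X) :=
  if wt x ≤ N ∧ deg x ≤ j then TT F deg wt (N - wt x) (j - deg x) else ⊥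

lemma lam_TT {N j : ℕ} {t : FreeAlgebra F X} 
    (ht : t ∈ TT F deg wt N j) (x : X) : lam t x ∈ TTx F deg wt N j x := by
  refine TT_ind (p := fun t => lam t x ∈ TTx F deg wt N j x) ?_ ?_ ?_ ?_ ht
  · simp
  · intro a b ha hb; rw [map_add]; exact add_mem ha hb
  · intro r a ha; rw [map_smul]; exact Submodule.smul_mem _ _ ha
  · intro l h1 h2
    rcases List.eq_nil_or_concat l with rfl | ⟨l, y, rfl⟩
    · simp
    · rw [List.concat_eq_append] at *
      rw [Wd_append, Wd_single, lam_mul_ι]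
      classical
      rw [Finsupp.single_apply]
      split_ifs with hxy
      · subst hxy
        simp only [List.map_append, List.sum_append, List.map_cons, List.map_nil,
          List.sum_cons, List.sum_nil, add_zero] at h1 h2
        rw [TTx, if_pos (by omega)]
        have := Wd_mem_TT (F := F) (deg := deg) (wt := wt) l
        convert this using 2 <;> omega
      · simp

lemma lam_TT_eq_zero {N j : ℕ} {t : FreeAlgebra F X} 
    (ht : t ∈ TT F deg wt N j) (x : X) (hx : j < deg x) : lam t x = 0 := by
  have := lam_TT ht x
  rwa [TTx, if_neg (by omega)] at this

lemma rho_TT {N j : ℕ} {u : X →₀ FreeAlgebra F X} (hu : ∀ x, u x ∈ TTx F deg wt N j x) :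
    rho u ∈ TT F deg wt N j := by
  rw [rho, Finsupp.lsum_apply]
  refine Submodule.sum_mem _ fun x _ => ?_
  have := hu x
  rw [TTx] at this
  split_ifs at this with h
  · have := mul_mem_TT this (ι_mem_TT x)
    rwa [Nat.sub_add_cancel h.1, Nat.sub_add_cancel h.2] at this
  · rw [Submodule.mem_bot] at this
    simp [this]

end Graded
end PKA


namespace PKA
open FreeAlgebra (ι)

section Core
variable {F : Type} [Field F] {X : Type} {A : Type} [Ring A] [Algebra F A]

/-- Bihomogeneous components of the free module on `X`. -/
def PP (𝒜 : ℕ → Submodule F A) (deg wt : X → ℕ) (N j : ℕ) : Submodule F (X →₀ A) :=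
  Submodule.span F {p | ∃ (x : X) (r : A) (i : ℕ), deg x = j ∧ r ∈ 𝒜 i ∧ i + wt x = N ∧
    p = Finsupp.single x r}

/-- The hypotheses of the core construction. -/
structure CoreHyp (𝒜 : ℕ → Submodule F A) [GradedAlgebra 𝒜] (deg wt : X → ℕ)
    (D : (X →₀ A) →ₗ[A] (X →₀ A)) (a : X → A) : Prop where
  zero_span : 𝒜 0 = Submodule.span F {1}
  nontriv : Nontrivial A
  wt_pos : ∀ x, 0 < wt x
  hw : ∀ x y, deg y < deg x → wt y < wt x
  D_mem : ∀ x, D (Finsupp.single x 1) ∈ PP 𝒜 deg wt (wt x) (deg x - 1)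
  D_zero : ∀ x, deg x = 0 → D (Finsupp.single x 1) = 0
  a_mem : ∀ x, a x ∈ 𝒜 (wt x)
  a_zero : ∀ x, deg x ≠ 0 → a x = 0
  eD : ∀ p, Finsupp.linearCombination A a (D p) = 0
  DD : ∀ p, D (D p) = 0
  exact : ∀ N j p, p ∈ PP 𝒜 deg wt N j → D p = 0 → Finsupp.linearCombination A a p = 0 →
    ∃ q ∈ PP 𝒜 deg wt N (j + 1), D q = p
  surj : ∀ N r, N ≠ 0 → r ∈ 𝒜 N → ∃ p ∈ PP 𝒜 deg wt N 0, Finsupp.linearCombination A a p = r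

variable {𝒜 : ℕ → Submodule F A} [GradedAlgebra 𝒜] {deg wt : X → ℕ}
  {D : (X →₀ A) →ₗ[A] (X →₀ A)} {a : X → A}

lemma single_mem_PP {x : X} {r : A} {i N j : ℕ} (h1 : deg x = j) (h2 : r ∈ 𝒜 i)
    (h3 : i + wt x = N) : Finsupp.single x r ∈ PP 𝒜 deg wt N j :=
  Submodule.subset_span ⟨x, r, i, h1, h2, h3, rfl⟩

lemma phi_TT (ha : ∀ x, a x ∈ 𝒜 (wt x)) (ha0 : ∀ x, deg x ≠ 0 → a x = 0) {N j : ℕ}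
    {t : FreeAlgebra F X} (ht : t ∈ TT F deg wt N j) : phi F a t ∈ PP 𝒜 deg wt N j := by
  refine TT_ind (p := fun t => phi F a t ∈ PP 𝒜 deg wt N j) ?_ ?_ ?_ ?_ ht
  · simp
  · intro a b ha hb; rw [map_add]; exact add_mem ha hb
  · intro r a ha; rw [map_smul]; exact Submodule.smul_mem _ _ ha
  · intro l h1 h2
    rcases List.eq_nil_or_concat l with rfl | ⟨l, x, rfl⟩
    · simp
    · rw [List.concat_eq_append] at *
      simp only [List.map_append, List.sum_append, List.map_cons, List.map_nil,
          List.sum_cons, List.sum_nil, add_zero] at h1 h2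
      rw [Wd_append, Wd_single, phi_mul_ι]
      have hl := Wd_mem_TT (F := F) (deg := deg) (wt := wt) l
      by_cases h0 : (l.map deg).sum = 0
      · exact single_mem_PP (by omega) (pim_TT 𝒜 ha hl) h1
      · rw [pim_TT_pos ha0 h0 hl]; simp

lemma phi_surj_of (H : CoreHyp 𝒜 deg wt D a) (N : ℕ)
    (hp : ∀ i < N, ∀ r ∈ 𝒜 i, ∃ t ∈ TT F deg wt i 0, pim a t = r) (j : ℕ) {p : X →₀ A}
    (h : p ∈ PP 𝒜 deg wt N j) : ∃ t ∈ TT F deg wt N j, phi F a t = p := by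
  induction h using Submodule.span_induction with
  | mem p h =>
    obtain ⟨x, r, i, h1, h2, h3, rfl⟩ := h
    obtain ⟨t, ht, rfl⟩ := hp i (by have := H.wt_pos x; omega) r h2
    refine ⟨t * ι F x, ?_, phi_mul_ι _ _ _⟩
    have := mul_mem_TT ht (ι_mem_TT x)
    rwa [h3, h1, zero_add] at this
  | zero => exact ⟨0, zero_mem _, by simp⟩
  | add p q _ _ hp hq =>
    obtain ⟨t, ht, rfl⟩ := hp
    obtain ⟨u, hu, rfl⟩ := hq
    exact ⟨t + u, add_mem ht hu, by simp⟩
  | smul r p _ hp =>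
    obtain ⟨t, ht, rfl⟩ := hp
    exact ⟨r • t, Submodule.smul_mem _ _ ht, by simp⟩

lemma pim_surj (H : CoreHyp 𝒜 deg wt D a) (N : ℕ) :
    ∀ r ∈ 𝒜 N, ∃ t ∈ TT F deg wt N 0, pim a t = r := by
  induction N using Nat.strong_induction_on with
  | _ N ih =>
    intro r hr
    by_cases hN : N = 0
    · subst hN
      rw [H.zero_span, Submodule.mem_span_singleton] at hr
      obtain ⟨c, rfl⟩ := hr
      exact ⟨c • 1, Submodule.smul_mem _ _ one_mem_TT, by simp⟩
    · obtain ⟨p, hp, rfl⟩ := H.surj N r hN hr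
      obtain ⟨t, ht, rfl⟩ := phi_surj_of H N ih 0 hp
      exact ⟨t, ht, pim_eq a t (cst_TT hN ht)⟩

lemma phi_surj (H : CoreHyp 𝒜 deg wt D a) (N j : ℕ) {p : X →₀ A}
    (h : p ∈ PP 𝒜 deg wt N j) : ∃ t ∈ TT F deg wt N j, phi F a t = p :=
  phi_surj_of H N (fun i _ => pim_surj H i) j h

lemma pim_der {c : X → FreeAlgebra F X} {s : X → F} (hc : ∀ x, pim a (c x) = 0)
    (t : FreeAlgebra F X) : pim a (der s c t) = 0 := by
  induction t using Tind with
  | h0 => simp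
  | hadd t t' h h' => simp [h, h']
  | hsmul r t h => simp [h]
  | hW l =>
    induction l with
    | nil => simp
    | cons x l ih => simp [Wd_cons, der_ι_mul, ih, hc]

lemma phi_der (H : CoreHyp 𝒜 deg wt D a) {c : X → FreeAlgebra F X} (hH : Hom deg wt c)
    (hc : ∀ x, pim a (c x) = 0) {N j : ℕ}
    (hD : ∀ x, wt x ≤ N → deg x ≤ j → phi F a (c x) = D (Finsupp.single x 1))
    {t : FreeAlgebra F X} (ht : t ∈ TT F deg wt N j) :
    phi F a (der (sg F deg) c t) = D (phi F a t) := by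
  refine TT_ind (p := fun t => phi F a (der (sg F deg) c t) = D (phi F a t)) ?_ ?_ ?_ ?_ ht
  · simp
  · intro t u h h'; simp [h, h']
  · intro r t h; simp only [map_smul, h]; exact (LinearMap.map_smul_of_tower _ _ _).symm
  · intro l h1 h2
    rcases List.eq_nil_or_concat l with rfl | ⟨l, x, rfl⟩
    · simp
    · rw [List.concat_eq_append] at *
      simp only [List.map_append, List.sum_append, List.map_cons, List.map_nil,
          List.sum_cons, List.sum_nil, add_zero] at h1 h2
      rw [Wd_append, Wd_single, phi_mul_ι, der_mul, map_add, phi_mul_ι, pim_der hc, phi_mul,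
        der_ι, cst_TT (H.wt_pos x).ne' (hH x).1, pim_sgm H.a_zero,
        hD x (by omega) (by omega)]
      rw [← map_smul]; simp

lemma der_rho {c : X → FreeAlgebra F X} {s : X → F} (u : X →₀ FreeAlgebra F X) :
    der s c (rho u) = u.sum fun x t => der s c t * ι F x + sgm s t * c x := by
  simp [rho, Finsupp.lsum_apply, Finsupp.sum, map_sum, der_mul]

lemma phi_der_rho (H : CoreHyp 𝒜 deg wt D a) {c : X → FreeAlgebra F X} (hH : Hom deg wt c)
    (hc : ∀ x, pim a (c x) = 0) {u : X →₀ FreeAlgebra F X} (hu : ∀ x, pim a (u x) = 0) :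
    phi F a (der (sg F deg) c (rho u)) = 0 := by
  rw [der_rho, Finsupp.sum, map_sum]
  refine Finset.sum_eq_zero fun x _ => ?_
  rw [map_add, phi_mul_ι, pim_der hc, phi_mul, cst_TT (H.wt_pos x).ne' (hH x).1,
    pim_sgm H.a_zero, hu]
  simp

lemma lam_der_rho (H : CoreHyp 𝒜 deg wt D a) {c : X → FreeAlgebra F X} (hH : Hom deg wt c)
    {u : X →₀ FreeAlgebra F X} {m : ℕ} (hu : ∀ x, m < deg x → u x = 0) (x : X)
    (hx : m ≤ deg x) :
    lam (der (sg F deg) c (rho u)) x = der (sg F deg) c (u x) := by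
  have h1 : lam (der (sg F deg) c (rho u)) x =
      u.sum fun y t => (Finsupp.single y (der (sg F deg) c t)) x := by
    rw [der_rho, Finsupp.sum, map_sum, Finsupp.finsetSum_apply]
    refine Finset.sum_congr rfl fun y hy => ?_
    rw [map_add, lam_mul_ι, lam_mul, cst_TT (H.wt_pos y).ne' (hH y).1]
    have : lam (c y) x = 0 := by
      by_cases hy0 : deg y = 0
      · simp [(hH y).2 hy0]
      · have : ¬ m < deg y := fun h => by simp [hu y h] at hy
        exact lam_TT_eq_zero (hH y).1 x (by omega)
    simp [this]
  rw [h1]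
  classical
  rw [Finsupp.sum, Finset.sum_eq_single x]
  · simp
  · intro y _ hy; rw [Finsupp.single_eq_of_ne hy.symm]
  · intro h; simp only [Finsupp.mem_support_iff, not_not] at h; simp [h]

/-- Exactness statement in weight `N`. -/
def HH (F : Type) [Field F] {X : Type} {A : Type} [Ring A] [Algebra F A]
    (deg wt : X → ℕ) (a : X → A) (c : X → FreeAlgebra F X) (N : ℕ) : Prop :=
  ∀ j, ∀ t ∈ TT F deg wt N j, pim a t = 0 → der (sg F deg) c t = 0 →
    ∃ t' ∈ TT F deg wt N (j + 1), der (sg F deg) c t' = t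

lemma KK_aux (H : CoreHyp 𝒜 deg wt D a) {c : X → FreeAlgebra F X} (hH : Hom deg wt c)
    (hdd : ∀ x, der (sg F deg) c (c x) = 0)
    (hc : ∀ x, pim a (c x) = 0) {N : ℕ} (hN : N ≠ 0) (IH : ∀ i < N, HH F deg wt a c i) (j : ℕ)
    (m : ℕ) : ∀ u : X →₀ FreeAlgebra F X, (∀ x, u x ∈ TTx F deg wt N j x) →
      (∀ x, pim a (u x) = 0) → (∀ x, m ≤ deg x → u x = 0) →
      der (sg F deg) c (rho u) = 0 →
      ∃ k ∈ TT F deg wt N (j + 1), phi F a k = 0 ∧ der (sg F deg) c k = rho u := by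
  induction m with
  | zero =>
    intro u _ _ h0 _
    have : u = 0 := by ext x; simp [h0 x (by omega)]
    exact ⟨0, zero_mem _, by simp, by simp [this]⟩
  | succ m ih =>
    intro u hu hpi h0 hd
    have h0' : ∀ x, m < deg x → u x = 0 := fun x hx => h0 x hx
    have key : ∀ x, ∃ v, v ∈ TTx F deg wt N (j + 1) x ∧ pim a v = 0 ∧ (u x = 0 → v = 0) ∧
        (deg x = m → der (sg F deg) c v = u x) ∧ (deg x ≠ m → v = 0) := by
      intro x
      by_cases hx : deg x = m ∧ u x ≠ 0
      · obtain ⟨hx, hux⟩ := hx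
        have h1 : der (sg F deg) c (u x) = 0 := by
          rw [← lam_der_rho H hH h0' x hx.ge, hd]; simp
        have hux' := hu x
        by_cases hcond : wt x ≤ N ∧ deg x ≤ j
        · rw [TTx, if_pos hcond] at hux'
          obtain ⟨v, hv, hvu⟩ := IH (N - wt x) (by have := H.wt_pos x; omega) _ _ hux' (hpi x) h1
          refine ⟨v, ?_, pim_TT_pos H.a_zero (by omega) hv, fun h => absurd h hux, fun _ => hvu,
            fun h => absurd hx h⟩
          rw [TTx, if_pos (by omega)]
          rwa [show j + 1 - deg x = j - deg x + 1 by omega]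
        · rw [TTx, if_neg hcond] at hux'
          exact absurd ((Submodule.mem_bot _).1 hux') hux
      · refine ⟨0, zero_mem _, by simp, by simp, ?_, by simp⟩
        intro h
        by_contra h'
        exact hx ⟨h, fun h'' => h' (by simp [h''])⟩
    choose v hv1 hv2 hv3 hv4 hv5 using key
    let V : X →₀ FreeAlgebra F X := Finsupp.onFinset u.support v (fun x hx => by
      rw [Finsupp.mem_support_iff]; exact fun h => hx (hv3 x h))
    have hV : ∀ x, V x = v x := fun x => rfl
    have hVT : rho V ∈ TT F deg wt N (j + 1) := rho_TT hv1
    have hdVT : der (sg F deg) c (rho V) ∈ TT F deg wt N j := (der_TT hH hVT).1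
    have huT : rho u ∈ TT F deg wt N j := rho_TT hu
    have hsub := sub_mem huT hdVT
    have hru : rho (lam (rho u - der (sg F deg) c (rho V))) =
        rho u - der (sg F deg) c (rho V) := by
      rw [rho_lam, cst_TT hN hsub]; simp
    have hlast : ∀ x, m ≤ deg x → (lam (rho u - der (sg F deg) c (rho V))) x = 0 := by
      intro x hx
      rw [map_sub, lam_rho, Finsupp.sub_apply,
        lam_der_rho H hH (fun x hx => hv5 x (by omega)) x hx, hV]
      by_cases hm : deg x = m
      · rw [hv4 x hm]; simp
      · rw [hv5 x hm, h0' x (by omega)]; simp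
    have hphu : phi F a (rho u) = 0 := by ext x; rw [phi_rho, hpi]; rfl
    have hphV : phi F a (rho V) = 0 := by ext x; rw [phi_rho, hV, hv2]; rfl
    have hdd' : ∀ t, der (sg F deg) c (der (sg F deg) c t) = 0 := fun t =>
      der_der _ c hH.sgm t hdd
    obtain ⟨k, hk1, hk2, hk3⟩ := ih (lam (rho u - der (sg F deg) c (rho V)))
      (fun x => lam_TT hsub x)
      (fun x => by
        rw [← phi_rho, hru, map_sub, hphu, phi_der_rho H hH hc (u := V) hv2]; simp)
      hlast (by rw [hru, map_sub, hd, hdd']; simp)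
    refine ⟨k + rho V, add_mem hk1 hVT, by simp [hk2, hphV], ?_⟩
    rw [map_add, hk3, hru]; simp

lemma KK (H : CoreHyp 𝒜 deg wt D a) {c : X → FreeAlgebra F X} (hH : Hom deg wt c)
    (hdd : ∀ x, der (sg F deg) c (c x) = 0)
    (hc : ∀ x, pim a (c x) = 0) {N : ℕ} (hN : N ≠ 0) (IH : ∀ i < N, HH F deg wt a c i) (j : ℕ)
    {k : FreeAlgebra F X} (hk : k ∈ TT F deg wt N j) (hp : phi F a k = 0)
    (hd : der (sg F deg) c k = 0) :
      ∃ k' ∈ TT F deg wt N (j + 1), phi F a k' = 0 ∧ der (sg F deg) c k' = k := by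
  have hk' : rho (lam k) = k := by rw [rho_lam, cst_TT hN hk]; simp
  have := KK_aux H hH hdd hc hN IH j (j + 1) (lam k) (lam_TT hk)
    (fun x => by rw [← phi_rho, hk', hp]; rfl) (fun x hx => lam_TT_eq_zero hk x hx)
    (by rw [hk', hd])
  rwa [hk'] at this

lemma TT_zero (H : ∀ x, 0 < wt x) {j : ℕ} {t : FreeAlgebra F X} (ht : t ∈ TT F deg wt 0 j) :
    t = cst t • (1 : FreeAlgebra F X) := by
  refine TT_ind (p := fun t => t = cst t • (1 : FreeAlgebra F X)) ?_ ?_ ?_ ?_ ht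
  · simp
  · intro a b ha hb; rw [map_add, add_smul, ← ha, ← hb]
  · intro r a ha; rw [map_smul, smul_assoc, ← ha]
  · intro l h1 h2
    cases l with
    | nil => simp
    | cons x l => have := H x; simp at h1; omega

/-- The inductive notion: the differential is constructed below weight `M`. -/
structure Good (deg wt : X → ℕ) (a : X → A) (D : (X →₀ A) →ₗ[A] (X →₀ A))
    (c : X → FreeAlgebra F X) (M : ℕ) : Prop where
  hom : Hom deg wt c
  dd : ∀ x, der (sg F deg) c (c x) = 0
  ph : ∀ x, wt x < M → phi F a (c x) = D (Finsupp.single x 1)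
  zero : ∀ x, M ≤ wt x → c x = 0

lemma Good.pim (H : CoreHyp 𝒜 deg wt D a) {c : X → FreeAlgebra F X} {M : ℕ}
    (G : Good deg wt a D c M) (x : X) : pim a (c x) = 0 := by
  by_cases h : wt x < M
  · rw [pim_eq a _ (cst_TT (H.wt_pos x).ne' (G.hom x).1), G.ph x h, H.eD]
  · rw [G.zero x (by omega)]; simp

lemma Good.HH (H : CoreHyp 𝒜 deg wt D a) {c : X → FreeAlgebra F X} {M : ℕ}
    (G : Good deg wt a D c M) (N : ℕ) (hN : N < M) : HH F deg wt a c N := by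
  induction N using Nat.strong_induction_on with
  | _ N ih =>
    intro j t ht hp hd
    by_cases hN0 : N = 0
    · subst hN0
      have h1 := TT_zero H.wt_pos ht
      rw [h1] at hp
      have := H.nontriv
      simp only [map_smul, map_one, ← Algebra.algebraMap_eq_smul_one] at hp
      have h2 : cst t = 0 := by simpa using hp
      exact ⟨0, zero_mem _, by rw [h1, h2]; simp⟩
    · have hdd' : ∀ t, der (sg F deg) c (der (sg F deg) c t) = 0 := fun t =>
        der_der _ c G.hom.sgm t G.dd
      have hphi : ∀ {j t}, t ∈ TT F deg wt N j →
          phi F a (der (sg F deg) c t) = D (phi F a t) := fun h =>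
        phi_der H G.hom (G.pim H) (fun x hx _ => G.ph x (by omega)) h
      obtain ⟨q, hq, hDq⟩ := H.exact N j (phi F a t) (phi_TT H.a_mem H.a_zero ht)
        (by rw [← hphi ht, hd, map_zero]) (by rw [← pim_eq a t (cst_TT hN0 ht), hp])
      obtain ⟨y, hy, rfl⟩ := phi_surj H _ _ hq
      have hdy := (der_TT G.hom hy).1
      obtain ⟨k, hk1, hk2, hk3⟩ := KK H G.hom G.dd (G.pim H) hN0
        (fun i hi => ih i hi (by omega)) j (k := t - der (sg F deg) c y)
        (sub_mem ht hdy) (by rw [map_sub, hphi hy, hDq, sub_self])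
        (by rw [map_sub, hd, hdd', sub_self])
      exact ⟨k + y, add_mem hk1 hy, by rw [map_add, hk3]; simp⟩

lemma Good.step (H : CoreHyp 𝒜 deg wt D a) {c : X → FreeAlgebra F X} {M : ℕ}
    (G : Good deg wt a D c M) :
    ∃ c', Good deg wt a D c' (M + 1) ∧ ∀ x, wt x < M → c' x = c x := by
  have hdd' : ∀ t, der (sg F deg) c (der (sg F deg) c t) = 0 := fun t =>
        der_der _ c G.hom.sgm t G.dd
  have key : ∀ x, ∃ z, wt x = M → (z ∈ TT F deg wt (wt x) (deg x - 1) ∧ (deg x = 0 → z = 0) ∧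
      phi F a z = D (Finsupp.single x 1) ∧ der (sg F deg) c z = 0) := by
    intro x
    by_cases hM : wt x = M
    swap
    · exact ⟨0, fun h => absurd h hM⟩
    by_cases hx : deg x = 0
    · exact ⟨0, fun _ => ⟨zero_mem _, by simp, by simp [H.D_zero x hx], by simp⟩⟩
    · obtain ⟨z0, hz0, hph⟩ := phi_surj H _ _ (H.D_mem x)
      have hdz := der_TT G.hom hz0
      have hpd : phi F a (der (sg F deg) c z0) = D (phi F a z0) :=
        phi_der H G.hom (G.pim H) (fun y _ hy => G.ph y (by
          have := H.hw x y (by omega); omega)) hz0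
      rw [hph, H.DD] at hpd
      by_cases hx1 : deg x = 1
      · exact ⟨z0, fun _ => ⟨hz0, fun h => absurd h hx, hph, hdz.2 (by omega)⟩⟩
      · obtain ⟨k, hk1, hk2, hk3⟩ := KK H G.hom G.dd (G.pim H) (H.wt_pos x).ne'
          (fun i hi => G.HH H i (by omega)) _ hdz.1 hpd (hdd' _)
        refine ⟨z0 - k, fun _ => ⟨sub_mem hz0 ?_, fun h => absurd h hx, by simp [hph, hk2],
          by simp [hk3]⟩⟩
        rwa [show deg x - 1 - 1 + 1 = deg x - 1 by omega] at hk1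
  choose z hz using key
  refine ⟨fun x => if wt x = M then z x else c x, ⟨?_, ?_, ?_, ?_⟩, ?_⟩
  · intro x
    dsimp only
    split_ifs with h
    · exact ⟨(hz x h).1, (hz x h).2.1⟩
    · exact G.hom x
  · intro x
    by_cases hM : M < wt x
    · rw [if_neg (by omega), G.zero x (by omega)]; simp
    by_cases hx : deg x = 0
    · have : (if wt x = M then z x else c x) = 0 := by
        split_ifs with h
        · exact (hz x h).2.1 hx
        · exact (G.hom x).2 hx
      rw [this]; simp
    have hmem : (if wt x = M then z x else c x) ∈ TT F deg wt (wt x) (deg x - 1) := by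
      split_ifs with h
      · exact (hz x h).1
      · exact (G.hom x).1
    rw [der_congr_TT (c' := c) (fun y _ hy => if_neg (by
          have := H.hw x y (by omega); omega)) hmem]
    split_ifs with h
    · exact (hz x h).2.2.2
    · exact G.dd x
  · intro x hx
    split_ifs with h
    · exact (hz x h).2.2.1
    · exact G.ph x (by omega)
  · intro x hx
    rw [if_neg (by omega)]; exact G.zero x (by omega)
  · intro x hx
    dsimp only
    rw [if_neg (by omega)]

/-- The core theorem: existence of the twisted differential. -/
theorem core (H : CoreHyp 𝒜 deg wt D a) : ∃ c : X → FreeAlgebra F X, Hom deg wt c ∧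
    (∀ x, der (sg F deg) c (c x) = 0) ∧ ∀ x, phi F a (c x) = D (Finsupp.single x 1) := by
  have g0 : Good (F := F) deg wt a D (fun _ => 0) 0 :=
    ⟨fun x => ⟨zero_mem _, fun _ => rfl⟩, fun x => by simp, fun x hx => by omega, fun x _ => rfl⟩
  let f : (M : ℕ) → {c : X → FreeAlgebra F X // Good deg wt a D c M} := fun M =>
    Nat.rec ⟨_, g0⟩ (fun M c => ⟨Classical.choose (c.2.step H),
      (Classical.choose_spec (c.2.step H)).1⟩) M
  have hf : ∀ M x, wt x < M → (f (M + 1)).1 x = (f M).1 x := fun M x hx =>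
    (Classical.choose_spec ((f M).2.step H)).2 x hx
  have hf' : ∀ M x, wt x < M → (f M).1 x = (f (wt x + 1)).1 x := by
    intro M x hx
    induction M, hx using Nat.le_induction with
    | base => rfl
    | succ M hM ih => rw [hf M x hM, ih]
  refine ⟨fun x => (f (wt x + 1)).1 x, fun x => (f (wt x + 1)).2.hom x, fun x => ?_, fun x =>
    (f (wt x + 1)).2.ph x (by omega)⟩
  rw [der_congr_TT (c' := (f (wt x + 1)).1) (fun y hy _ => (hf' _ y (by omega)).symm)
    ((f (wt x + 1)).2.hom x).1]
  exact (f (wt x + 1)).2.dd x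

end Core
end PKA


namespace PKA
open FreeAlgebra (ι)

section Unit
variable {F : Type} [Field F] {X : Type}

/-- Inclusion of the reduced free algebra. -/
def jj : FreeAlgebra F X →ₐ[F] FreeAlgebra F (Option X) :=
  FreeAlgebra.lift F (fun x => ι F (some x))

@[simp] lemma jj_ι (x : X) : jj (ι F x) = ι F (some x) := by simp [jj]

lemma jj_Wd (l : List X) : jj (Wd F l) = Wd F (l.map some) := by
  induction l with
  | nil => simp
  | cons x l ih => simp [Wd_cons, ih]

/-- Extended signs. -/
def sp (s : X → F) : Option X → F
  | none => -1
  | some x => s x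

/-- Extended differential on letters. -/
def cp (s : X → F) (c : X → FreeAlgebra F X) : Option X → FreeAlgebra F (Option X)
  | none => ι F none * ι F none
  | some x => jj (c x) + ι F none * ι F (some x) - s x • (ι F (some x) * ι F none)

lemma sgm_jj (s : X → F) (t : FreeAlgebra F X) : sgm (sp s) (jj t) = jj (sgm s t) := by
  induction t using FreeAlgebra.induction with
  | grade0 r => simp
  | grade1 x => simp [sgm_ι, sp]
  | mul a b ha hb => simp [ha, hb]
  | add a b ha hb => simp [ha, hb]

lemma der_jj (s : X → F) (c : X → FreeAlgebra F X) (t : FreeAlgebra F X) :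
    der (sp s) (cp s c) (jj t) = jj (der s c t) + ι F none * jj t
      - sgm (sp s) (jj t) * ι F none := by
  induction t using Tind with
  | h0 => simp
  | hadd t t' h h' => simp only [map_add, h, h', mul_add, add_mul]; abel
  | hsmul r t h => simp only [map_smul, h, mul_smul_comm, smul_mul_assoc, smul_add, smul_sub]
  | hW l =>
    induction l with
    | nil => simp
    | cons x l ih =>
      rw [Wd_cons, map_mul, jj_ι, der_ι_mul, ih, der_ι_mul, map_mul, sgm_ι]
      simp only [cp, sp, map_add, map_mul, map_smul, jj_ι, mul_add, add_mul, sub_mul,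
        mul_sub, smul_add, smul_sub, smul_mul_assoc, mul_assoc]
      abel

lemma der_cp (s : X → F) (c : X → FreeAlgebra F X) 
    (hc : ∀ x, sgm s (c x) = - (s x • c x)) (hd : ∀ x, der s c (c x) = 0) (y : Option X) :
    der (sp s) (cp s c) (cp s c y) = 0 := by
  cases y with
  | none => simp [cp, der_ι_mul, sp, mul_assoc]
  | some x =>
    rw [cp]
    simp only [map_add, map_sub, map_smul, der_jj, der_ι_mul, der_ι, hd, sgm_jj, hc]
    simp only [cp, sp, map_neg, map_smul, mul_add, add_mul, sub_mul, map_zero,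
        mul_sub, smul_add, smul_sub, smul_mul_assoc, mul_smul_comm, mul_assoc, neg_mul, neg_smul,
        one_smul]
    abel

end Unit

section Phig
variable {F : Type} [Field F] {Y : Type} {A : Type} [Ring A] [Algebra F A]

lemma pim_sgm' {a : Y → A} {s : Y → F} (ha : ∀ x, s x • a x = a x) (t : FreeAlgebra F Y) :
    pim a (sgm s t) = pim a t := by
  induction t using FreeAlgebra.induction with
  | grade0 r => simp
  | grade1 x => simp [sgm_ι, ha]
  | mul a b ha hb => simp [ha, hb]
  | add a b ha hb => simp [ha, hb]

/-- The `A`-linear differential attached to `c`. -/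
def DD (a : Y → A) (c : Y → FreeAlgebra F Y) : (Y →₀ A) →ₗ[A] (Y →₀ A) :=
  Finsupp.linearCombination A (fun y => phi F a (c y))

lemma phi_der' {a : Y → A} {s : Y → F} {c : Y → FreeAlgebra F Y} (ha : ∀ x, s x • a x = a x)
    (h0 : ∀ x, cst (c x) = 0) (hc : ∀ x, pim a (c x) = 0) (t : FreeAlgebra F Y) :
    phi F a (der s c t) = DD a c (phi F a t) := by
  induction t using TindR with
  | h0 => simp
  | hadd t t' h h' => simp [h, h']
  | hsmul r t h =>
    simp only [map_smul, h]; exact (LinearMap.map_smul_of_tower _ _ _).symm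
  | h1 => simp
  | hW l x =>
    rw [phi_mul_ι, der_mul, map_add, phi_mul_ι, pim_der hc, phi_mul, der_ι, h0, pim_sgm' ha]
    simp [DD]

/-- The map `w x y ↦ g(y) π(w) ⊗ x`. -/
def phig (a : Y → A) (g : Y → F) : FreeAlgebra F Y →ₗ[F] (Y →₀ A) :=
  (Finsupp.lsum F (fun y => g y • phi F a)) ∘ₗ lam

@[simp] lemma phig_one (a : Y → A) (g : Y → F) : phig a g 1 = 0 := by simp [phig]

lemma phig_mul_ι (a : Y → A) (g : Y → F) (t : FreeAlgebra F Y) (y : Y) :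
    phig a g (t * ι F y) = g y • phi F a t := by simp [phig, lam_mul_ι]

lemma phig_mul (a : Y → A) (g : Y → F) (t u : FreeAlgebra F Y) (hu : cst u = 0)
    (hu' : ∀ y, cst (lam u y) = 0) : phig a g (t * u) = pim a t • phig a g u := by
  rw [phig, LinearMap.comp_apply, LinearMap.comp_apply, lam_mul, hu, zero_smul, add_zero]
  generalize lam u = v at hu'
  have : t • v = v.mapRange (fun w => t * w) (by simp) := by ext y; simp
  rw [this, Finsupp.lsum_apply, Finsupp.lsum_apply, Finsupp.sum_mapRange_index (by simp),
    Finsupp.smul_sum]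
  refine Finset.sum_congr rfl fun y _ => ?_
  dsimp only
  rw [LinearMap.smul_apply, LinearMap.smul_apply, phi_mul, hu' y, zero_smul, add_zero, smul_comm]

/-- The `A`-linear endomorphism lifting `g`. -/
def LL (a : Y → A) (c : Y → FreeAlgebra F Y) (g : Y → F) : (Y →₀ A) →ₗ[A] (Y →₀ A) :=
  Finsupp.linearCombination A (fun y => phig a g (c y))

lemma phig_der {a : Y → A} {s : Y → F} {c : Y → FreeAlgebra F Y} (ha : ∀ x, s x • a x = a x)
    (h0 : ∀ x, cst (c x) = 0) (h0' : ∀ x y, cst (lam (c x) y) = 0)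
    (hc : ∀ x, pim a (c x) = 0) (g : Y → F) (t : FreeAlgebra F Y) :
    phig a g (der s c t) = DD a c (phig a g t) + LL a c g (phi F a t) := by
  induction t using TindR with
  | h0 => simp
  | hadd t t' h h' => simp only [map_add, h, h']; abel
  | hsmul r t h =>
    simp only [map_smul, h, smul_add]
    rw [LinearMap.map_smul_of_tower (DD a c), LinearMap.map_smul_of_tower (LL a c g)]
  | h1 => simp
  | hW l x =>
    rw [phi_mul_ι, der_mul, map_add, phig_mul_ι, phi_der' ha h0 hc, der_ι,
      phig_mul _ _ _ _ (h0 x) (h0' x), phig_mul_ι, LinearMap.map_smul_of_tower, pim_sgm' ha]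
    simp [LL]

lemma DD_LL {a : Y → A} {s : Y → F} {c : Y → FreeAlgebra F Y} (ha : ∀ x, s x • a x = a x)
    (h0 : ∀ x, cst (c x) = 0) (h0' : ∀ x y, cst (lam (c x) y) = 0)
    (hc : ∀ x, pim a (c x) = 0) (hd : ∀ x, der s c (c x) = 0) (g : Y → F) (p : Y →₀ A) :
    DD a c (LL a c g p) = - LL a c g (DD a c p) := by
  rw [eq_neg_iff_add_eq_zero]
  induction p using Finsupp.induction_linear with
  | zero => simp
  | add p q hp hq =>
    simp only [map_add]
    rw [add_add_add_comm, hp, hq, add_zero]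
  | single y r =>
    have := phig_der ha h0 h0' hc g (c y)
    rw [hd, map_zero] at this
    have h1 : Finsupp.single y r = r • Finsupp.single y (1 : A) := by simp
    have h2 : LL a c g (Finsupp.single y (1 : A)) = phig a g (c y) := by simp [LL]
    have h3 : DD a c (Finsupp.single y (1 : A)) = phi F a (c y) := by simp [DD]
    rw [h1, map_smul, map_smul, map_smul, map_smul, h2, h3, ← smul_add, ← this, smul_zero]

end Phig

section UnitPhi
variable {F : Type} [Field F] {X : Type} {A : Type} [Ring A] [Algebra F A]

/-- Extension of the values on letters by zero on the unit letter. -/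
def ap (a : X → A) : Option X → A
  | none => 0
  | some x => a x

lemma pim_jj (a : X → A) (t : FreeAlgebra F X) : pim (ap a) (jj t) = pim a t := by
  induction t using FreeAlgebra.induction with
  | grade0 r => simp
  | grade1 x => simp [ap]
  | mul a b ha hb => simp [ha, hb]
  | add a b ha hb => simp [ha, hb]

lemma phi_jj (a : X → A) (t : FreeAlgebra F X) :
    phi F (ap a) (jj t) = Finsupp.mapDomain some (phi F a t) := by
  induction t using TindR with
  | h0 => simp
  | hadd t t' h h' => simp only [map_add, h, h', Finsupp.mapDomain_add]
  | hsmul r t h => simp only [map_smul, h, Finsupp.mapDomain_smul]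
  | h1 => simp
  | hW l x => rw [map_mul, jj_ι, phi_mul_ι, phi_mul_ι, pim_jj, Finsupp.mapDomain_single]

lemma phi_cp_none (s : X → F) (c : X → FreeAlgebra F X) (a : X → A) :
    phi F (ap a) (cp s c none) = 0 := by
  rw [cp, phi_mul_ι]; simp [ap]

lemma phi_cp_some (s : X → F) (c : X → FreeAlgebra F X) (a : X → A) (x : X) :
    phi F (ap a) (cp s c (some x)) = Finsupp.mapDomain some (phi F a (c x)) -
      s x • Finsupp.single none (a x) := by
  rw [cp, map_sub, map_add, map_smul, phi_mul_ι, phi_mul_ι, phi_jj]; simp [ap]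

lemma pim_cp (s : X → F) (c : X → FreeAlgebra F X) (a : X → A) (hc : ∀ x, pim a (c x) = 0)
    (y : Option X) : pim (ap a) (cp s c y) = 0 := by
  cases y with
  | none => simp [cp, ap]
  | some x => simp [cp, ap, pim_jj, hc]

lemma lam_jj_none (t : FreeAlgebra F X) : lam (jj t) none = 0 := by
  induction t using TindR with
  | h0 => simp
  | hadd t t' h h' => simp [h, h']
  | hsmul r t h => simp [h]
  | h1 => simp
  | hW l x => rw [map_mul, jj_ι, lam_mul_ι]; simp

lemma phig_jj_none (a : X → A) (g : Option X → F) (t : FreeAlgebra F X) :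
    phig (ap a) g (jj t) none = 0 := by
  induction t using TindR with
  | h0 => simp
  | hadd t t' h h' => simp [h, h']
  | hsmul r t h => simp [h]
  | h1 => simp
  | hW l x =>
    rw [map_mul, jj_ι, phig_mul_ι, phi_jj, Finsupp.smul_apply, Finsupp.mapDomain_of_notMem_range]
    · simp
    · simp

lemma phig_cp_none (s : X → F) (c : X → FreeAlgebra F X) (a : X → A) (g : Option X → F)
    (y : Option X) : phig (ap a) g (cp s c y) none = algebraMap F A (g y) := by
  cases y with
  | none => simp [cp, phig_mul_ι, Algebra.smul_def]
  | some x =>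
    rw [cp, map_sub, map_add, map_smul, phig_mul_ι, phig_mul_ι]
    simp [phig_jj_none, Algebra.smul_def]

end UnitPhi
end PKA


namespace PKA
open FreeAlgebra (ι)

section Ev
variable {F : Type} [Field F] {Y : Type}

/-- Evaluation of a word against a list of functions. -/
def evW : List (Y → F) → List Y → F
  | [], [] => 1
  | f :: L, y :: l => f y * evW L l
  | [], _ :: _ => 0
  | _ :: _, [] => 0

/-- Evaluation of a tensor against a list of functions. -/
def ev (L : List (Y → F)) : FreeAlgebra F Y →ₗ[F] F := lin (evW L)

lemma ev_Wd (L : List (Y → F)) (l : List Y) : ev L (Wd F l) = evW L l := by rw [ev, lin_Wd]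

lemma ev_nil (t : FreeAlgebra F Y) : ev [] t = cst t := by
  induction t using Tind with
  | h0 => simp
  | hadd t t' h h' => simp [h, h']
  | hsmul r t h => simp [h]
  | hW l => rw [ev_Wd]; cases l <;> simp [evW, Wd_cons]

lemma ev_nil_ι_mul (y : Y) (t : FreeAlgebra F Y) : ev [] (ι F y * t) = 0 := by
  rw [ev_nil]; simp

lemma ev_cons_ι_mul (f : Y → F) (L : List (Y → F)) (y : Y) (t : FreeAlgebra F Y) :
    ev (f :: L) (ι F y * t) = f y * ev L t := by
  induction t using Tind with
  | h0 => simp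
  | hadd t t' h h' => simp [mul_add, h, h']
  | hsmul r t h => simp only [mul_smul_comm, map_smul, h, smul_eq_mul]; ring
  | hW l => rw [← Wd_cons, ev_Wd, ev_Wd, evW]

lemma ev_cons_one (f : Y → F) (L : List (Y → F)) : ev (f :: L) (1 : FreeAlgebra F Y) = 0 := by
  rw [← Wd_nil, ev_Wd, evW]

lemma ev_mul (L : List (Y → F)) (t u : FreeAlgebra F Y) :
    ev L (t * u) = ∑ k ∈ Finset.range (L.length + 1), ev (L.take k) t * ev (L.drop k) u := by
  induction t using Tind with
  | h0 => simp
  | hadd t t' h h' => simp [add_mul, h, h', Finset.sum_add_distrib]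
  | hsmul r t h =>
    simp only [smul_mul_assoc, map_smul, h, smul_eq_mul, Finset.mul_sum]
    exact Finset.sum_congr rfl fun k _ => by ring
  | hW l =>
    induction l generalizing L with
    | nil =>
      rw [Finset.sum_eq_single 0]
      · simp [ev_nil]
      · intro k hk hk0
        cases L with
        | nil => simp at hk; omega
        | cons f L =>
          obtain ⟨k, rfl⟩ := Nat.exists_eq_succ_of_ne_zero hk0
          rw [List.take_succ_cons, Wd_nil, ev_cons_one, zero_mul]
      · simp
    | cons y l ih =>
      rw [Wd_cons, mul_assoc]
      cases L with
      | nil => simp [ev_nil]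
      | cons f L =>
        rw [ev_cons_ι_mul, List.length_cons, Finset.sum_range_succ', List.take_zero,
          ev_nil_ι_mul, zero_mul, add_zero, ih, Finset.mul_sum]
        refine Finset.sum_congr rfl fun k _ => ?_
        rw [List.take_succ_cons, List.drop_succ_cons, ev_cons_ι_mul, mul_assoc]

/-- The dual operation. -/
def bl (c : Y → FreeAlgebra F Y) (L : List (Y → F)) : Y → F := fun y => ev L (c y)

lemma ev_der (s : Y → F) (c : Y → FreeAlgebra F Y) (L : List (Y → F)) (t : FreeAlgebra F Y) :
    ev L (der s c t) = ∑ r ∈ Finset.range (L.length + 1),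
      ∑ k ∈ Finset.range (L.length - r + 1),
        ev ((L.take r).map (s * ·) ++ bl c ((L.drop r).take k) :: L.drop (r + k)) t := by
  induction t using Tind with
  | h0 => simp
  | hadd t t' h h' => simp only [map_add, h, h', Finset.sum_add_distrib]
  | hsmul r t h =>
    simp only [map_smul, h, smul_eq_mul, Finset.mul_sum]
  | hW l =>
    induction l generalizing L with
    | nil =>
      rw [Wd_nil, der_one, map_zero]
      symm
      refine Finset.sum_eq_zero fun r _ => Finset.sum_eq_zero fun k _ => ?_
      rcases List.eq_nil_or_concat ((L.take r).map (s * ·)) with h | ⟨_, _, h⟩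
      · rw [h, List.nil_append, ev_cons_one]
      · cases h' : (L.take r).map (s * ·) with
        | nil => rw [List.nil_append, ev_cons_one]
        | cons _ _ => rw [List.cons_append, ev_cons_one]
    | cons y l ih =>
      rw [Wd_cons, der_ι_mul, map_add, map_smul, ev_mul]
      conv_rhs => rw [Finset.sum_range_succ', add_comm]
      congr 1
      · simp only [Nat.sub_zero]
        refine Finset.sum_congr rfl fun k _ => ?_
        simp only [List.take_zero, List.map_nil, List.nil_append, List.drop_zero, zero_add]
        rw [ev_cons_ι_mul, bl]
      · cases L with
        | nil => simp [ev_nil_ι_mul]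
        | cons f L =>
          rw [ev_cons_ι_mul, ih, List.length_cons, Finset.mul_sum, smul_eq_mul, Finset.mul_sum]
          refine Finset.sum_congr rfl fun r _ => ?_
          rw [Finset.mul_sum, Finset.mul_sum, show L.length + 1 - (r + 1) = L.length - r by omega]
          refine Finset.sum_congr rfl fun k _ => ?_
          rw [List.take_succ_cons, List.drop_succ_cons, List.map_cons, List.cons_append,
            ev_cons_ι_mul, show r + 1 + k = r + k + 1 by omega, List.drop_succ_cons]
          simp [mul_assoc]

lemma ev_smul_mid (A : List (Y → F)) (e : F) (f : Y → F) (B : List (Y → F))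
    (t : FreeAlgebra F Y) : ev (A ++ (e • f) :: B) t = e * ev (A ++ f :: B) t := by
  induction t using Tind with
  | h0 => simp
  | hadd t t' h h' => simp [mul_add, h, h']
  | hsmul r t h => simp only [map_smul, h, smul_eq_mul]; ring
  | hW l =>
    rw [ev_Wd, ev_Wd]
    induction A generalizing l with
    | nil => cases l <;> simp [evW, mul_assoc]
    | cons g A ih =>
      cases l with
      | nil => simp [evW]
      | cons y l =>
        simp only [List.cons_append, evW]
        rw [ih]; ring

/-- If the list contains a zero function the evaluation is zero. -/
lemma ev_zero_mid (A : List (Y → F)) (B : List (Y → F))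
    (t : FreeAlgebra F Y) : ev (A ++ 0 :: B) t = 0 := by
  have := ev_smul_mid A 0 0 B t
  simpa using this

/-- The multilinear evaluation on a word. -/
def PW (q : ℕ) (l : List Y) : MultilinearMap F (fun _ : Fin q => (Y →₀ F)) F :=
  if h : l.length = q then
    (MultilinearMap.mkPiAlgebra F (Fin q) F).compLinearMap
      (fun i => Finsupp.lapply (l.get (i.cast h.symm)))
  else 0

/-- The multilinear evaluation. -/
def evM (q : ℕ) : FreeAlgebra F Y →ₗ[F] MultilinearMap F (fun _ : Fin q => (Y →₀ F)) F :=
  lin (PW q)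

lemma PW_eq (q : ℕ) (l : List Y) (x : Fin q → (Y →₀ F)) :
    PW q l x = evW (List.ofFn (fun i => ⇑(x i))) l := by
  induction q generalizing l with
  | zero =>
    cases l <;> simp [PW, evW]
  | succ q ih =>
    rw [List.ofFn_succ]
    cases l with
    | nil => simp [PW, evW]
    | cons y l =>
      rw [evW, ← ih l (fun i => x i.succ)]
      simp only [PW, List.length_cons, add_left_inj]
      by_cases h : l.length = q
      · simp [h, Fin.prod_univ_succ]
      · simp [h]

lemma evM_eq (q : ℕ) (t : FreeAlgebra F Y) (x : Fin q → (Y →₀ F)) :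
    evM q t x = ev (List.ofFn (fun i => ⇑(x i))) t := by
  induction t using Tind with
  | h0 => simp
  | hadd t t' h h' => simp [h, h']
  | hsmul r t h => simp [h]
  | hW l => rw [ev_Wd, evM, lin_Wd, PW_eq]

lemma evM_span {q : ℕ} {S : List Y → Prop} {t : FreeAlgebra F Y}
    (ht : t ∈ Submodule.span F {u | ∃ l, S l ∧ u = Wd F l})
    (x : Fin q → (Y →₀ F)) (h : evM q t x ≠ 0) :
    ∃ l : List Y, ∃ hl : l.length = q, S l ∧ ∀ i : Fin q, x i (l.get (i.cast hl.symm)) ≠ 0 := by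
  by_contra hcon
  apply h
  induction ht using Submodule.span_induction with
  | mem t ht =>
    obtain ⟨l, hS, rfl⟩ := ht
    rw [evM, lin_Wd, PW]
    by_cases hl : l.length = q
    · rw [dif_pos hl]
      by_contra h'
      simp only [MultilinearMap.compLinearMap_apply, MultilinearMap.mkPiAlgebra_apply] at h'
      rw [← ne_eq, Finset.prod_ne_zero_iff] at h'
      exact hcon ⟨l, hl, hS, fun i => h' i (Finset.mem_univ _)⟩
    · rw [dif_neg hl]; simp
  | zero => simp
  | add t u _ _ h1 h2 => 
    by_cases h1' : evM q t x = 0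
    · by_cases h2' : evM q u x = 0
      · simp [h1', h2']
      · exact absurd (h2 h2') h2'
    · exact absurd (h1 h1') h1'
  | smul r t _ h1 =>
    by_cases h1' : evM q t x = 0
    · simp [h1']
    · exact absurd (h1 h1') h1'

end Ev
end PKA


namespace PKA
open FreeAlgebra (ι)

section Signs
variable {F : Type} [Field F]

/-- The sign `(-1)^n` in `F`. -/
def eps (F : Type) [Field F] (n : ℤ) : F := (((n.negOnePow : ℤˣ) : ℤ) : F)

lemma eps_add (a b : ℤ) : eps F (a + b) = eps F a * eps F b := by
  simp [eps, Int.negOnePow_add]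

@[simp] lemma eps_zero : eps F 0 = 1 := by simp [eps]

lemma eps_two_mul (a : ℤ) : eps F (2 * a) = 1 := by
  rw [eps, Int.negOnePow_even _ (even_two_mul a)]; simp

lemma eps_nat (n : ℕ) : eps F n = (-1) ^ n := by
  induction n with
  | zero => simp
  | succ n ih => rw [Nat.cast_succ, eps_add, ih, pow_succ]; simp [eps]

lemma eps_mul_self (a : ℤ) : eps F a * eps F a = 1 := by
  rw [← eps_add, ← two_mul, eps_two_mul]

lemma eps_ne_zero (a : ℤ) : eps F a ≠ 0 := fun h => by
  have := eps_mul_self (F := F) a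
  simp [h] at this

lemma eps_sum {κ : Type} (s : Finset κ) (f : κ → ℤ) : ∏ i ∈ s, eps F (f i) = eps F (∑ i ∈ s, f i) := by
  classical
  induction s using Finset.induction_on with
  | empty => simp
  | insert a s ha ih => rw [Finset.prod_insert ha, Finset.sum_insert ha, eps_add, ih]

/-- The exponent `Σ (q-1-i) ι_i`. -/
def eL : List ℤ → ℤ
  | [] => 0
  | i :: l => l.length * i + eL l

lemma eL_append (A B : List ℤ) : eL (A ++ B) = eL A + B.length * A.sum + eL B := by
  induction A with
  | nil => simp [eL]
  | cons i A ih => simp only [List.cons_append, eL, ih, List.length_append, List.sum_cons]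
                   push_cast; ring

lemma eL_ofFn (q : ℕ) (f : Fin q → ℤ) :
    eL (List.ofFn f) = ∑ i : Fin q, ((q - 1 - (i : ℕ) : ℕ) : ℤ) * f i := by
  induction q with
  | zero => simp [eL]
  | succ q ih =>
    rw [List.ofFn_succ, eL, ih, Fin.sum_univ_succ, List.length_ofFn]
    congr 1
    refine Finset.sum_congr rfl fun i _ => ?_
    congr 2
    simp; omega

end Signs

section Ins
variable {α : Type}

/-- Insertion in tuples. -/
def ins (n r s : ℕ) (hrs : r + s ≤ n) (hs : 1 ≤ s) (x : Fin n → α) (w : α) :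
    Fin (r + 1 + (n - r - s)) → α := fun k =>
  if hk : (k : ℕ) < r then x ⟨(k : ℕ), by omega⟩
  else if (k : ℕ) = r then w
  else x ⟨(k : ℕ) + s - 1, by have := k.isLt; omega⟩

lemma ofFn_ins (n r s : ℕ) (hrs : r + s ≤ n) (hs : 1 ≤ s) (x : Fin n → α) (w : α) :
    List.ofFn (ins n r s hrs hs x w) =
      (List.ofFn x).take r ++ w :: (List.ofFn x).drop (r + s) := by
  apply List.ext_getElem
  · simp; omega
  · intro k h1 h2
    simp only [List.getElem_ofFn, ins]
    have hlen : ((List.ofFn x).take r).length = r := by simp; omega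
    by_cases hk : k < r
    · rw [dif_pos hk, List.getElem_append_left (by omega)]
      simp
    · rw [dif_neg hk, List.getElem_append_right (by omega)]
      by_cases hk' : k = r
      · subst hk'
        simp [show min k n = k by omega]
      · obtain ⟨j, rfl⟩ : ∃ j, k = r + 1 + j := ⟨k - (r + 1), by omega⟩
        rw [if_neg hk']
        simp only [hlen, show r + 1 + j - r = j + 1 by omega, List.getElem_cons_succ,
          List.getElem_drop, List.getElem_ofFn]
        congr 2
        omega

lemma ofFn_mid (n r s : ℕ) (hrs : r + s ≤ n) (x : Fin n → α) :
    List.ofFn (fun l : Fin s => x ⟨r + (l : ℕ), by have := l.isLt; omega⟩) =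
      ((List.ofFn x).drop r).take s := by
  apply List.ext_getElem
  · simp; omega
  · intro k h1 h2
    simp

end Ins

section Twist
variable {F : Type} [Field F] {Y : Type}

lemma ev_twist (s : Y → F) (L : List (Y → F)) (I : List ℤ)
    (h : List.Forall₂ (fun f i => s * f = eps F (1 + i) • f) L I) (P R : List (Y → F))
    (t : FreeAlgebra F Y) :
    ev (P ++ (L.map (s * ·) ++ R)) t = eps F (L.length + I.sum) * ev (P ++ (L ++ R)) t := by
  induction h generalizing P with
  | nil => simp
  | @cons f i L I hf _ ih =>
    rw [List.map_cons, hf, List.cons_append, ev_smul_mid]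
    have := ih (P ++ [f])
    simp only [List.append_assoc, List.cons_append, List.nil_append] at this
    rw [this, List.cons_append, ← mul_assoc, ← eps_add]
    congr 2
    simp; ring

lemma sum_dbl {G : Type} [AddCommMonoid G] (n : ℕ) (g : ℕ → ℕ → G) (h : ∀ r, g r 0 = 0) :
    ∑ rs ∈ ((Finset.range (n + 1)) ×ˢ (Finset.Icc 1 n)).filter
      (fun rs => rs.1 + rs.2 ≤ n), g rs.1 rs.2 =
    ∑ r ∈ Finset.range (n + 1), ∑ k ∈ Finset.range (n - r + 1), g r k := by
  rw [Finset.sum_filter, Finset.sum_product]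
  refine Finset.sum_congr rfl fun r hr => ?_
  rw [← Finset.sum_filter]
  refine Finset.sum_subset ?_ ?_
  · intro k hk; simp at hk hr ⊢; omega
  · intro k hk hk'
    have : k = 0 := by simp at hk hk' hr; omega
    rw [this]; exact h r

end Twist

section AI
variable {F : Type} [Field F] {Y : Type}

/-- The relation between a word and a letter. -/
def Rel (degp wtp : Y → ℕ) (l : List Y) (y : Y) : Prop :=
  (l.map degp).sum + 2 = l.length + degp y ∧ (l.map wtp).sum = wtp y

/-- Data producing an `A_∞`-structure. -/
structure ADat (F : Type) [Field F] (Y : Type) where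
  degp : Y → ℕ
  wtp : Y → ℕ
  c : Y → FreeAlgebra F Y
  e : ℕ
  span : ∀ y, c y ∈ Submodule.span F {u | ∃ l, Rel degp wtp l y ∧ u = Wd F l}
  dd : ∀ y, der (fun y => (-1) ^ (degp y + 1)) c (c y) = 0
  fin : ∀ n, {y | degp y = n}.Finite
  len : ∀ l y, Rel degp wtp l y → ∃ k, l.length = k * e + 2

lemma sum_map_get {M : Type} [AddCommMonoid M] (f : Y → M) {q : ℕ} (l : List Y) (hl : l.length = q) :
    (l.map f).sum = ∑ i : Fin q, f (l.get (i.cast hl.symm)) := by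
  subst hl
  rw [← List.sum_ofFn]
  congr 1
  conv_lhs => rw [← List.ofFn_get l, List.map_ofFn]
  rfl

namespace ADat
variable (Z : ADat F Y)

lemma cst_c (y : Y) : cst (Z.c y) = 0 := by
  have h := Z.span y
  revert h
  have : ∀ l, Rel Z.degp Z.wtp l y → l ≠ [] := by
    rintro l hl rfl
    obtain ⟨k, hk⟩ := Z.len _ _ hl
    simp at hk
  generalize Z.c y = t
  intro h
  induction h using Submodule.span_induction with
  | mem t ht =>
    obtain ⟨l, hl, rfl⟩ := ht
    cases l with
    | nil => exact absurd rfl (this _ hl)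
    | cons z l => simp [Wd_cons]
  | zero => simp
  | add t u _ _ h1 h2 => simp [h1, h2]
  | smul r t _ h1 => simp [h1]

lemma cst_lam_c (y z : Y) : cst (lam (Z.c y) z) = 0 := by
  have h := Z.span y
  revert h
  have : ∀ l, Rel Z.degp Z.wtp l y → 2 ≤ l.length := by
    intro l hl
    obtain ⟨k, hk⟩ := Z.len _ _ hl
    omega
  generalize Z.c y = t
  intro h
  induction h using Submodule.span_induction with
  | mem t ht =>
    obtain ⟨l, hl, rfl⟩ := ht
    have h2 := this l hl
    rcases List.eq_nil_or_concat l with rfl | ⟨l, x, rfl⟩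
    · simp
    · rw [List.concat_eq_append] at *
      rw [Wd_append, Wd_single, lam_mul_ι]
      classical
      rw [Finsupp.single_apply]
      split_ifs
      · cases l with
        | nil => simp at h2
        | cons z l => simp [Wd_cons]
      · simp
  | zero => simp
  | add t u _ _ h1 h2 => simp [h1, h2]
  | smul r t _ h1 => simp [h1]

lemma fin_supp (q : ℕ) (x : Fin q → (Y →₀ F)) :
    (Function.support fun y => evM q (Z.c y) x).Finite := by
  have : {y | Z.degp y ≤ (∑ i, (x i).support.sup Z.degp) + 2}.Finite := by
    have h : {y | Z.degp y ≤ (∑ i, (x i).support.sup Z.degp) + 2} =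
        ⋃ n ∈ Set.Iic ((∑ i, (x i).support.sup Z.degp) + 2), {y | Z.degp y = n} := by
      ext y; simp
    rw [h]
    exact Set.Finite.biUnion (Set.finite_Iic _) (fun n _ => Z.fin n)
  refine this.subset fun y hy => ?_
  obtain ⟨l, hl, hS, hx⟩ := evM_span (Z.span y) x hy
  have h1 := hS.1
  rw [sum_map_get _ l hl] at h1
  have h2 : ∑ i : Fin q, Z.degp (l.get (i.cast hl.symm)) ≤ ∑ i, (x i).support.sup Z.degp :=
    Finset.sum_le_sum fun i _ => Finset.le_sup (f := Z.degp) (by simpa using hx i)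
  show Z.degp y ≤ (∑ i, (x i).support.sup Z.degp) + 2
  omega

/-- The bar operations. -/
def b (q : ℕ) : MultilinearMap F (fun _ : Fin q => (Y →₀ F)) (Y →₀ F) where
  toFun x := Finsupp.ofSupportFinite (fun y => evM q (Z.c y) x) (Z.fin_supp q x)
  map_update_add' x i u v := by
    ext y
    simp [Finsupp.ofSupportFinite_coe]
  map_update_smul' x i r u := by
    ext y
    simp [Finsupp.ofSupportFinite_coe]

lemma b_apply (q : ℕ) (x : Fin q → (Y →₀ F)) (y : Y) : Z.b q x y = evM q (Z.c y) x := rfl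

lemma b_coe (q : ℕ) (x : Fin q → (Y →₀ F)) :
    ⇑(Z.b q x) = bl Z.c (List.ofFn (fun i => ⇑(x i))) := by
  ext y; rw [b_apply, evM_eq, bl]

/-- Sign twist. -/
def sgk (k : ℕ) : (Y →₀ F) →ₗ[F] (Y →₀ F) where
  toFun f := Finsupp.onFinset f.support (fun y => eps F (k * Z.degp y) * f y)
    (fun y hy => by rw [Finsupp.mem_support_iff]; exact right_ne_zero_of_mul hy)
  map_add' f g := by ext y; simp [mul_add]
  map_smul' r f := by ext y; simp; ring

/-- The `A_∞`-operations. -/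
def m (q : ℕ) : MultilinearMap F (fun _ : Fin q => (Y →₀ F)) (Y →₀ F) :=
  (Z.b q).compLinearMap (fun i => Z.sgk (q - 1 - (i : ℕ)))

/-- The bigraded components. -/
def comp (n j : ℤ) : Submodule F (Y →₀ F) :=
  Finsupp.supported F F {y | (Z.degp y : ℤ) = n ∧ (Z.wtp y : ℤ) = j}

lemma mem_comp {n j : ℤ} {f : Y →₀ F} :
    f ∈ Z.comp n j ↔ ∀ y, f y ≠ 0 → (Z.degp y : ℤ) = n ∧ (Z.wtp y : ℤ) = j := by
  rw [comp, Finsupp.mem_supported']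
  refine forall_congr' fun y => ?_
  simp only [Set.mem_ofPred_eq]
  tauto

lemma sgk_hom {f : Y →₀ F} {n : ℤ} (hf : ∀ y, f y ≠ 0 → (Z.degp y : ℤ) = n) (k : ℕ) :
    Z.sgk k f = eps F (k * n) • f := by
  ext y
  show eps F (k * Z.degp y) * f y = eps F (k * n) * f y
  by_cases h : f y = 0
  · simp [h]
  · rw [hf y h]

lemma m_hom {q : ℕ} {I : Fin q → ℤ} {x : Fin q → (Y →₀ F)}
    (hx : ∀ t y, x t y ≠ 0 → (Z.degp y : ℤ) = I t) :
    Z.m q x = eps F (eL (List.ofFn I)) • Z.b q x := by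
  rw [m, MultilinearMap.compLinearMap_apply]
  have : (fun i : Fin q => Z.sgk (q - 1 - (i : ℕ)) (x i)) =
      fun i : Fin q => eps F ((q - 1 - (i : ℕ) : ℕ) * I i) • x i := by
    funext i; exact Z.sgk_hom (hx i) _
  rw [this, MultilinearMap.map_smul_univ, eps_sum, eL_ofFn]

lemma b_ne_zero {q : ℕ} {I : Fin q → ℤ} {x : Fin q → (Y →₀ F)}
    (hx : ∀ t y, x t y ≠ 0 → (Z.degp y : ℤ) = I t) (y : Y) (h : Z.b q x y ≠ 0) :
    (Z.degp y : ℤ) = (∑ t, I t) + 2 - q := by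
  rw [b_apply] at h
  obtain ⟨l, hl, hS, hx'⟩ := evM_span (Z.span y) x h
  have h1 := hS.1
  rw [sum_map_get _ l hl] at h1
  have h2 : ∑ t, I t = ∑ i : Fin q, (Z.degp (l.get (i.cast hl.symm)) : ℤ) :=
    Finset.sum_congr rfl fun i _ => (hx i _ (hx' i)).symm
  rw [h2, ← Nat.cast_sum]
  omega

lemma hom_degree (q : ℕ) (I σ : Fin q → ℤ) (x : Fin q → (Y →₀ F))
    (hx : ∀ t, x t ∈ Z.comp (I t) (σ t)) :
    Z.m q x ∈ Z.comp ((∑ t, I t) + 2 - q) (∑ t, σ t) := by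
  have hx' := fun t => Z.mem_comp.1 (hx t)
  rw [Z.m_hom (I := I) (fun t y h => (hx' t y h).1)]
  refine Submodule.smul_mem _ _ (Z.mem_comp.2 fun y h => ⟨Z.b_ne_zero (fun t y h =>
    (hx' t y h).1) y h, ?_⟩)
  rw [b_apply] at h
  obtain ⟨l, hl, hS, hx''⟩ := evM_span (Z.span y) x h
  have h1 := hS.2
  rw [sum_map_get _ l hl] at h1
  have h2 : ∑ t, σ t = ∑ i : Fin q, (Z.wtp (l.get (i.cast hl.symm)) : ℤ) :=
    Finset.sum_congr rfl fun i _ => (hx' i _ (hx'' i)).2.symm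
  rw [h2, ← Nat.cast_sum, h1]

lemma m_zero (q : ℕ) (hq : ¬ ∃ k, q = k * Z.e + 2) : Z.m q = 0 := by
  have : Z.b q = 0 := by
    ext x y
    by_contra h
    obtain ⟨l, hl, hS, -⟩ := evM_span (Z.span y) x h
    obtain ⟨k, hk⟩ := Z.len _ _ hS
    exact hq ⟨k, by omega⟩
  rw [m, this]; ext; simp

lemma bl_eq_zero : bl Z.c [] = 0 := by
  ext y; rw [bl, ev_nil, Z.cst_c]; rfl

lemma stasheff (n : ℕ) (I σ : Fin n → ℤ) (x : Fin n → (Y →₀ F))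
    (hx : ∀ t, x t ∈ Z.comp (I t) (σ t)) :
    ∑ rs ∈ (((Finset.range (n + 1)) ×ˢ (Finset.Icc 1 n)).filter
        fun rs => rs.1 + rs.2 ≤ n).attach,
      (((Int.negOnePow ((rs.1.1 : ℤ) + (rs.1.2 : ℤ) * ((n - rs.1.1 - rs.1.2 : ℕ) : ℤ) +
          (rs.1.2 : ℤ) *
            ∑ t ∈ Finset.univ.filter (fun t : Fin n => (t : ℕ) < rs.1.1), I t)) : ℤˣ) : ℤ) •
        Z.m (rs.1.1 + 1 + (n - rs.1.1 - rs.1.2))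
          (AInf.insertAt F Z.m n rs.1.1 rs.1.2 (AInf.mem_decomp_le rs.2)
            (AInf.mem_decomp_one_le rs.2) x)
      = 0 := by
  have hx' := fun t => Z.mem_comp.1 (hx t)
  have hx1 := fun t y h => (hx' t y h).1
  ext y
  set L : List (Y → F) := List.ofFn (fun i => ⇑(x i)) with hL
  set s : Y → F := fun y => (-1) ^ (Z.degp y + 1) with hs
  have hLlen : L.length = n := by simp [hL]
  set g : ℕ → ℕ → F := fun r k => eps F (eL (List.ofFn I)) *
    ev ((L.take r).map (s * ·) ++ bl Z.c ((L.drop r).take k) :: L.drop (r + k)) (Z.c y) with hg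
  have hall : List.Forall₂ (fun f i => s * f = eps F (1 + i) • f) L (List.ofFn I) := by
    rw [List.forall₂_iff_get]
    refine ⟨by simp [hL], fun i h1 h2 => ?_⟩
    have hi : i < n := by omega
    simp only [hL, List.get_eq_getElem, List.getElem_ofFn]
    funext z
    simp only [hs, Pi.mul_apply, Pi.smul_apply, smul_eq_mul]
    by_cases hz : x ⟨i, hi⟩ z = 0
    · simp [hz]
    · rw [← hx1 ⟨i, hi⟩ z hz, eps_add, eps_nat, pow_succ]; simp [eps]
  have hterm : ∀ rs : ℕ × ℕ, ∀ (h1 : rs.1 + rs.2 ≤ n) (h2 : 1 ≤ rs.2),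
      ((((Int.negOnePow ((rs.1 : ℤ) + (rs.2 : ℤ) * ((n - rs.1 - rs.2 : ℕ) : ℤ) +
          (rs.2 : ℤ) *
            ∑ t ∈ Finset.univ.filter (fun t : Fin n => (t : ℕ) < rs.1), I t)) : ℤˣ) : ℤ) •
        Z.m (rs.1 + 1 + (n - rs.1 - rs.2))
          (AInf.insertAt F Z.m n rs.1 rs.2 h1 h2 x)) y = g rs.1 rs.2 := by
    rintro ⟨r, k⟩ h1 h2
    dsimp only at h1 h2 ⊢
    set xm : Fin k → (Y →₀ F) := fun l => x ⟨r + (l : ℕ), by have := l.isLt; omega⟩ with hxm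
    set Im : Fin k → ℤ := fun l => I ⟨r + (l : ℕ), by have := l.isLt; omega⟩ with hIm
    have hins : AInf.insertAt F Z.m n r k h1 h2 x = ins n r k h1 h2 x (Z.m k xm) := rfl
    have hmm : Z.m k xm = eps F (eL (List.ofFn Im)) • Z.b k xm :=
      Z.m_hom (fun t y h => hx1 _ y h)
    have hmd : ∀ y, Z.m k xm y ≠ 0 → (Z.degp y : ℤ) = (∑ t, Im t) + 2 - k := by
      intro y h
      rw [hmm] at h
      exact Z.b_ne_zero (I := Im) (fun t y h => hx1 _ y h) y (right_ne_zero_of_mul h)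
    have hdeg : ∀ t y, (ins n r k h1 h2 x (Z.m k xm)) t y ≠ 0 → (Z.degp y : ℤ) =
        (ins n r k h1 h2 I ((∑ t, Im t) + 2 - k)) t := by
      intro t y
      simp only [ins]
      split_ifs with c1 c2
      · exact hx1 _ _
      · exact hmd y
      · exact hx1 _ _
    have hcoe : (fun i => ⇑(ins n r k h1 h2 x (Z.m k xm) i)) =
        ins n r k h1 h2 (fun i => ⇑(x i)) (⇑(Z.m k xm)) := by
      funext i
      simp only [ins]
      split_ifs <;> rfl
    rw [hins, Z.m_hom hdeg, ofFn_ins, ← Int.cast_smul_eq_zsmul F, Finsupp.smul_apply,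
      Finsupp.smul_apply, b_apply, evM_eq, hcoe, ofFn_ins, ← hL, hmm, Finsupp.coe_smul, b_coe,
      ev_smul_mid]
    have e1 : List.ofFn (fun i => ⇑(xm i)) = (L.drop r).take k := 
      ofFn_mid n r k h1 (fun i => ⇑(x i))
    have e2 : List.ofFn Im = ((List.ofFn I).drop r).take k := ofFn_mid n r k h1 I
    have e3 : ∑ t, Im t = (((List.ofFn I).drop r).take k).sum := by rw [← e2, List.sum_ofFn]
    have e4 := List.sum_take_ofFn I r
    have hall' := List.forall₂_take r hall
    have e5 := ev_twist s _ _ hall' [] (bl Z.c ((L.drop r).take k) :: L.drop (r + k)) (Z.c y)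
    simp only [List.nil_append] at e5
    rw [hg]
    dsimp only
    rw [e5, e1, e2, e3, ← e4]
    change eps F _ • (eps F _ • _) = _
    simp only [smul_eq_mul]
    rw [← mul_assoc, ← mul_assoc, ← mul_assoc, ← eps_add, ← eps_add, ← eps_add]
    congr 1
    have hsplit : List.ofFn I = (List.ofFn I).take r ++ (((List.ofFn I).drop r).take k ++
        (List.ofFn I).drop (r + k)) := by
      rw [← List.drop_drop, List.take_append_drop, List.take_append_drop]
    have hA : ((List.ofFn I).take r).length = r := by simp; omega
    have hA' : (L.take r).length = r := by simp [hLlen]; omega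
    have hB : (((List.ofFn I).drop r).take k).length = k := by simp; omega
    have hC : ((List.ofFn I).drop (r + k)).length = n - r - k := by simp; omega
    have hI : eL (List.ofFn I) = eL ((List.ofFn I).take r ++ (((List.ofFn I).drop r).take k ++
        (List.ofFn I).drop (r + k))) := congrArg eL hsplit
    rw [hI, hA']
    generalize (List.ofFn I).take r = A at *
    generalize ((List.ofFn I).drop r).take k = B at *
    generalize (List.ofFn I).drop (r + k) = C at *
    rw [eL_append, eL_append, eL_append, eL, List.length_append, List.length_cons, hB, hC]
    rw [← one_mul (eps F (_ + (_ + _))), ← eps_two_mul ((n - r - k : ℕ) : ℤ), ← eps_add]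
    congr 1
    push_cast
    ring
  rw [Finsupp.finsetSum_apply, Finsupp.zero_apply]
  rw [Finset.sum_congr rfl (fun rs _ => hterm rs.1 (AInf.mem_decomp_le rs.2)
    (AInf.mem_decomp_one_le rs.2))]
  rw [Finset.sum_attach _ (fun rs : ℕ × ℕ => g rs.1 rs.2), sum_dbl]
  · have := ev_der s Z.c L (Z.c y)
    rw [Z.dd, map_zero, hLlen] at this
    simp only [hg, ← Finset.mul_sum]
    rw [← this, mul_zero]
  · intro r
    simp only [hg, List.take_zero, bl_eq_zero, ev_zero_mid, mul_zero]

/-- The associated `A_∞`-algebra. -/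
def S : AInf.BigradedAInfty F where
  V := Y →₀ F
  comp := Z.comp
  m := Z.m
  m_one := Z.m_zero 1 (by rintro ⟨k, hk⟩; omega)
  sup_comp := by
    rw [eq_top_iff]
    rintro f -
    induction f using Finsupp.induction_linear with
    | zero => exact zero_mem _
    | add f g hf hg => exact add_mem hf hg
    | single y r =>
      refine Submodule.mem_iSup_of_mem (Z.degp y) (Submodule.mem_iSup_of_mem (Z.wtp y) ?_)
      rw [mem_comp]
      classical
      intro z hz
      rw [Finsupp.single_apply] at hz
      split_ifs at hz with h
      · subst h; exact ⟨rfl, rfl⟩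
      · exact absurd rfl hz
  hom_degree q _ I σ x hx := Z.hom_degree q I σ x hx
  stasheff n I σ x hx := Z.stasheff n I σ x hx

end ADat
end AI
end PKA


namespace PKA
open FreeAlgebra (ι)

section Gen
variable {F : Type} [Field F] {Y : Type}
namespace ADat
variable (Z : ADat F Y)

lemma mem_Edeg (n : ℤ) (f : Y →₀ F) :
    f ∈ AInf.Edeg Z.S n ↔ ∀ y, f y ≠ 0 → (Z.degp y : ℤ) = n := by
  constructor
  · intro hf
    change f ∈ ⨆ j : ℤ, Z.comp n j at hf
    induction hf using Submodule.iSup_induction' with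
    | mem j f hf => exact fun y hy => (Z.mem_comp.1 hf y hy).1
    | zero => intro y hy; exact absurd rfl hy
    | add f g _ _ h1 h2 =>
      intro y hy
      by_cases h : f y = 0
      · by_cases h' : g y = 0
        · exact absurd (by simp [h, h']) hy
        · exact h2 y h'
      · exact h1 y h
  · intro hf
    change f ∈ ⨆ j : ℤ, Z.comp n j
    rw [← Finsupp.sum_single f]
    refine Submodule.sum_mem _ fun y hy => ?_
    refine Submodule.mem_iSup_of_mem (Z.wtp y) (Z.mem_comp.2 ?_)
    classical
    intro z hz
    rw [Finsupp.single_apply] at hz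
    split_ifs at hz with h
    · subst h; exact ⟨hf _ (by simpa using hy), rfl⟩
    · exact absurd rfl hz

lemma generated (hgen : ∀ n : ℕ, 2 ≤ n → ∀ u : Y →₀ F, (∀ y, u y ≠ 0 → Z.degp y = n) →
    (∀ (q : ℕ) (w : Fin q → Y), (∀ t, 1 ≤ Z.degp (w t)) →
      u.sum (fun y r => r * Z.b q (fun t => Finsupp.single (w t) 1) y) = 0) → u = 0) :
    AInf.GeneratedByE1 Z.S := by
  intro n hn
  apply le_antisymm
  · intro φ hφ
    by_contra hcon
    obtain ⟨f0, hf02, hf01⟩ := Submodule.exists_le_ker_of_notMem hcon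
    obtain ⟨f, hf2, hf1⟩ : ∃ f : (Y →₀ F) →ₗ[F] F, f φ ≠ 0 ∧
        ∀ (q : ℕ) (I : Fin q → ℤ) (x : Fin q → (Y →₀ F)), 2 ≤ q →
          (∀ t, 1 ≤ I t ∧ x t ∈ AInf.Edeg Z.S (I t)) → (∑ t, I t) + 2 - q = n →
          f (Z.m q x) = 0 :=
      ⟨f0, hf02, fun q I x h1 h2 h3 => by
        have := hf01 (Submodule.subset_span ⟨q, I, x, h1, h2, h3, rfl⟩)
        exact this⟩
    obtain ⟨N, rfl⟩ : ∃ N : ℕ, n = N := ⟨n.toNat, by omega⟩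
    have hN : 2 ≤ N := by omega
    let u : Y →₀ F := Finsupp.onFinset (Z.fin N).toFinset
      (fun y => by classical exact if Z.degp y = N then f (Finsupp.single y (1 : F)) else 0)
      (fun y hy => by
        simp only [ne_eq, ite_eq_right_iff, Classical.not_imp] at hy
        simpa using hy.1)
    have hu : ∀ y, Z.degp y = N → u y = f (Finsupp.single y (1 : F)) := fun y hy => if_pos hy
    have hu' : ∀ y, Z.degp y ≠ N → u y = 0 := fun y hy => if_neg hy
    have hfu : ∀ v : Y →₀ F, (∀ y, v y ≠ 0 → Z.degp y = N) →
        f v = u.sum (fun y r => r * v y) := by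
      intro v hv
      conv_lhs => rw [← Finsupp.sum_single v]
      rw [Finsupp.sum, Finsupp.sum, map_sum]
      have h1 : ∑ y ∈ v.support, f (Finsupp.single y (v y)) = ∑ y ∈ v.support, u y * v y := by
        refine Finset.sum_congr rfl fun y hy => ?_
        rw [hu y (hv y (by simpa using hy))]
        rw [show Finsupp.single y (v y) = v y • Finsupp.single y (1 : F) by simp, map_smul,
          smul_eq_mul, mul_comm]
      rw [h1]
      classical
      rw [Finset.sum_subset (Finset.subset_union_left (s₂ := u.support))]
      · symm
        apply Finset.sum_subset (Finset.subset_union_right)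
        intro y _ hy
        simp only [Finsupp.mem_support_iff, not_not] at hy
        simp [hy]
      · intro y _ hy
        simp only [Finsupp.mem_support_iff, not_not] at hy
        simp [hy]
    have hu0 : u = 0 := by
      refine hgen N hN u (fun y hy => by by_contra h; exact hy (hu' y h)) ?_
      intro q w hw
      have hI : ∀ (t : Fin q) (y : Y), (Finsupp.single (w t) (1 : F)) y ≠ 0 →
          (Z.degp y : ℤ) = Z.degp (w t) := by
        intro t y hy
        classical
        rw [Finsupp.single_apply] at hy
        split_ifs at hy with h
        · rw [h]
        · exact absurd rfl hy
      have hb := Z.b_ne_zero (I := fun t => (Z.degp (w t) : ℤ)) hI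
      have hm := Z.m_hom (I := fun t => (Z.degp (w t) : ℤ)) hI
      by_cases hNq : (∑ t, (Z.degp (w t) : ℤ)) + 2 - q = N
      · by_cases hq : 2 ≤ q
        · rw [← hfu _ (fun y hy => by have := hb y hy; omega)]
          have hmem : f (Z.m q (fun t => Finsupp.single (w t) (1 : F))) = 0 := by
            refine hf1 q (fun t => (Z.degp (w t) : ℤ)) _ hq ?_ hNq
            intro t
            exact ⟨by have := hw t; omega, (Z.mem_Edeg _ _).2 (hI t)⟩
          rw [hm, map_smul, smul_eq_zero] at hmem
          exact hmem.resolve_left (eps_ne_zero _)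
        · have : Z.m q = 0 := Z.m_zero q (by rintro ⟨k, hk⟩; omega)
          rw [this] at hm
          have hb0 : Z.b q (fun t => Finsupp.single (w t) (1 : F)) = 0 := by
            have := hm.symm
            rw [zero_apply, smul_eq_zero] at this
            exact this.resolve_left (eps_ne_zero _)
          rw [hb0]; simp [Finsupp.sum]
      · refine Finset.sum_eq_zero fun y hy => ?_
        by_contra h
        have h1 := hb y (right_ne_zero_of_mul h)
        have h2 : Z.degp y = N := by
          by_contra h'
          exact (left_ne_zero_of_mul h) (hu' y h')
        omega
    apply hf2
    rw [hfu φ (fun y hy => by have := (Z.mem_Edeg _ _).1 hφ y hy; omega), hu0]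
    simp
  · rw [Submodule.span_le]
    rintro v ⟨q, I, x, hq, hx, rfl, rfl⟩
    have hx' := fun t => (Z.mem_Edeg _ _).1 (hx t).2
    refine (Z.mem_Edeg _ _).2 ?_
    change ∀ y, (Z.m q x) y ≠ 0 → _
    rw [Z.m_hom hx']
    intro y hy
    exact Z.b_ne_zero hx' y (right_ne_zero_of_mul hy)

end ADat
end Gen

section Coef
variable {F : Type} [Field F] {X : Type}

lemma evW_single (l l' : List X) : evW (l.map (fun x => ⇑(Finsupp.single (some x) (1 : F))))
    (l'.map some) = Finsupp.single l' (1 : F) l := by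
  classical
  induction l generalizing l' with
  | nil => cases l' <;> simp [evW]
  | cons x l ih =>
    cases l' with
    | nil => simp [evW]
    | cons y l' =>
      simp only [List.map_cons, evW, ih, Finsupp.single_apply, Option.some.injEq,
        List.cons.injEq]
      by_cases h : x = y
      · subst h; simp
      · simp [h, Ne.symm h]

lemma ev_jj_single (l : List X) (t : FreeAlgebra F X) :
    ev (l.map (fun x => ⇑(Finsupp.single (some x) (1 : F)))) (jj t) = (wb F X).repr t l := by
  induction t using Tind with
  | h0 => simp
  | hadd t t' h h' => simp [h, h']
  | hsmul r t h => simp [h]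
  | hW l' => rw [jj_Wd, ev_Wd, evW_single, ← wb_apply, Module.Basis.repr_self]

lemma ev_cp_single (s : X → F) (c : X → FreeAlgebra F X) (l : List X) (x : X) :
    ev (l.map (fun x => ⇑(Finsupp.single (some x) (1 : F)))) (cp s c (some x)) =
      (wb F X).repr (c x) l := by
  rw [cp, map_sub, map_add, ev_jj_single, map_smul, ← Wd_single, ← Wd_single, ← Wd_append,
    ← Wd_append, ev_Wd, ev_Wd]
  have h1 : evW (l.map (fun x => ⇑(Finsupp.single (some x) (1 : F)))) ([none] ++ [some x]) = 0 := by
    rcases l with _ | ⟨z, l⟩ <;> simp [evW]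
  have h2 : evW (l.map (fun x => ⇑(Finsupp.single (some x) (1 : F)))) ([some x] ++ [none]) = 0 := by
    rcases l with _ | ⟨z, _ | ⟨z', l⟩⟩ <;> simp [evW]
  rw [h1, h2]; simp

end Coef
end PKA


namespace PKA

section Prj
variable {F : Type} [Field F] {M : Type} [AddCommGroup M] [Module F M] {κ : Type} [DecidableEq κ]
  (ℳ : κ → Submodule F M) [DirectSum.Decomposition ℳ]

/-- Projection to a homogeneous component. -/
def prj (i : κ) : M →ₗ[F] M :=
  (ℳ i).subtype ∘ₗ DirectSum.component F κ (fun i => ↥(ℳ i)) i ∘ₗ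
    (DirectSum.decomposeLinearEquiv ℳ).toLinearMap

lemma prj_apply (i : κ) (m : M) : prj ℳ i m = (DirectSum.decompose ℳ m i : M) := rfl

lemma prj_mem (i : κ) (m : M) : prj ℳ i m ∈ ℳ i := (DirectSum.decompose ℳ m i).2

lemma prj_same {i : κ} {m : M} (h : m ∈ ℳ i) : prj ℳ i m = m :=
  DirectSum.decompose_of_mem_same ℳ h

lemma prj_ne {i j : κ} {m : M} (h : m ∈ ℳ i) (hij : i ≠ j) : prj ℳ j m = 0 :=
  DirectSum.decompose_of_mem_ne ℳ h hij

lemma hind {p : M → Prop} (h0 : p 0) (hadd : ∀ a b, p a → p b → p (a + b))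
    (hm : ∀ i, ∀ m ∈ ℳ i, p m) (m : M) : p m :=
  DirectSum.Decomposition.inductionOn ℳ h0 (fun {i} m => hm i m.1 m.2)
    (fun a b => hadd a b) m

lemma prj_ext {m : M} (h : ∀ i, prj ℳ i m = 0) : m = 0 := by
  apply (DirectSum.decompose ℳ).injective
  rw [DirectSum.decompose_zero]
  ext i
  exact h i

end Prj

open GradedAlg
section Mods
variable {F : Type} [Field F] {𝒜 : GradedAlg F}

instance decM (M : 𝒜.GMod) : DirectSum.Decomposition M.grading :=
  ((DirectSum.isInternal_submodule_iff_iSupIndep_and_iSup_eq_top _).2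
    ⟨M.indep, M.sup_eq_top⟩).chooseDecomposition

/-- Projection of a graded module. -/
abbrev pr (M : 𝒜.GMod) (j : ℤ) : M.M →ₗ[F] M.M := prj M.grading j

lemma pr_smul (M : 𝒜.GMod) {i : ℕ} {j k : ℤ} (hk : k = i + j) {a : 𝒜.A} (ha : a ∈ 𝒜.grading i)
    (m : M.M) : pr M k (a • m) = a • pr M j m := by
  subst hk
  refine hind M.grading (p := fun m => pr M (i + j) (a • m) = a • pr M j m) ?_ ?_ ?_ m
  · simp
  · intro m m' h h'; simp only [smul_add, map_add, h, h']
  · intro l m hm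
    by_cases hl : l = j
    · subst hl
      rw [pr, prj_same _ hm, prj_same _ (M.smul_mem ha hm)]
    · rw [pr, prj_ne _ hm hl, prj_ne _ (M.smul_mem ha hm) (by omega), smul_zero]

lemma pr_hom {M N : 𝒜.GMod} (f : GHom M N) (j : ℤ) (m : M.M) :
    pr N j (f.lin m) = f.lin (pr M j m) := by
  refine hind M.grading (p := fun m => pr N j (f.lin m) = f.lin (pr M j m)) ?_ ?_ ?_ m
  · simp
  · intro m m' h h'; simp only [map_add, h, h']
  · intro l m hm
    by_cases hl : l = j
    · subst hl
      rw [pr, prj_same _ hm, prj_same _ (f.grad _ _ hm)]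
    · rw [pr, pr, prj_ne _ hm hl, prj_ne _ (f.grad _ _ hm) hl, map_zero]

lemma pr_smul_of_mem (M : 𝒜.GMod) {s : ℤ} {m : M.M} (hm : m ∈ M.grading s) (k : ℕ) (a : 𝒜.A) :
    pr M (k + s) (a • m) = prj 𝒜.grading k a • m := by
  refine hind 𝒜.grading (p := fun a => pr M (k + s) (a • m) = prj 𝒜.grading k a • m) ?_ ?_ ?_ a
  · simp
  · intro a b h h'; simp only [map_add, add_smul, h, h']
  · intro l a ha
    by_cases hl : l = k
    · subst hl
      rw [pr, prj_same _ ha, prj_same _ (M.smul_mem ha hm)]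
    · rw [pr, prj_ne _ ha hl, prj_ne _ (M.smul_mem ha hm) (by omega), zero_smul]

lemma pr_smul_lt (M : 𝒜.GMod) {s : ℤ} {m : M.M} (hm : m ∈ M.grading s) {N : ℤ} (hN : N < s)
    (a : 𝒜.A) : pr M N (a • m) = 0 := by
  refine hind 𝒜.grading (p := fun a => pr M N (a • m) = 0) ?_ ?_ ?_ a
  · simp
  · intro a b h h'; simp only [map_add, add_smul, h, h', add_zero]
  · intro l a ha
    exact prj_ne _ (M.smul_mem ha hm) (by omega)

/-- Elements concentrated in degrees at least `n`. -/
def Fil (𝒜 : GradedAlg F) (n : ℕ) : Submodule F 𝒜.A :=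
  Submodule.span F {a | ∃ j, n ≤ j ∧ a ∈ 𝒜.grading j}

lemma Fil_mul {n m : ℕ} {a b : 𝒜.A} (ha : a ∈ Fil 𝒜 n) (hb : b ∈ Fil 𝒜 m) :
    a * b ∈ Fil 𝒜 (n + m) := by
  have : Fil 𝒜 n * Fil 𝒜 m ≤ Fil 𝒜 (n + m) := by
    rw [Fil, Fil, Submodule.span_mul_span]
    refine Submodule.span_le.2 ?_
    rintro _ ⟨a, ⟨j, hj, ha⟩, b, ⟨k, hk, hb⟩, rfl⟩
    exact Submodule.subset_span ⟨j + k, by omega, SetLike.GradedMul.mul_mem ha hb⟩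
  exact this (Submodule.mul_mem_mul ha hb)

lemma Fil_zero (a : 𝒜.A) : a ∈ Fil 𝒜 0 := by
  refine hind 𝒜.grading (p := fun a => a ∈ Fil 𝒜 0) (zero_mem _) (fun _ _ => add_mem) ?_ a
  intro i a ha
  exact Submodule.subset_span ⟨i, by omega, ha⟩

lemma Fil_prj {n i : ℕ} (h : i < n) {a : 𝒜.A} (ha : a ∈ Fil 𝒜 n) : prj 𝒜.grading i a = 0 := by
  induction ha using Submodule.span_induction with
  | mem a ha => obtain ⟨j, hj, ha⟩ := ha; exact prj_ne _ ha (by omega)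
  | zero => simp
  | add a b _ _ h h' => simp [h, h']
  | smul r a _ h => simp [h]

lemma mem_J {a : 𝒜.A} : a ∈ 𝒜.jideal ↔ prj 𝒜.grading 0 a = 0 := by
  change a ∈ HomogeneousIdeal.irrelevant 𝒜.grading ↔ _
  rw [HomogeneousIdeal.mem_irrelevant_iff]
  rfl

lemma J_Fil {a : 𝒜.A} (ha : a ∈ 𝒜.jideal) : a ∈ Fil 𝒜 1 := by
  rw [mem_J] at ha
  have : ∀ a : 𝒜.A, a - prj 𝒜.grading 0 a ∈ Fil 𝒜 1 := by
    intro a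
    refine hind 𝒜.grading (p := fun a => a - prj 𝒜.grading 0 a ∈ Fil 𝒜 1) (by simp) ?_ ?_ a
    · intro a b h h'
      rw [map_add, add_sub_add_comm]; exact add_mem h h'
    · intro i a h
      by_cases hi : i = 0
      · subst hi; rw [prj_same _ h, sub_self]; exact zero_mem _
      · rw [prj_ne _ h hi, sub_zero]; exact Submodule.subset_span ⟨i, by omega, h⟩
  simpa [ha] using this a

lemma mem_J_of {i : ℕ} (hi : i ≠ 0) {a : 𝒜.A} (ha : a ∈ 𝒜.grading i) : a ∈ 𝒜.jideal :=
  mem_J.2 (prj_ne _ ha hi)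

lemma Fil_eq_zero {a : 𝒜.A} (h : ∀ n, a ∈ Fil 𝒜 n) : a = 0 :=
  prj_ext 𝒜.grading fun i => Fil_prj (Nat.lt_succ_self i) (h _)

/-- A projective module generated in a single degree is free. -/
lemma free_basis (h0 : 𝒜.grading 0 = Submodule.span F {1}) (M : 𝒜.GMod)
    (hp : Module.Projective 𝒜.A M.M) {s : ℤ} (hs : M.GenInDeg s) :
    ∃ (I : Type) (b : Module.Basis I 𝒜.A M.M), ∀ i, b i ∈ M.grading s := by
  classical
  let B := Module.Basis.ofVectorSpace F ↥(M.grading s)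
  let I := Module.Basis.ofVectorSpaceIndex F ↥(M.grading s)
  let v : I → M.M := fun i => (B i : M.M)
  have hv : ∀ i, v i ∈ M.grading s := fun i => (B i).2
  have hvF : LinearIndependent F v :=
    B.linearIndependent.map' (M.grading s).subtype (by simp)
  let φ : (I →₀ 𝒜.A) →ₗ[𝒜.A] M.M := Finsupp.linearCombination 𝒜.A v
  have hsurj : Function.Surjective φ := by
    rw [← LinearMap.range_eq_top, Finsupp.range_linearCombination, eq_top_iff, ← hs,
      Submodule.span_le]
    intro m hm
    have h1 : (⟨m, hm⟩ : ↥(M.grading s)) ∈ Submodule.span F (Set.range B) := by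
      rw [B.span_eq]; trivial
    have h2 : m ∈ Submodule.span F (Set.range v) := by
      have := Submodule.mem_map_of_mem (f := (M.grading s).subtype) h1
      rw [Submodule.map_span, ← Set.range_comp] at this
      exact this
    exact Submodule.span_subset_span F 𝒜.A _ h2
  have hker : ∀ x, φ x = 0 → ∀ i, x i ∈ 𝒜.jideal := by
    intro x hx i
    rw [mem_J]
    have h1 : ∀ i, ∃ r : F, prj 𝒜.grading 0 (x i) = r • (1 : 𝒜.A) := by
      intro i
      have := prj_mem 𝒜.grading 0 (x i)
      rw [h0, Submodule.mem_span_singleton] at this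
      obtain ⟨r, hr⟩ := this
      exact ⟨r, hr.symm⟩
    choose r hr using h1
    have h2 : ∑ i ∈ x.support, r i • v i = 0 := by
      have := congrArg (pr M ((0 : ℕ) + s)) hx
      rw [map_zero, Finsupp.linearCombination_apply, Finsupp.sum, map_sum] at this
      rw [← this]
      refine Finset.sum_congr rfl fun i _ => ?_
      rw [pr_smul_of_mem _ (hv i), hr, smul_assoc, one_smul]
    have h3 := linearIndependent_iff'.1 hvF _ _ h2 i
    by_cases hi : i ∈ x.support
    · rw [hr, h3 hi, zero_smul]
    · rw [Finsupp.notMem_support_iff.1 hi, map_zero]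
  obtain ⟨σ, hσ⟩ := Module.projective_lifting_property φ LinearMap.id hsurj
  let π : (I →₀ 𝒜.A) →ₗ[𝒜.A] (I →₀ 𝒜.A) := LinearMap.id - σ ∘ₗ φ
  have hφσ : ∀ m, φ (σ m) = m := fun m => LinearMap.congr_fun hσ m
  have hπ : ∀ x, φ (π x) = 0 := by
    intro x
    simp only [π, LinearMap.sub_apply, LinearMap.id_apply, LinearMap.comp_apply, map_sub, hφσ,
      sub_self]
  have hππ : ∀ x, φ x = 0 → π x = x := by
    intro x hx
    simp [π, hx]
  have hstep : ∀ n x, (∀ i, x i ∈ Fil 𝒜 n) → ∀ i, π x i ∈ Fil 𝒜 (n + 1) := by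
    intro n x hx i
    rw [← Finsupp.sum_single x, Finsupp.sum, map_sum, Finsupp.finsetSum_apply]
    refine Submodule.sum_mem _ fun j _ => ?_
    rw [show Finsupp.single j (x j) = x j • Finsupp.single j (1 : 𝒜.A) by simp, map_smul,
      Finsupp.smul_apply, smul_eq_mul]
    exact Fil_mul (hx j) (J_Fil (hker _ (hπ _) i))
  have hinj : Function.Injective φ := by
    rw [← LinearMap.ker_eq_bot, LinearMap.ker_eq_bot']
    intro x hx
    have : ∀ n i, x i ∈ Fil 𝒜 n := by
      intro n
      induction n with
      | zero => exact fun i => Fil_zero _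
      | succ n ih => rw [← hππ x hx]; exact hstep n x ih
    ext i
    exact Fil_eq_zero fun n => this n i
  refine ⟨I, ⟨(LinearEquiv.ofBijective φ ⟨hinj, hsurj⟩).symm⟩, fun i => ?_⟩
  have h1 : φ (Finsupp.single i 1) = v i := by simp [φ]
  rw [Module.Basis.coe_ofRepr]
  change φ (Finsupp.single i 1) ∈ _
  rw [h1]
  exact hv i

lemma bdd_below (M : 𝒜.GMod) (hf : Module.Finite 𝒜.A M.M) :
    ∃ m : ℤ, ∀ j < m, ∀ x ∈ M.grading j, x = 0 := by
  have h1 : ∀ x : M.M, ∃ m : ℤ, ∀ j < m, ∀ a : 𝒜.A, pr M j (a • x) = 0 := by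
    refine hind M.grading ⟨0, by simp⟩ ?_ ?_
    · rintro x y ⟨m, hm⟩ ⟨m', hm'⟩
      refine ⟨min m m', fun j hj a => ?_⟩
      rw [smul_add, map_add, hm j (by omega), hm' j (by omega), add_zero]
    · intro i x hx
      exact ⟨i, fun j hj a => pr_smul_lt M hx hj a⟩
  obtain ⟨S, hS⟩ := hf
  choose m hm using h1
  obtain ⟨m0, hm0⟩ : ∃ m0, ∀ x ∈ S, m0 ≤ m x := by
    obtain ⟨m0, h⟩ := (S.image m).bddBelow
    exact ⟨m0, fun x hx => h (by simpa using ⟨x, hx, rfl⟩)⟩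
  have h2 : ∀ x : M.M, ∀ a : 𝒜.A, ∀ j < m0, pr M j (a • x) = 0 := by
    intro x
    have hx : x ∈ Submodule.span 𝒜.A (S : Set M.M) := by rw [hS]; trivial
    induction hx using Submodule.span_induction with
    | mem x hx => intro a j hj; exact hm x j (lt_of_lt_of_le hj (hm0 x hx)) a
    | zero => simp
    | add x y _ _ h h' => intro a j hj; rw [smul_add, map_add, h a j hj, h' a j hj, add_zero]
    | smul b x _ h => intro a j hj; rw [smul_smul]; exact h _ j hj
  refine ⟨m0, fun j hj x hx => ?_⟩
  have := h2 x 1 j hj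
  rwa [one_smul, pr, prj_same _ hx] at this

lemma pr_mem_span (M : 𝒜.GMod) {s : ℤ} {x : M.M}
    (hx : x ∈ Submodule.span 𝒜.A (M.grading s : Set M.M)) :
    ∀ j, pr M j x ∈ Submodule.span 𝒜.A (M.grading s : Set M.M) := by
  induction hx using Submodule.span_induction with
  | mem x hx =>
    intro j
    by_cases h : s = j
    · subst h; rw [pr, prj_same _ hx]; exact Submodule.subset_span hx
    · rw [pr, prj_ne _ hx h]; exact zero_mem _
  | zero => intro j; rw [map_zero]; exact zero_mem _
  | add x y _ _ h h' => intro j; rw [map_add]; exact add_mem (h j) (h' j)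
  | smul a x _ h =>
    refine hind 𝒜.grading (p := fun a => ∀ j, pr M j (a • x) ∈ _) ?_ ?_ ?_ a
    · intro j; rw [zero_smul, map_zero]; exact zero_mem _
    · intro a b h h' j; rw [add_smul, map_add]; exact add_mem (h j) (h' j)
    · intro i a ha j
      rw [pr_smul M (j := j - i) (by ring) ha]
      exact Submodule.smul_mem _ _ (h _)

lemma nak (M : 𝒜.GMod) (hf : Module.Finite 𝒜.A M.M) {s : ℤ}
    (h : ∀ x : M.M, ∃ q ∈ Submodule.span 𝒜.A (M.grading s : Set M.M),
      x - q ∈ 𝒜.jideal • (⊤ : Submodule 𝒜.A M.M)) : M.GenInDeg s := by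
  obtain ⟨m, hm⟩ := bdd_below M hf
  have key : ∀ n : ℕ, ∀ j < m + n, ∀ x ∈ M.grading j,
      x ∈ Submodule.span 𝒜.A (M.grading s : Set M.M) := by
    intro n
    induction n with
    | zero => intro j hj x hx; rw [hm j (by simpa using hj) x hx]; exact zero_mem _
    | succ n ih =>
      intro j hj x hx
      obtain ⟨q, hq, hw⟩ := h x
      have h1 : ∀ w ∈ 𝒜.jideal • (⊤ : Submodule 𝒜.A M.M),
          pr M j w ∈ Submodule.span 𝒜.A (M.grading s : Set M.M) := by
        intro w hw
        refine Submodule.smul_induction_on hw ?_ ?_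
        · intro a ha y _
          refine hind M.grading (p := fun y => pr M j (a • y) ∈ _) ?_ ?_ ?_ y
          · rw [smul_zero, map_zero]; exact zero_mem _
          · intro y z h h'; rw [smul_add, map_add]; exact add_mem h h'
          · intro k y hy
            rcases lt_trichotomy k j with hk | hk | hk
            · exact pr_mem_span M (Submodule.smul_mem _ _ (ih k (by push_cast at hj; omega) y hy)) j
            · subst hk
              have := pr_smul_of_mem M hy 0 a
              rw [mem_J.1 ha, zero_smul, Nat.cast_zero, zero_add] at this
              rw [this]; exact zero_mem _
            · rw [pr_smul_lt M hy hk]; exact zero_mem _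
        · intro y z h h'; rw [map_add]; exact add_mem h h'
      have h2 := add_mem (h1 _ hw) (pr_mem_span M hq j)
      rwa [← map_add, sub_add_cancel, pr, prj_same _ hx] at h2
  rw [GMod.GenInDeg, eq_top_iff]
  intro x _
  refine hind M.grading (p := fun x => x ∈ _) (zero_mem _) (fun _ _ => add_mem) ?_ x
  intro j x hx
  exact key (j - m + 1).toNat j (by omega) x hx

lemma J_inter (M : 𝒜.GMod) {s : ℤ} (hs : M.GenInDeg s) {w : M.M}
    (hw : w ∈ 𝒜.jideal • (⊤ : Submodule 𝒜.A M.M)) : pr M s w = 0 := by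
  refine Submodule.smul_induction_on hw ?_ ?_
  · intro a ha m _
    have ha := J_Fil ha
    have hm : m ∈ Submodule.span 𝒜.A (M.grading s : Set M.M) := by rw [hs]; trivial
    induction hm using Submodule.span_induction generalizing a with
    | mem m hm =>
      have := pr_smul_of_mem M hm 0 a
      rwa [Fil_prj Nat.one_pos ha, zero_smul, Nat.cast_zero, zero_add] at this
    | zero => simp
    | add x y _ _ h h' => rw [smul_add, map_add, h a ‹_› trivial ha, h' a ‹_› trivial ha, add_zero]
    | smul b x _ h =>
      rw [smul_smul]
      have := Fil_mul ha (Fil_zero b)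
      exact h _ (mem_J.2 (Fil_prj Nat.one_pos this)) trivial this
  · intro x y h h'; rw [map_add, h, h', add_zero]

lemma graded_of_gen {P' P : 𝒜.GMod} {s : ℤ} {S : Set P'.M} (hS : S ⊆ P'.grading s)
    (hS' : Submodule.span 𝒜.A S = ⊤) (g : P'.M →ₗ[𝒜.A] P.M) (hg : ∀ x ∈ S, g x ∈ P.grading s) :
    ∀ j, ∀ x ∈ P'.grading j, g x ∈ P.grading j := by
  have h1 : ∀ x j, pr P j (g x) = g (pr P' j x) := by
    intro x
    have hx : x ∈ Submodule.span 𝒜.A S := by rw [hS']; trivial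
    induction hx using Submodule.span_induction with
    | mem x hx =>
      intro j
      by_cases h : s = j
      · subst h; rw [pr, pr, prj_same _ (hS hx), prj_same _ (hg x hx)]
      · rw [pr, pr, prj_ne _ (hS hx) h, prj_ne _ (hg x hx) h, map_zero]
    | zero => simp
    | add x y _ _ h h' => intro j; simp only [map_add, h, h']
    | smul a x _ h =>
      refine hind 𝒜.grading (p := fun a => ∀ j, pr P j (g (a • x)) = g (pr P' j (a • x))) ?_ ?_ ?_ a
      · simp
      · intro a b h h' j; simp only [add_smul, map_add, h, h']
      · intro i a ha j
        rw [map_smul, pr_smul P (j := j - i) (by ring) ha, pr_smul P' (j := j - i) (by ring) ha, h,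
          map_smul]
  intro j x hx
  have := h1 x j
  rw [show pr P' j x = x from prj_same _ hx] at this
  rw [← this]
  exact prj_mem _ _ _

lemma lift_hom {P : 𝒜.GMod} {N : 𝒜.GMod} (p : GHom P N) {s : ℤ} {y : N.M} (hy : y ∈ N.grading s)
    (h : y ∈ LinearMap.range p.lin) : ∃ z ∈ P.grading s, p.lin z = y := by
  obtain ⟨z, rfl⟩ := h
  refine ⟨pr P s z, prj_mem _ _ _, ?_⟩
  rw [← pr_hom, pr, prj_same _ hy]

lemma lift_map {P' P N : 𝒜.GMod} (p' : GHom P' N) (p : GHom P N)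
    (hr : LinearMap.range p'.lin ≤ LinearMap.range p.lin) {s : ℤ} {I : Type}
    (b : Module.Basis I 𝒜.A P'.M) (hb : ∀ i, b i ∈ P'.grading s) :
    ∃ g : GHom P' P, ∀ x, p.lin (g.lin x) = p'.lin x := by
  have h1 : ∀ i, ∃ z ∈ P.grading s, p.lin z = p'.lin (b i) := fun i =>
    lift_hom p (p'.grad _ _ (hb i)) (hr ⟨_, rfl⟩)
  choose z hz hz' using h1
  refine ⟨⟨b.constr ℕ z, graded_of_gen (S := Set.range b) (s := s) ?_ b.span_eq _ ?_⟩, ?_⟩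
  · rintro _ ⟨i, rfl⟩; exact hb i
  · rintro _ ⟨i, rfl⟩; rw [Module.Basis.constr_basis]; exact hz i
  · have : p.lin ∘ₗ (b.constr ℕ z) = p'.lin := b.ext fun i => by simp [hz']
    exact fun x => LinearMap.congr_fun this x

lemma lift_unique {P' N : 𝒜.GMod} (p' : GHom P' N) {s : ℤ} (hs : P'.GenInDeg s)
    (hk : LinearMap.ker p'.lin ≤ 𝒜.jideal • (⊤ : Submodule 𝒜.A P'.M)) (g : P'.M →ₗ[𝒜.A] P'.M)
    (hg : ∀ x ∈ P'.grading s, g x ∈ P'.grading s) (hp : ∀ x, p'.lin (g x) = p'.lin x) (x : P'.M) :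
    g x = x := by
  have hx : x ∈ Submodule.span 𝒜.A (P'.grading s : Set P'.M) := by rw [hs]; trivial
  induction hx using Submodule.span_induction with
  | mem x hx =>
    have h1 : g x - x ∈ LinearMap.ker p'.lin := by rw [LinearMap.mem_ker, map_sub, hp, sub_self]
    have h2 := J_inter P' hs (hk h1)
    rw [pr, prj_same _ (sub_mem (hg x hx) hx)] at h2
    exact sub_eq_zero.1 h2
  | zero => simp
  | add x y _ _ h h' => rw [map_add, h, h']
  | smul a x _ h => rw [map_smul, h]

lemma cmp (h0 : 𝒜.grading 0 = Submodule.span F {1}) {P' P N : 𝒜.GMod}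
    (p' : GHom P' N) (p : GHom P N)
    (hr : LinearMap.range p'.lin = LinearMap.range p.lin)
    (hk' : LinearMap.ker p'.lin ≤ 𝒜.jideal • (⊤ : Submodule 𝒜.A P'.M))
    (hk : LinearMap.ker p.lin ≤ 𝒜.jideal • (⊤ : Submodule 𝒜.A P.M))
    (hp' : Module.Projective 𝒜.A P'.M) (hp : Module.Projective 𝒜.A P.M)
    (hf : Module.Finite 𝒜.A P.M) {s : ℤ} (hs : P'.GenInDeg s) :
    P.GenInDeg s ∧ ∃ g : GHom P' P, Function.Bijective g.lin ∧
      ∀ x, p.lin (g.lin x) = p'.lin x := by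
  have hs' : P.GenInDeg s := by
    apply nak P hf
    have h1 : ∀ y : P'.M, ∃ q ∈ Submodule.span 𝒜.A (P.grading s : Set P.M),
        p.lin q = p'.lin y := by
      intro y
      have hy : y ∈ Submodule.span 𝒜.A (P'.grading s : Set P'.M) := by rw [hs]; trivial
      induction hy using Submodule.span_induction with
      | mem y hy =>
        obtain ⟨z, hz, hz'⟩ := lift_hom p (p'.grad _ _ hy) (hr ▸ ⟨_, rfl⟩)
        exact ⟨z, Submodule.subset_span hz, hz'⟩
      | zero => exact ⟨0, zero_mem _, by simp⟩
      | add x y _ _ h h' =>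
        obtain ⟨z, hz, h⟩ := h
        obtain ⟨w, hw, h'⟩ := h'
        exact ⟨z + w, add_mem hz hw, by rw [map_add, map_add, h, h']⟩
      | smul a x _ h =>
        obtain ⟨z, hz, h⟩ := h
        exact ⟨a • z, Submodule.smul_mem _ _ hz, by rw [map_smul, map_smul, h]⟩
    intro x
    obtain ⟨y, hy⟩ : p.lin x ∈ LinearMap.range p'.lin := hr ▸ ⟨x, rfl⟩
    obtain ⟨q, hq, hq'⟩ := h1 y
    exact ⟨q, hq, hk (by rw [LinearMap.mem_ker, map_sub, hq', hy, sub_self])⟩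
  refine ⟨hs', ?_⟩
  obtain ⟨I', b', hb'⟩ := free_basis h0 P' hp' hs
  obtain ⟨I, b, hb⟩ := free_basis h0 P hp hs'
  obtain ⟨g, hg⟩ := lift_map p' p hr.le b' hb'
  obtain ⟨h, hh⟩ := lift_map p p' hr.ge b hb
  have e1 := lift_unique p' hs hk' (h.lin ∘ₗ g.lin) (fun x hx => h.grad _ _ (g.grad _ _ hx))
    (fun x => by simp [hh, hg])
  have e2 := lift_unique p hs' hk (g.lin ∘ₗ h.lin) (fun x hx => g.grad _ _ (h.grad _ _ hx))
    (fun x => by simp [hh, hg])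
  exact ⟨g, Function.bijective_iff_has_inverse.2 ⟨h.lin, e1, e2⟩, hg⟩

/-- Every minimal resolution has the same generating degrees. -/
lemma genInDeg_all (h0 : 𝒜.grading 0 = Submodule.span F {1}) {T : 𝒜.GMod} (R' R : MinRes T)
    {s : ℕ → ℤ} (hs : ∀ n, (R'.P n).GenInDeg (s n)) :
    ∀ n, (R.P n).GenInDeg (s n) ∧ ∃ g : GHom (R'.P n) (R.P n), Function.Bijective g.lin ∧
      Submodule.map g.lin (LinearMap.range (R'.d n).lin) = LinearMap.range (R.d n).lin := by
  have aux : ∀ {P' P N : 𝒜.GMod} (p' : GHom P' N) (p : GHom P N) (g : GHom P' P),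
      Function.Bijective g.lin → (∀ x, p.lin (g.lin x) = p'.lin x) →
      Submodule.map g.lin (LinearMap.ker p'.lin) = LinearMap.ker p.lin := by
    intro P' P N p' p g hg h
    ext y
    obtain ⟨x, rfl⟩ := hg.2 y
    simp only [Submodule.mem_map, LinearMap.mem_ker, h]
    constructor
    · rintro ⟨z, hz, hz'⟩; rw [← hg.1 hz']; exact hz
    · intro hx; exact ⟨x, hx, rfl⟩
  intro n
  induction n with
  | zero =>
    obtain ⟨h1, g, hg, hg'⟩ := cmp h0 R'.aug R.aug
      (by rw [LinearMap.range_eq_top.2 R'.aug_surj, LinearMap.range_eq_top.2 R.aug_surj])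
      (by rw [← R'.exact_aug]; exact R'.minimal 0) (by rw [← R.exact_aug]; exact R.minimal 0)
      (R'.projective 0) (R.projective 0) (R.fg 0) (hs 0)
    refine ⟨h1, g, hg, ?_⟩
    rw [R'.exact_aug, R.exact_aug]
    exact aux _ _ g hg hg'
  | succ n ih =>
    obtain ⟨_, g, hg, hg'⟩ := ih
    let p' : GHom (R'.P (n + 1)) (R.P n) :=
      ⟨g.lin ∘ₗ (R'.d n).lin, fun j x hx => g.grad _ _ ((R'.d n).grad _ _ hx)⟩
    have hker : LinearMap.ker p'.lin = LinearMap.ker (R'.d n).lin :=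
      LinearMap.ker_comp_of_ker_eq_bot _ (LinearMap.ker_eq_bot.2 hg.1)
    obtain ⟨h1, g1, hg1, hg1'⟩ := cmp h0 p' (R.d n)
      (by rw [← hg']; exact LinearMap.range_comp _ _)
      (by rw [hker, ← R'.exact]; exact R'.minimal _) (by rw [← R.exact]; exact R.minimal _)
      (R'.projective _) (R.projective _) (R.fg _) (hs _)
    refine ⟨h1, g1, hg1, ?_⟩
    rw [R'.exact, R.exact, ← hker]
    exact aux _ _ g1 hg1 hg1'

end Mods
end PKA


namespace PKA
open GradedAlg
section Setup
variable {F : Type} [Field F] {𝒜 : GradedAlg F}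

lemma repr_pr {M : 𝒜.GMod} {s : ℤ} {I : Type} (b : Module.Basis I 𝒜.A M.M)
    (hb : ∀ i, b i ∈ M.grading s) (k : ℕ) (m : M.M) (i : I) :
    b.repr (pr M (k + s) m) i = prj 𝒜.grading k (b.repr m i) := by
  have key : ∀ f : I →₀ 𝒜.A, b.repr (pr M (k + s) (b.repr.symm f)) i =
      prj 𝒜.grading k (f i) := by
    intro f
    induction f using Finsupp.induction_linear with
    | zero => simp
    | add f g hf hg => simp only [map_add, Finsupp.add_apply, hf, hg]
    | single j a =>
      classical
      rw [Module.Basis.repr_symm_single, pr_smul_of_mem M (hb j), map_smul, Module.Basis.repr_self,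
        Finsupp.smul_apply, Finsupp.single_apply, Finsupp.single_apply]
      split_ifs <;> simp
  simpa using key (b.repr m)

lemma repr_mem {M : 𝒜.GMod} {s : ℤ} {I : Type} (b : Module.Basis I 𝒜.A M.M)
    (hb : ∀ i, b i ∈ M.grading s) {k : ℕ} {m : M.M} (hm : m ∈ M.grading (k + s)) (i : I) :
    b.repr m i ∈ 𝒜.grading k := by
  rw [← prj_same _ hm]
  change b.repr (pr M (k + s) m) i ∈ _
  rw [repr_pr b hb]
  exact prj_mem _ _ _

lemma eq_zero_of_lt {M : 𝒜.GMod} {s : ℤ} {I : Type} (b : Module.Basis I 𝒜.A M.M)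
    (hb : ∀ i, b i ∈ M.grading s) {N : ℤ} (hN : N < s) {m : M.M} (hm : m ∈ M.grading N) :
    m = 0 := by
  have key : ∀ f : I →₀ 𝒜.A, pr M N (b.repr.symm f) = 0 := by
    intro f
    induction f using Finsupp.induction_linear with
    | zero => simp
    | add f g hf hg => simp only [map_add, hf, hg, add_zero]
    | single j a => rw [Module.Basis.repr_symm_single, pr_smul_lt M (hb j) hN]
  have := key (b.repr m)
  rwa [LinearEquiv.symm_apply_apply, pr, prj_same _ hm] at this

lemma J_repr {M : 𝒜.GMod} {I : Type} (b : Module.Basis I 𝒜.A M.M) {m : M.M}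
    (hm : m ∈ 𝒜.jideal • (⊤ : Submodule 𝒜.A M.M)) (i : I) : b.repr m i ∈ 𝒜.jideal := by
  refine Submodule.smul_induction_on hm ?_ ?_
  · intro a ha m _
    rw [map_smul, Finsupp.smul_apply, smul_eq_mul]
    have h1 : a * b.repr m i ∈ Fil 𝒜 (1 + 0) := Fil_mul (J_Fil ha) (Fil_zero (b.repr m i))
    exact mem_J.2 (Fil_prj Nat.one_pos h1)
  · intro x y h h'
    rw [map_add, Finsupp.add_apply]; exact add_mem h h'

lemma smul_one_J [Nontrivial 𝒜.A] {r : F} (h : r • (1 : 𝒜.A) ∈ 𝒜.jideal) : r = 0 := by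
  rw [mem_J, map_smul, prj_same _ SetLike.GradedOne.one_mem] at h
  exact (smul_eq_zero.1 h).resolve_right one_ne_zero

lemma scal (h0 : 𝒜.grading 0 = Submodule.span F {1}) (a : 𝒜.A) :
    ∃ r : F, a - r • 1 ∈ 𝒜.jideal := by
  have := prj_mem 𝒜.grading 0 a
  rw [h0, Submodule.mem_span_singleton] at this
  obtain ⟨r, hr⟩ := this
  refine ⟨r, mem_J.2 ?_⟩
  rw [map_sub, map_smul, prj_same _ SetLike.GradedOne.one_mem, hr, sub_self]

lemma T_facts (h0 : 𝒜.grading 0 = Submodule.span F {1}) [Nontrivial 𝒜.A] {T : 𝒜.GMod}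
    (hT : IsTrivialGMod T) : ∃ t : T.M, t ≠ 0 ∧ (∀ x, ∃ r : F, x = r • t) ∧
      ∀ a ∈ 𝒜.jideal, ∀ x : T.M, a • x = 0 := by
  obtain ⟨e⟩ := hT.2
  let t : T.M := e.symm (Submodule.Quotient.mk 1)
  have hJ : ∀ a ∈ 𝒜.jideal, a • t = 0 := by
    intro a ha
    rw [← map_smul, ← Submodule.Quotient.mk_smul, smul_eq_mul, mul_one,
      (Submodule.Quotient.mk_eq_zero _).2 ha, map_zero]
  have hs : ∀ x, ∃ r : F, x = r • t := by
    intro x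
    obtain ⟨a, ha⟩ := Submodule.Quotient.mk_surjective _ (e x)
    have hx : x = a • t := by
      rw [← map_smul, ← Submodule.Quotient.mk_smul, smul_eq_mul, mul_one, ha, e.symm_apply_apply]
    obtain ⟨r, hr⟩ := scal h0 a
    refine ⟨r, ?_⟩
    have := hJ _ hr
    rw [sub_smul, smul_assoc, one_smul, sub_eq_zero] at this
    rw [hx, this]
  refine ⟨t, ?_, hs, ?_⟩
  · intro ht
    have h1 : (Submodule.Quotient.mk 1 : 𝒜.A ⧸ 𝒜.jideal) = 0 := by
      apply e.symm.injective; rw [map_zero]; exact ht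
    rw [Submodule.Quotient.mk_eq_zero] at h1
    exact one_ne_zero (smul_one_J (𝒜 := 𝒜) (r := (1 : F)) (by simpa using h1))
  · intro a ha x
    obtain ⟨r, rfl⟩ := hs x
    rw [smul_comm, hJ a ha, smul_zero]

lemma unique_zero (h0 : 𝒜.grading 0 = Submodule.span F {1}) [Nontrivial 𝒜.A] {T : 𝒜.GMod}
    (hT : IsTrivialGMod T) (R : MinRes T) {I : Type} (b : Module.Basis I 𝒜.A (R.P 0).M) :
    Nonempty (Unique I) := by
  classical
  obtain ⟨t, ht, hs, hJ⟩ := T_facts h0 hT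
  have hker : ∀ m, R.aug.lin m = 0 → ∀ i, b.repr m i ∈ 𝒜.jideal := by
    intro m hm i
    refine J_repr b (R.minimal 0 ?_) i
    rw [R.exact_aug]; exact hm
  choose r hr using fun i => hs (R.aug.lin (b i))
  have hr0 : ∀ i, r i ≠ 0 := by
    intro i hi
    have := hker (b i) (by rw [hr, hi, zero_smul]) i
    rw [Module.Basis.repr_self, Finsupp.single_eq_same] at this
    exact one_ne_zero (smul_one_J (𝒜 := 𝒜) (r := (1 : F)) (by simpa using this))
  have hne : Nonempty I := by
    by_contra h
    rw [not_nonempty_iff] at h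
    obtain ⟨m, hm⟩ := R.aug_surj t
    apply ht
    rw [← hm, ← b.linearCombination_repr m, Subsingleton.elim (b.repr m) 0]
    simp
  refine ⟨⟨⟨hne.some⟩, fun i => ?_⟩⟩
  by_contra hij
  set j := hne.some
  have h1 := hker (r j • b i - r i • b j) (by
    rw [map_sub, LinearMap.map_smul_of_tower, LinearMap.map_smul_of_tower, hr, hr, smul_smul,
      smul_smul, mul_comm, sub_self]) i
  have h2 : b.repr (r j • b i - r i • b j) i = r j • (1 : 𝒜.A) := by
    rw [← one_smul 𝒜.A (b i), ← one_smul 𝒜.A (b j), ← smul_assoc, ← smul_assoc, map_sub, map_smul,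
      map_smul]
    change i ≠ j at hij
    simp [Ne.symm hij]
  rw [h2] at h1
  exact hr0 j (smul_one_J h1)

/-- Cohomological degree on the extended alphabet. -/
def dp {X : Type} (deg : X → ℕ) : Option X → ℕ
  | none => 0
  | some x => deg x + 1

lemma exists_setup (h0 : 𝒜.grading 0 = Submodule.span F {1}) [Nontrivial 𝒜.A] {T : 𝒜.GMod}
    (hT : IsTrivialGMod T) (R : MinRes T) (w : ℕ → ℕ) (hw : ∀ n, (R.P n).GenInDeg (w n : ℤ)) :
    ∃ (X : Type) (deg : X → ℕ) (B : ∀ n, Module.Basis {y : Option X // dp deg y = n} 𝒜.A (R.P n).M),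
      ∀ n y, B n y ∈ (R.P n).grading (w n) := by
  choose I b hb using fun n => free_basis h0 (R.P n) (R.projective n) (hw n)
  obtain ⟨u⟩ := unique_zero h0 hT R (b 0)
  let X := Σ n, I (n + 1)
  let deg : X → ℕ := fun x => x.1
  have hex : ∀ n, Nonempty (I n ≃ {y : Option X // dp deg y = n}) := by
    intro n
    rcases n with _ | n
    · refine ⟨⟨fun _ => ⟨none, rfl⟩, fun _ => default, fun i => Subsingleton.elim _ _, ?_⟩⟩
      rintro ⟨_ | x, hx⟩
      · rfl
      · exact absurd hx (Nat.succ_ne_zero _)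
    · refine ⟨Equiv.ofBijective (fun i => ⟨some ⟨n, i⟩, rfl⟩) ⟨?_, ?_⟩⟩
      · intro i j h
        have h1 : (some ⟨n, i⟩ : Option X) = some ⟨n, j⟩ := congrArg Subtype.val h
        exact eq_of_heq (Sigma.mk.inj (Option.some.inj h1)).2
      · rintro ⟨_ | ⟨k, i⟩, hx⟩
        · exact absurd hx.symm (Nat.succ_ne_zero _)
        · obtain rfl : k = n := by simpa [dp, deg] using hx
          exact ⟨i, rfl⟩
  let e := fun n => (hex n).some
  refine ⟨X, deg, fun n => (b n).reindex (e n), fun n y => ?_⟩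
  rw [Module.Basis.reindex_apply]
  exact hb n _

end Setup
end PKA


namespace PKA
open GradedAlg

/-- A minimal resolution together with homogeneous bases. -/
structure Dat {F : Type} [Field F] {𝒜 : GradedAlg F} {T : 𝒜.GMod} (R : MinRes T) where
  X : Type
  deg : X → ℕ
  w : ℕ → ℕ
  B : ∀ n, Module.Basis {y : Option X // dp deg y = n} 𝒜.A (R.P n).M
  hB : ∀ n y, B n y ∈ (R.P n).grading (w n)
  w0 : w 0 = 0
  wmono : StrictMono w
  h0 : 𝒜.grading 0 = Submodule.span F {1}
  nontriv : Nontrivial 𝒜.A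
  hT : IsTrivialGMod T

namespace Dat
variable {F : Type} [Field F] {𝒜 : GradedAlg F} {T : 𝒜.GMod} {R : MinRes T} (Q : Dat R)

/-- The extended alphabet. -/
abbrev Y := Option Q.X

abbrev dg : Q.Y → ℕ := dp Q.deg

/-- Inclusion of a term of the resolution into the total module. -/
def inc (n : ℕ) : (R.P n).M →ₗ[𝒜.A] (Q.Y →₀ 𝒜.A) :=
  (Q.B n).constr ℕ (fun y => Finsupp.single y.1 1)

open Classical in
/-- Projection of the total module onto a term of the resolution. -/
def pj (n : ℕ) : (Q.Y →₀ 𝒜.A) →ₗ[𝒜.A] (R.P n).M :=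
  Finsupp.linearCombination 𝒜.A (fun y => if h : Q.dg y = n then Q.B n ⟨y, h⟩ else 0)

/-- Total differential on basis elements. -/
def dplus : Q.Y → (Q.Y →₀ 𝒜.A)
  | none => 0
  | some x => Q.inc (Q.deg x) ((R.d (Q.deg x)).lin (Q.B (Q.deg x + 1) ⟨some x, rfl⟩))

/-- Total differential. -/
def Dp : (Q.Y →₀ 𝒜.A) →ₗ[𝒜.A] (Q.Y →₀ 𝒜.A) := Finsupp.linearCombination 𝒜.A Q.dplus

lemma inc_B (n : ℕ) (y) : Q.inc n (Q.B n y) = Finsupp.single y.1 1 := by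
  rw [inc, Module.Basis.constr_basis]

lemma Dp_single (y : Q.Y) : Q.Dp (Finsupp.single y 1) = Q.dplus y := by
  rw [Dp, Finsupp.linearCombination_single, one_smul]

lemma pj_single (n : ℕ) (y : Q.Y) (h : Q.dg y = n) :
    Q.pj n (Finsupp.single y 1) = Q.B n ⟨y, h⟩ := by
  rw [pj, Finsupp.linearCombination_single, one_smul, dif_pos h]

lemma pj_single_ne (n : ℕ) (y : Q.Y) (h : Q.dg y ≠ n) :
    Q.pj n (Finsupp.single y 1) = 0 := by
  rw [pj, Finsupp.linearCombination_single, one_smul, dif_neg h]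

lemma lext {N : Type} [AddCommGroup N] [Module 𝒜.A N] {Z : Type} {f g : (Z →₀ 𝒜.A) →ₗ[𝒜.A] N}
    (h : ∀ y, f (Finsupp.single y 1) = g (Finsupp.single y 1)) (p) : f p = g p := by
  have : f = g := Finsupp.lhom_ext' fun y => LinearMap.ext_ring (h y)
  rw [this]

lemma pj_inc (n : ℕ) (m : (R.P n).M) : Q.pj n (Q.inc n m) = m := by
  have : Q.pj n ∘ₗ Q.inc n = LinearMap.id := (Q.B n).ext fun y => by
    rw [LinearMap.comp_apply, inc_B, pj_single _ _ _ y.2]; rfl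
  exact LinearMap.congr_fun this m

lemma pj_inc_ne {n k : ℕ} (h : n ≠ k) (m : (R.P n).M) : Q.pj k (Q.inc n m) = 0 := by
  have : Q.pj k ∘ₗ Q.inc n = 0 := (Q.B n).ext fun y => by
    rw [LinearMap.comp_apply, inc_B, pj_single_ne _ _ _ (by rw [show Q.dg y.1 = n from y.2]; exact h)]; rfl
  exact LinearMap.congr_fun this m

lemma pj_Dp (k : ℕ) (p : Q.Y →₀ 𝒜.A) : Q.pj k (Q.Dp p) = (R.d k).lin (Q.pj (k + 1) p) := by
  refine lext (f := Q.pj k ∘ₗ Q.Dp) (g := (R.d k).lin ∘ₗ Q.pj (k + 1)) ?_ p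
  intro y
  rw [LinearMap.comp_apply, LinearMap.comp_apply, Dp_single]
  rcases y with _ | x
  · rw [pj_single_ne _ (k + 1) none (show Q.dg none ≠ k + 1 from (Nat.succ_ne_zero k).symm), dplus,
      map_zero, map_zero]
  · by_cases h : Q.deg x = k
    · subst h
      rw [dplus, pj_inc, pj_single _ (Q.deg x + 1) (some x) rfl]
    · rw [dplus, pj_inc_ne _ h, pj_single_ne, map_zero]
      intro h'; exact h (Nat.succ.inj h')

lemma Dp_inc (n : ℕ) (m : (R.P (n + 1)).M) : Q.Dp (Q.inc (n + 1) m) = Q.inc n ((R.d n).lin m) := by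
  have : Q.Dp ∘ₗ Q.inc (n + 1) = Q.inc n ∘ₗ (R.d n).lin := (Q.B (n + 1)).ext fun y => by
    rw [LinearMap.comp_apply, inc_B, Dp_single]
    obtain ⟨_ | x, hx⟩ := y
    · exact absurd hx.symm (Nat.succ_ne_zero _)
    · obtain rfl : Q.deg x = n := Nat.succ.inj hx
      rfl
  exact LinearMap.congr_fun this m

lemma Dp_inc_zero (m : (R.P 0).M) : Q.Dp (Q.inc 0 m) = 0 := by
  have : Q.Dp ∘ₗ Q.inc 0 = 0 := (Q.B 0).ext fun y => by
    rw [LinearMap.comp_apply, inc_B, Dp_single]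
    obtain ⟨_ | x, hx⟩ := y
    · rfl
    · exact absurd hx (Nat.succ_ne_zero _)
  exact LinearMap.congr_fun this m

lemma dd_zero (n : ℕ) (m) : (R.d n).lin ((R.d (n + 1)).lin m) = 0 := by
  have : (R.d (n + 1)).lin m ∈ LinearMap.ker (R.d n).lin := by rw [← R.exact]; exact ⟨m, rfl⟩
  exact this

lemma Dp_Dp (p : Q.Y →₀ 𝒜.A) : Q.Dp (Q.Dp p) = 0 := by
  refine lext (f := Q.Dp ∘ₗ Q.Dp) (g := 0) ?_ p
  intro y
  rw [LinearMap.comp_apply, Dp_single]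
  rcases y with _ | x
  · rw [dplus, map_zero]; rfl
  · rw [dplus]
    generalize Q.B (Q.deg x + 1) ⟨some x, rfl⟩ = m
    revert m
    generalize Q.deg x = n
    intro m
    rcases n with _ | n
    · exact Q.Dp_inc_zero _
    · rw [Dp_inc, dd_zero, map_zero]; rfl

lemma inc_pj_single {n : ℕ} {y : Q.Y} (h : Q.dg y = n) (r : 𝒜.A) :
    Q.inc n (Q.pj n (Finsupp.single y r)) = Finsupp.single y r := by
  rw [show Finsupp.single y r = r • Finsupp.single y (1 : 𝒜.A) by simp, map_smul, map_smul,
    pj_single _ _ _ h, inc_B]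

/-- Weights of the extended letters. -/
abbrev wp : Q.Y → ℕ := fun y => Q.w (Q.dg y)

/-- Weights of the letters. -/
abbrev wt : Q.X → ℕ := fun x => Q.w (Q.deg x + 1)

/-- The bigraded pieces of the total module. -/
abbrev PY (N j : ℕ) : Submodule F (Q.Y →₀ 𝒜.A) := PP 𝒜.grading Q.dg Q.wp N j
/-- The bigraded pieces of the reduced total module. -/
abbrev PX (N j : ℕ) : Submodule F (Q.X →₀ 𝒜.A) := PP 𝒜.grading Q.deg Q.wt N j

lemma inc_eq (n : ℕ) (m : (R.P n).M) :
    Q.inc n m = ((Q.B n).repr m).sum (fun y r => Finsupp.single y.1 r) := by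
  rw [inc, Module.Basis.constr_apply]
  simp

lemma inc_mem {n N : ℕ} {m : (R.P n).M} (hm : m ∈ (R.P n).grading N) : Q.inc n m ∈ Q.PY N n := by
  by_cases h : N < Q.w n
  · rw [eq_zero_of_lt (Q.B n) (Q.hB n) (by exact_mod_cast h) hm, map_zero]; exact zero_mem _
  · obtain ⟨k, rfl⟩ : ∃ k, N = k + Q.w n := ⟨N - Q.w n, by omega⟩
    rw [inc_eq]
    refine Submodule.sum_mem _ fun y _ => ?_
    refine single_mem_PP y.2 (repr_mem (Q.B n) (Q.hB n) (by exact_mod_cast hm) y) ?_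
    rw [wp, show Q.dg y.1 = n from y.2]

lemma pj_mem {n N : ℕ} {p : Q.Y →₀ 𝒜.A} (hp : p ∈ Q.PY N n) :
    Q.pj n p ∈ (R.P n).grading N ∧ Q.inc n (Q.pj n p) = p := by
  induction hp using Submodule.span_induction with
  | mem p hp =>
    obtain ⟨y, r, i, h1, h2, h3, rfl⟩ := hp
    refine ⟨?_, Q.inc_pj_single h1 r⟩
    rw [show Finsupp.single y r = r • Finsupp.single y (1 : 𝒜.A) by simp, map_smul,
      pj_single _ _ _ h1]
    have := (R.P n).smul_mem h2 (Q.hB n ⟨y, h1⟩)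
    rw [wp, h1] at h3
    rw [← h3]
    exact_mod_cast this
  | zero => simp
  | add p q _ _ h h' =>
    rw [map_add, map_add]
    exact ⟨add_mem h.1 h'.1, by rw [h.2, h'.2]⟩
  | smul r p _ h =>
    rw [LinearMap.map_smul_of_tower, LinearMap.map_smul_of_tower]
    exact ⟨Submodule.smul_mem _ _ h.1, by rw [h.2]⟩

/-- Extension by zero. -/
def ms : (Q.X →₀ 𝒜.A) →ₗ[𝒜.A] (Q.Y →₀ 𝒜.A) := Finsupp.lmapDomain 𝒜.A 𝒜.A some

/-- Restriction. -/
def cs : (Q.Y →₀ 𝒜.A) →ₗ[𝒜.A] (Q.X →₀ 𝒜.A) :=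
  Finsupp.lcomapDomain some (Option.some_injective _)

lemma cs_apply (q : Q.Y →₀ 𝒜.A) (x : Q.X) : Q.cs q x = q (some x) := rfl

lemma ms_single (x : Q.X) (r : 𝒜.A) : Q.ms (Finsupp.single x r) = Finsupp.single (some x) r := by
  simp [ms]

lemma ms_some (p : Q.X →₀ 𝒜.A) (x : Q.X) : Q.ms p (some x) = p x :=
  Finsupp.mapDomain_apply (Option.some_injective _) _ _

lemma ms_none (p : Q.X →₀ 𝒜.A) : Q.ms p none = 0 :=
  Finsupp.mapDomain_of_notMem_range _ _ (by simp)

lemma ms_cs (q : Q.Y →₀ 𝒜.A) : q = Q.ms (Q.cs q) + Finsupp.single none (q none) := by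
  ext y
  rcases y with _ | x
  · simp [ms_none]
  · simp [ms_some, cs_apply]

lemma cs_single (x : Q.X) (r : 𝒜.A) : Q.cs (Finsupp.single (some x) r) = Finsupp.single x r := by
  classical
  ext z
  simp [cs_apply, Finsupp.single_apply]

lemma cs_none (r : 𝒜.A) : Q.cs (Finsupp.single none r) = 0 := by
  ext z
  simp [cs_apply]

lemma ms_mem {N j : ℕ} {p : Q.X →₀ 𝒜.A} (hp : p ∈ Q.PX N j) : Q.ms p ∈ Q.PY N (j + 1) := by
  induction hp using Submodule.span_induction with
  | mem p hp =>
    obtain ⟨x, r, i, h1, h2, h3, rfl⟩ := hp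
    rw [ms_single]
    exact single_mem_PP (by simp [dp, h1]) h2 h3
  | zero => rw [map_zero]; exact zero_mem _
  | add p q _ _ h h' => rw [map_add]; exact add_mem h h'
  | smul r p _ h => rw [LinearMap.map_smul_of_tower]; exact Submodule.smul_mem _ _ h

lemma cs_mem {N j : ℕ} {q : Q.Y →₀ 𝒜.A} (hq : q ∈ Q.PY N j) :
    Q.cs q ∈ Q.PX N (j - 1) ∧ (j = 0 → Q.cs q = 0) ∧ q none ∈ 𝒜.grading N ∧
      (j ≠ 0 → q none = 0) := by
  induction hq using Submodule.span_induction with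
  | mem q hq =>
    obtain ⟨y, r, i, h1, h2, h3, rfl⟩ := hq
    rcases y with _ | x
    · rw [cs_none]
      have h1 : 0 = j := h1
      refine ⟨zero_mem _, fun _ => rfl, ?_, fun h => absurd h1.symm h⟩
      have h3 : i + Q.w 0 = N := h3
      rw [Finsupp.single_eq_same, ← h3, Q.w0]; exact h2
    · rw [cs_single]
      have h1 : Q.deg x + 1 = j := h1
      refine ⟨single_mem_PP (by omega) h2 h3, fun h => by omega, ?_, ?_⟩ <;> simp
  | zero => simp
  | add p q _ _ h h' =>
    rw [map_add, Finsupp.add_apply]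
    exact ⟨add_mem h.1 h'.1, fun e => by rw [h.2.1 e, h'.2.1 e, add_zero], add_mem h.2.2.1 h'.2.2.1,
      fun e => by rw [h.2.2.2 e, h'.2.2.2 e, add_zero]⟩
  | smul r p _ h =>
    rw [LinearMap.map_smul_of_tower, Finsupp.smul_apply]
    exact ⟨Submodule.smul_mem _ _ h.1, fun e => by rw [h.2.1 e, smul_zero],
      Submodule.smul_mem _ _ h.2.2.1, fun e => by rw [h.2.2.2 e, smul_zero]⟩

/-- The reduced differential. -/
def D : (Q.X →₀ 𝒜.A) →ₗ[𝒜.A] (Q.X →₀ 𝒜.A) := Q.cs ∘ₗ Q.Dp ∘ₗ Q.ms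

/-- The augmentation coefficients. -/
def a (x : Q.X) : 𝒜.A := - Q.dplus (some x) none

lemma D_single (x : Q.X) : Q.D (Finsupp.single x 1) = Q.cs (Q.dplus (some x)) := by
  rw [D, LinearMap.comp_apply, LinearMap.comp_apply, ms_single, Dp_single]

lemma Dp_ms (p : Q.X →₀ 𝒜.A) : Q.Dp (Q.ms p) =
    Q.ms (Q.D p) - Finsupp.single none (Finsupp.linearCombination 𝒜.A Q.a p) := by
  have h : Q.Dp (Q.ms p) none = - Finsupp.linearCombination 𝒜.A Q.a p := by
    refine lext (f := Finsupp.lapply none ∘ₗ Q.Dp ∘ₗ Q.ms)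
      (g := - Finsupp.linearCombination 𝒜.A Q.a) ?_ p
    intro x
    simp [ms_single, Dp_single, a]
  conv_lhs => rw [Q.ms_cs (Q.Dp (Q.ms p)), h]
  rw [Finsupp.single_neg, ← sub_eq_add_neg]; rfl

lemma dplus_mem (x : Q.X) : Q.dplus (some x) ∈ Q.PY (Q.wt x) (Q.deg x) := by
  refine Q.inc_mem ((R.d _).grad _ _ ?_)
  exact Q.hB _ _

lemma ms_eq_single {p : Q.X →₀ 𝒜.A} {r : 𝒜.A} (h : Q.ms p = Finsupp.single none r) :
    p = 0 ∧ r = 0 := by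
  have hr : r = 0 := by
    have := congrArg (fun q => q none) h
    simpa [ms_none] using this.symm
  refine ⟨?_, hr⟩
  ext x
  have := congrArg (fun q => q (some x)) h
  simpa [ms_some] using this

lemma eD_DD (p : Q.X →₀ 𝒜.A) : Q.D (Q.D p) = 0 ∧ Finsupp.linearCombination 𝒜.A Q.a (Q.D p) = 0 := by
  apply Q.ms_eq_single
  have h := Q.Dp_Dp (Q.ms p)
  rw [Dp_ms, map_sub, Dp_ms] at h
  have h2 : ∀ r, Q.Dp (Finsupp.single none r) = 0 := by
    intro r
    rw [Dp, Finsupp.linearCombination_single, dplus, smul_zero]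
  rw [h2, sub_zero, sub_eq_zero] at h
  exact h

/-- The distinguished generator of the trivial module. -/
def e0 : (R.P 0).M := Q.B 0 ⟨none, rfl⟩
/-- The distinguished generator of the trivial module. -/
def t0 : T.M := R.aug.lin Q.e0

lemma JT (Q : Dat R) {r : 𝒜.A} (hr : r ∈ 𝒜.jideal) (t : T.M) : r • t = 0 := by
  have := Q.nontriv
  obtain ⟨_, _, _, h⟩ := T_facts Q.h0 Q.hT
  exact h r hr t

lemma zero_case (m : (R.P 0).M) : ∃ r : 𝒜.A, m = r • Q.e0 := by
  refine ⟨(Q.B 0).repr m ⟨none, rfl⟩, ?_⟩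
  have : ∀ y : {y : Q.Y // Q.dg y = 0}, y = ⟨none, rfl⟩ := by
    rintro ⟨_ | x, hx⟩
    · rfl
    · exact absurd hx (Nat.succ_ne_zero _)
  apply (Q.B 0).repr.injective
  ext y
  rw [this y, map_smul, e0, Module.Basis.repr_self]
  simp

lemma t0_ne : Q.t0 ≠ 0 := by
  have := Q.nontriv
  obtain ⟨t, ht, _, _⟩ := T_facts Q.h0 Q.hT
  intro h
  obtain ⟨m, hm⟩ := R.aug_surj t
  obtain ⟨r, rfl⟩ := Q.zero_case m
  rw [map_smul] at hm
  change r • Q.t0 = t at hm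
  rw [h, smul_zero] at hm
  exact ht hm.symm

lemma t0_span (t : T.M) : ∃ r : F, t = r • Q.t0 := by
  obtain ⟨m, rfl⟩ := R.aug_surj t
  obtain ⟨a, rfl⟩ := Q.zero_case m
  obtain ⟨r, hr⟩ := scal Q.h0 a
  refine ⟨r, ?_⟩
  have := Q.JT hr Q.t0
  rw [sub_smul, smul_assoc, one_smul, sub_eq_zero] at this
  rw [map_smul]; exact this

lemma coreHyp : CoreHyp 𝒜.grading Q.deg Q.wt Q.D Q.a where
  zero_span := Q.h0
  nontriv := Q.nontriv
  wt_pos x := by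
    have := Q.wmono (Nat.succ_pos (Q.deg x))
    rw [Q.w0] at this; exact this
  hw x y h := Q.wmono (Nat.succ_lt_succ h)
  D_mem x := by rw [D_single]; exact (Q.cs_mem (Q.dplus_mem x)).1
  D_zero x hx := by rw [D_single]; exact (Q.cs_mem (Q.dplus_mem x)).2.1 hx
  a_mem x := neg_mem (Q.cs_mem (Q.dplus_mem x)).2.2.1
  a_zero x hx := by rw [a, (Q.cs_mem (Q.dplus_mem x)).2.2.2 hx, neg_zero]
  eD p := (Q.eD_DD p).2
  DD p := (Q.eD_DD p).1
  exact N j p hp h1 h2 := by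
    obtain ⟨h3, h4⟩ := Q.pj_mem (Q.ms_mem hp)
    have h5 : (R.d j).lin (Q.pj (j + 1) (Q.ms p)) = 0 := by
      rw [← pj_Dp, Dp_ms, h1, h2]; simp
    have h6 : Q.pj (j + 1) (Q.ms p) ∈ LinearMap.range (R.d (j + 1)).lin := by
      rw [R.exact]; exact h5
    obtain ⟨z, hz, hz'⟩ := lift_hom _ h3 h6
    have h7 := Q.inc_mem hz
    have h8 := Q.cs_mem h7
    refine ⟨Q.cs (Q.inc (j + 2) z), h8.1, ?_⟩
    have h9 : Q.ms (Q.cs (Q.inc (j + 2) z)) = Q.inc (j + 2) z := by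
      conv_rhs => rw [Q.ms_cs (Q.inc (j + 2) z), h8.2.2.2 (by omega)]
      simp
    have h10 := Q.Dp_ms (Q.cs (Q.inc (j + 2) z))
    rw [h9, Dp_inc, hz', h4] at h10
    have h11 : Q.ms (Q.D (Q.cs (Q.inc (j + 2) z)) - p) =
        Finsupp.single none (Finsupp.linearCombination 𝒜.A Q.a (Q.cs (Q.inc (j + 2) z))) := by
      rw [map_sub, h10, sub_sub_cancel]
    exact sub_eq_zero.1 (Q.ms_eq_single h11).1
  surj N r hN hr := by
    have h1 : r • Q.e0 ∈ LinearMap.range (R.d 0).lin := by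
      rw [R.exact_aug, LinearMap.mem_ker, map_smul]
      exact Q.JT (mem_J_of hN hr) _
    have h2 : r • Q.e0 ∈ (R.P 0).grading N := by
      have := (R.P 0).smul_mem hr (Q.hB 0 ⟨none, rfl⟩)
      rw [Q.w0] at this
      simpa [e0] using this
    obtain ⟨z, hz, hz'⟩ := lift_hom _ h2 h1
    have h8 := Q.cs_mem (Q.inc_mem hz)
    refine ⟨- Q.cs (Q.inc 1 z), neg_mem h8.1, ?_⟩
    have h9 : Q.ms (Q.cs (Q.inc 1 z)) = Q.inc 1 z := by
      conv_rhs => rw [Q.ms_cs (Q.inc 1 z), h8.2.2.2 (by omega)]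
      simp
    have h10 := Q.Dp_ms (Q.cs (Q.inc 1 z))
    rw [h9, Dp_inc, hz', map_smul, e0, inc_B] at h10
    have h11 := congrArg (fun q => q none) h10
    rw [map_neg]
    simp [ms_none] at h11
    rw [h11]

end Dat
end PKA


namespace PKA
open GradedAlg
open FreeAlgebra (ι)

/-- Resolution data together with a perturbed free differential. -/
structure Cor {F : Type} [Field F] {𝒜 : GradedAlg F} {T : 𝒜.GMod} {R : MinRes T} (Q : Dat R) where
  c : Q.X → FreeAlgebra F Q.X
  hom : Hom Q.deg Q.wt c
  hd : ∀ x, der (sg F Q.deg) c (c x) = 0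
  hphi : ∀ x, phi F Q.a (c x) = Q.D (Finsupp.single x 1)
  e : ℕ
  he : 0 < e
  hw : ∀ n, Q.w n = n + n / 3 * e

namespace Cor
variable {F : Type} [Field F] {𝒜 : GradedAlg F} {T : 𝒜.GMod} {R : MinRes T} {Q : Dat R} (C : Cor Q)

/-- The extended differential. -/
def ce : Q.Y → FreeAlgebra F Q.Y := cp (sg F Q.deg) C.c

lemma sp_eq : sp (sg F Q.deg) = fun y : Q.Y => (-1 : F) ^ (Q.dg y + 1) := by
  funext y
  rcases y with _ | x
  · simp [sp, dp]
  · simp [sp, dp, sg, pow_succ]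

lemma sum_dp (l : List Q.X) :
    ((l.map some).map Q.dg).sum = (l.map Q.deg).sum + l.length := by
  induction l with
  | nil => rfl
  | cons x l ih => simp only [List.map_cons, List.sum_cons, ih, dp, List.length_cons]; omega

lemma sum_wp (l : List Q.X) :
    ((l.map some).map Q.wp).sum = (l.map Q.wt).sum := by
  induction l with
  | nil => rfl
  | cons x l ih =>
    simp only [List.map_cons, List.sum_cons, ih]
    rfl

lemma span (y : Q.Y) : C.ce y ∈ Submodule.span F {u | ∃ l, Rel Q.dg Q.wp l y ∧ u = Wd F l} := by
  have hn : Q.dg none = 0 := rfl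
  have hwn : Q.wp none = 0 := Q.w0
  rcases y with _ | x
  · refine Submodule.subset_span ⟨[none, none], ⟨?_, ?_⟩, ?_⟩
    · simp [hn]
    · simp [hwn]
    · simp [ce, cp, Wd_cons]
  · rw [ce, cp]
    refine sub_mem (add_mem ?_ ?_) (Submodule.smul_mem _ _ ?_)
    · by_cases h : Q.deg x = 0
      · rw [(C.hom x).2 h, map_zero]; exact zero_mem _
      · have := (C.hom x).1
        generalize C.c x = t at this
        refine TT_ind (p := fun t => jj t ∈ Submodule.span F
          {u | ∃ l, Rel Q.dg Q.wp l (some x) ∧ u = Wd F l}) ?_ ?_ ?_ ?_ this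
        · rw [map_zero]; exact zero_mem _
        · intro t u h1 h2
          rw [map_add]; exact add_mem h1 h2
        · intro r t h1
          rw [map_smul]; exact Submodule.smul_mem _ _ h1
        · intro l h1 h2
          rw [jj_Wd]
          refine Submodule.subset_span ⟨_, ⟨?_, ?_⟩, rfl⟩
          · rw [sum_dp, List.length_map, h2]; simp only [dp]; omega
          · rw [sum_wp, h1]; rfl
    · refine Submodule.subset_span ⟨[none, some x], ⟨?_, ?_⟩, ?_⟩
      · simp [hn]; omega
      · simp [hwn]
      · simp [Wd_cons]
    · refine Submodule.subset_span ⟨[some x, none], ⟨?_, ?_⟩, ?_⟩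
      · simp [hn]; omega
      · simp [hwn]
      · simp [Wd_cons]

lemma sum_w (l : List Q.Y) :
    (l.map Q.wp).sum = (l.map Q.dg).sum + (l.map (fun y => Q.dg y / 3)).sum * C.e := by
  induction l with
  | nil => simp
  | cons y l ih => simp only [List.map_cons, List.sum_cons, ih, C.hw]; ring

lemma len (l : List Q.Y) (y : Q.Y) (h : Rel Q.dg Q.wp l y) : ∃ k, l.length = k * C.e + 2 := by
  obtain ⟨h1, h2⟩ := h
  rw [C.sum_w] at h2
  have h3 := C.hw (Q.dg y)
  change _ = Q.w (Q.dg y) at h2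
  rw [h3] at h2
  have he := C.he
  by_cases hK : (l.map (fun y => Q.dg y / 3)).sum ≤ Q.dg y / 3
  · obtain ⟨k, hk⟩ := Nat.exists_eq_add_of_le hK
    rw [hk, add_mul] at h2
    exact ⟨k, by omega⟩
  · exfalso
    push Not at hK
    obtain ⟨k, hk⟩ := Nat.exists_eq_add_of_lt hK
    rw [hk, add_mul, add_mul] at h2
    rcases l with _ | ⟨z, _ | ⟨z', l⟩⟩
    · simp at hK
    · simp at hK h1
      omega
    · simp only [List.length_cons] at h1
      have : 0 < 1 * C.e := by omega
      omega

lemma fin (n : ℕ) : {y : Q.Y | Q.dg y = n}.Finite := by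
  have := Q.nontriv
  have := R.fg n
  exact Module.Finite.finite_basis (Q.B n)

/-- The associated `A_∞` data. -/
def Z : ADat F Q.Y where
  degp := Q.dg
  wtp := Q.wp
  c := C.ce
  e := C.e
  span := C.span
  dd y := by
    rw [← sp_eq]
    exact der_cp _ _ (fun x => C.hom.sgm x) C.hd y
  fin := fin
  len := C.len

lemma pim_c (x : Q.X) : pim Q.a (C.c x) = 0 := by
  rcases Nat.eq_zero_or_pos (Q.deg x) with h | h
  · rw [(C.hom x).2 h, map_zero]
  · rw [pim_eq, C.hphi, (Q.eD_DD _).2]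
    refine cst_TT (N := Q.wt x) ?_ (C.hom x).1
    exact (Q.coreHyp.wt_pos x).ne'

lemma DD_eq (p : Q.Y →₀ 𝒜.A) : DD (ap Q.a) C.ce p = Q.Dp p := by
  refine Dat.lext ?_ p
  intro y
  rw [Q.Dp_single, DD, Finsupp.linearCombination_single, one_smul, ce]
  rcases y with _ | x
  · rw [phi_cp_none]; rfl
  · rw [phi_cp_some, C.hphi, Q.D_single]
    have h1 : sg F Q.deg x • Finsupp.single (none : Q.Y) (Q.a x) = Finsupp.single none (Q.a x) := by
      by_cases h : Q.deg x = 0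
      · simp [sg, h]
      · rw [Q.coreHyp.a_zero x h]; simp
    rw [h1, Dat.a, Finsupp.single_neg, sub_neg_eq_add]
    exact (Q.ms_cs _).symm

lemma repr_pj (n : ℕ) (p : Q.Y →₀ 𝒜.A) (y : Q.Y) (h : Q.dg y = n) :
    (Q.B n).repr (Q.pj n p) ⟨y, h⟩ = p y := by
  classical
  refine Dat.lext (f := Finsupp.lapply (⟨y, h⟩ : {y : Q.Y // Q.dg y = n}) ∘ₗ
    (Q.B n).repr.toLinearMap ∘ₗ Q.pj n) (g := Finsupp.lapply y) ?_ p
  intro z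
  by_cases hz : Q.dg z = n
  · simp [Q.pj_single n z hz, Finsupp.single_apply]
  · have : z ≠ y := by rintro rfl; exact hz h
    simp [Q.pj_single_ne n z hz, Finsupp.single_apply, this]

lemma hgen : ∀ n : ℕ, 2 ≤ n → ∀ u : Q.Y →₀ F, (∀ y, u y ≠ 0 → C.Z.degp y = n) →
    (∀ (q : ℕ) (w : Fin q → Q.Y), (∀ t, 1 ≤ C.Z.degp (w t)) →
      u.sum (fun y r => r * C.Z.b q (fun t => Finsupp.single (w t) 1) y) = 0) → u = 0 := by
  intro n hn u hu h
  have hnt := Q.nontriv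
  have hu : ∀ y, u y ≠ 0 → Q.dg y = n := hu
  obtain ⟨N, rfl⟩ : ∃ N, n = N + 2 := ⟨n - 2, by omega⟩
  have hnone : u none = 0 := by
    by_contra h'
    exact absurd (hu none h') (Nat.succ_ne_zero _).symm
  let v : Q.X →₀ F := u.some
  have hv : ∀ x, v x ≠ 0 → Q.deg x = N + 1 := fun x hx => Nat.succ.inj (hu (some x) hx)
  have ht : v.sum (fun x r => r • C.c x) = 0 := by
    apply (wb F Q.X).repr.injective
    ext l
    have h1 := h l.length (fun t => some (l.get t)) (fun t => Nat.succ_le_succ (Nat.zero_le _))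
    have h2 : ∀ y, C.Z.b l.length (fun t => Finsupp.single (some (l.get t)) 1) y =
        ev (l.map (fun x => ⇑(Finsupp.single (some x) (1 : F)))) (C.ce y) := by
      intro y
      rw [ADat.b_apply, evM_eq]
      have : l.map (fun x => ⇑(Finsupp.single (some x) (1 : F))) =
        List.ofFn (fun i : Fin l.length => ⇑(Finsupp.single (some (l.get i)) (1 : F))) := by
        conv_lhs => rw [← List.ofFn_get l, List.map_ofFn]
        rfl
      rw [this]; rfl
    simp only [h2] at h1
    rw [Finsupp.sum_option_index _ _ (by simp) (by intros; ring), hnone, zero_mul, zero_add] at h1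
    simp only [ce, ev_cp_single] at h1
    rw [Finsupp.sum, map_sum, Finsupp.finsetSum_apply, map_zero]
    simp only [map_smul, Finsupp.smul_apply, smul_eq_mul]
    exact h1
  let P : Q.X →₀ 𝒜.A := v.mapRange (algebraMap F 𝒜.A) (map_zero _)
  have hP : P = v.sum (fun x r => r • Finsupp.single x (1 : 𝒜.A)) := by
    rw [← Finsupp.sum_single P, Finsupp.sum_mapRange_index (by simp)]
    refine Finset.sum_congr rfl fun x _ => ?_
    dsimp only
    rw [Finsupp.smul_single, Algebra.algebraMap_eq_smul_one]
  have hDP : Q.D P = 0 := by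
    have := congrArg (phi F Q.a) ht
    rw [map_zero, Finsupp.sum, map_sum] at this
    rw [hP, Finsupp.sum, map_sum, ← this]
    refine Finset.sum_congr rfl fun x _ => ?_
    rw [LinearMap.map_smul_of_tower Q.D, (phi F Q.a).map_smul, C.hphi]
  have haP : Finsupp.linearCombination 𝒜.A Q.a P = 0 := by
    rw [hP, Finsupp.sum, map_sum]
    refine Finset.sum_eq_zero fun x hx => ?_
    rw [LinearMap.map_smul_of_tower, Finsupp.linearCombination_single, Q.coreHyp.a_zero x, smul_zero,
      smul_zero]
    rw [hv x (by simpa using hx)]; omega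
  have hd : (R.d (N + 1)).lin (Q.pj (N + 2) (Q.ms P)) = 0 := by
    rw [← Q.pj_Dp, Q.Dp_ms, hDP, haP]; simp
  have hm : Q.pj (N + 2) (Q.ms P) ∈ LinearMap.range (R.d (N + 2)).lin := by
    rw [R.exact]; exact hd
  have hJ := R.minimal _ hm
  ext y
  by_contra hy
  have hy' := hu y hy
  have h3 := J_repr (Q.B (N + 2)) hJ ⟨y, hy'⟩
  rw [repr_pj] at h3
  rcases y with _ | x
  · exact hy hnone
  · rw [Q.ms_some] at h3
    have h4 : v x • (1 : 𝒜.A) ∈ 𝒜.jideal := by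
      rw [← Algebra.algebraMap_eq_smul_one]
      simpa [P] using h3
    exact hy (smul_one_J h4)

end Cor
end PKA


namespace PKA
open GradedAlg
open FreeAlgebra (ι)

section Snoc
variable {F : Type} [Field F] {Y : Type}

lemma evW_snoc (L : List (Y → F)) (f : Y → F) (l : List Y) (y : Y) :
    evW (L ++ [f]) (l ++ [y]) = evW L l * f y := by
  induction L generalizing l with
  | nil =>
    rcases l with _ | ⟨z, _ | ⟨z', l⟩⟩ <;> simp [evW]
  | cons g L ih =>
    rcases l with _ | ⟨z, l⟩
    · rcases L with _ | ⟨g', L⟩ <;> simp [evW]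
    · simp only [List.cons_append, evW, ih]; ring

lemma ev_snoc (L : List (Y → F)) (f : Y → F) (t : FreeAlgebra F Y) (y : Y) :
    ev (L ++ [f]) (t * ι F y) = ev L t * f y := by
  induction t using Tind with
  | h0 => simp
  | hadd t t' h h' => simp [add_mul, h, h']
  | hsmul r t h => simp only [smul_mul_assoc, map_smul, h, smul_eq_mul]; ring
  | hW l => rw [← Wd_single, ← Wd_append, ev_Wd, ev_Wd, evW_snoc]

end Snoc

namespace Cor
variable {F : Type} [Field F] {𝒜 : GradedAlg F} {T : 𝒜.GMod} {R : MinRes T} {Q : Dat R} (C : Cor Q)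

lemma hom_J {n : ℕ} (f : HomSp T R n) {m : (R.P n).M}
    (hm : m ∈ 𝒜.jideal • (⊤ : Submodule 𝒜.A (R.P n).M)) (Q : Dat R) : f m = 0 := by
  refine Submodule.smul_induction_on hm ?_ ?_
  · intro r hr m _
    rw [map_smul]; exact Q.JT hr _
  · intro m m' h h'
    rw [map_add, h, h', add_zero]

lemma precomp_zero (Q : Dat R) (n : ℕ) (f : HomSp T R n) : precompF T (R.d n).lin f = 0 := by
  ext m
  exact hom_J f (R.minimal n ⟨m, rfl⟩) Q

lemma cocyc_all (Q : Dat R) (n : ℕ) (f : HomSp T R n) : f ∈ cocyc T R n := precomp_zero Q n f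

lemma cobound_bot (Q : Dat R) (n : ℕ) : cobound T R n = ⊥ := by
  rcases n with _ | n
  · rfl
  · rw [eq_bot_iff]
    rintro _ ⟨f, rfl⟩
    exact precomp_zero Q n f

/-- The functional on the total module attached to a dual vector. -/
def Psi (Q : Dat R) (φ : Q.Y → F) : (Q.Y →₀ 𝒜.A) →ₗ[𝒜.A] T.M :=
  Finsupp.linearCombination 𝒜.A (fun y => φ y • Q.t0)

lemma Psi_single (φ : Q.Y → F) (y : Q.Y) : Psi Q φ (Finsupp.single y 1) = φ y • Q.t0 := by
  rw [Psi, Finsupp.linearCombination_single, one_smul]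

/-- The cochain attached to a dual vector. -/
def cc (Q : Dat R) (n : ℕ) (φ : Q.Y → F) : HomSp T R n := Psi Q φ ∘ₗ Q.inc n

lemma cc_B (n : ℕ) (φ : Q.Y → F) (y) : cc Q n φ (Q.B n y) = φ y.1 • Q.t0 := by
  rw [cc, LinearMap.comp_apply, Q.inc_B, Psi_single]

/-- The comparison map. -/
def psi0 (n : ℕ) : (Q.Y →₀ F) →ₗ[F] ExtQ T R n where
  toFun φ := extCls T (cocyc_all Q n (cc Q n φ))
  map_add' φ ψ := by
    rw [extCls, extCls, extCls, ← Submodule.Quotient.mk_add]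
    congr 1
    apply Subtype.ext
    refine (Q.B n).ext fun y => ?_
    change cc Q n _ _ = cc Q n _ _ + cc Q n _ _
    rw [cc_B, cc_B, cc_B, Finsupp.add_apply, add_smul]
  map_smul' r φ := by
    rw [extCls, extCls, RingHom.id_apply, ← Submodule.Quotient.mk_smul]
    congr 1
    apply Subtype.ext
    refine (Q.B n).ext fun y => ?_
    change cc Q n _ _ = r • cc Q n _ _
    rw [cc_B, cc_B, Finsupp.smul_apply, smul_assoc]

lemma extCls_inj {n : ℕ} {f g : HomSp T R n} (Q : Dat R) {hf : f ∈ cocyc T R n} {hg : g ∈ cocyc T R n}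
    (h : extCls T hf = extCls T hg) : f = g := by
  have h1 := (Submodule.Quotient.eq _).1 h
  have h2 : f - g ∈ cobound T R n := h1
  rw [cobound_bot Q] at h2
  exact sub_eq_zero.1 h2

lemma psi0_inj (n : ℕ) (φ : Q.Y →₀ F) (hφ : ∀ y, φ y ≠ 0 → Q.dg y = n)
    (h : psi0 (Q := Q) n φ = 0) : φ = 0 := by
  rw [← (psi0 (Q := Q) n).map_zero] at h
  have h1 : cc Q n φ = cc Q n (0 : Q.Y →₀ F) := extCls_inj Q h
  ext y
  by_contra hy
  have h2 := LinearMap.congr_fun h1 (Q.B n ⟨y, hφ y hy⟩)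
  rw [cc_B, cc_B] at h2
  simp only [Finsupp.coe_zero, Pi.zero_apply, zero_smul] at h2
  exact hy ((smul_eq_zero.1 h2).resolve_right Q.t0_ne)

lemma psi0_surj (n : ℕ) (e : ExtQ T R n) :
    ∃ φ : Q.Y →₀ F, (∀ y, φ y ≠ 0 → Q.dg y = n) ∧ psi0 (Q := Q) n φ = e := by
  obtain ⟨⟨f, hf⟩, rfl⟩ := Submodule.Quotient.mk_surjective _ e
  choose r hr using fun y => Q.t0_span (f (Q.B n y))
  classical
  let φ : Q.Y →₀ F := Finsupp.onFinset (fin (Q := Q) n).toFinset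
    (fun y => if h : Q.dg y = n then r ⟨y, h⟩ else 0) (by
      intro y hy
      by_contra h
      have h' : ¬ Q.dg y = n := by simpa using h
      exact hy (dif_neg h'))
  refine ⟨φ, ?_, ?_⟩
  · intro y hy
    by_contra h
    exact hy (dif_neg h)
  · change Submodule.Quotient.mk _ = _
    congr 1
    apply Subtype.ext
    refine (Q.B n).ext fun y => ?_
    change cc Q n _ _ = f _
    rw [cc_B, hr]
    congr 1
    exact dif_pos y.2

lemma homDeg_iff {n : ℕ} {j : ℤ} {f : HomSp T R n} (Q : Dat R) :
    f ∈ homDeg T R n j ↔ (j = Q.w n ∨ f = 0) := by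
  constructor
  · intro h
    by_cases hj : j = Q.w n
    · exact Or.inl hj
    · refine Or.inr ((Q.B n).ext fun y => ?_)
      exact h _ (Ne.symm hj) _ (Q.hB n y)
  · rintro (rfl | rfl)
    · intro i hi x hx
      rcases lt_or_gt_of_ne hi with h | h
      · rw [eq_zero_of_lt (Q.B n) (Q.hB n) h hx, map_zero]
      · obtain ⟨k, hk⟩ : ∃ k : ℕ, i = k + (Q.w n : ℤ) := ⟨(i - Q.w n).toNat, by omega⟩
        rw [hk] at hx
        rw [← (Q.B n).linearCombination_repr x, Finsupp.linearCombination_apply, Finsupp.sum, map_sum]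
        refine Finset.sum_eq_zero fun y _ => ?_
        rw [map_smul]
        exact Q.JT (mem_J_of (i := k) (by omega) (repr_mem (Q.B n) (Q.hB n) hx y)) _
    · exact zero_mem _

lemma comp_iff {n : ℕ} {j : ℤ} {φ : Q.Y →₀ F} (hφ : ∀ y, φ y ≠ 0 → Q.dg y = n) :
    φ ∈ C.Z.comp n j ↔ (j = Q.w n ∨ φ = 0) := by
  rw [ADat.mem_comp]
  constructor
  · intro h
    by_cases hj : j = Q.w n
    · exact Or.inl hj
    · right
      ext y
      by_contra hy
      have h1 := (h y hy).2
      change ((Q.w (Q.dg y) : ℕ) : ℤ) = j at h1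
      rw [hφ y hy] at h1
      exact hj h1.symm
  · rintro (rfl | rfl)
    · intro y hy
      have := hφ y hy
      exact ⟨congrArg _ this, by change ((Q.w (Q.dg y) : ℕ) : ℤ) = _; rw [this]⟩
    · intro y hy; exact absurd rfl hy

lemma cst_J (w : FreeAlgebra F Q.Y) : pim (ap Q.a) w • Q.t0 = cst w • Q.t0 := by
  induction w using Tind with
  | h0 => simp
  | hadd t t' h h' => simp only [map_add, add_smul, h, h']
  | hsmul r t h => simp only [map_smul, smul_assoc, h]
  | hW l =>
    cases l with
    | nil => simp
    | cons y l =>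
      rw [Wd_cons, map_mul, map_mul]
      have h1 : pim (ap Q.a) (ι F y) = ap Q.a y := by simp
      have h2 : cst (ι F y) = (0 : F) := by simp
      rw [h1, h2, zero_mul, zero_smul]
      rw [mul_smul]
      refine Q.JT ?_ _
      rcases y with _ | x
      · exact zero_mem _
      · exact mem_J_of (Q.coreHyp.wt_pos x).ne' (Q.coreHyp.a_mem x)

lemma Psi_phi (φ : Q.Y → F) (t : FreeAlgebra F Q.Y) :
    Psi Q φ (phi F (ap Q.a) t) = ev [φ] t • Q.t0 := by
  induction t using TindR with
  | h0 => simp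
  | hadd t t' h h' => simp only [map_add, add_smul, h, h']
  | hsmul r t h =>
    rw [map_smul, LinearMap.map_smul_of_tower, h, map_smul, smul_assoc]
  | h1 => rw [ev_cons_one]; simp
  | hW l y =>
    have h := ev_snoc [] φ (Wd F l) y
    rw [List.nil_append, ev_nil] at h
    rw [phi_mul_ι, h, Psi, Finsupp.linearCombination_single, smul_comm, cst_J, smul_smul, mul_comm]

lemma Psi_phig (φ g : Q.Y → F) (t : FreeAlgebra F Q.Y) :
    Psi Q φ (phig (ap Q.a) g t) = ev [φ, g] t • Q.t0 := by
  induction t using TindR with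
  | h0 => simp
  | hadd t t' h h' => simp only [map_add, add_smul, h, h']
  | hsmul r t h =>
    rw [map_smul, LinearMap.map_smul_of_tower, h, map_smul, smul_assoc]
  | h1 => rw [ev_cons_one]; simp
  | hW l y =>
    have h := ev_snoc [φ] g (Wd F l) y
    rw [List.singleton_append] at h
    rw [phig_mul_ι, h, LinearMap.map_smul_of_tower, Psi_phi, smul_smul, mul_comm]

lemma Psi_pj {i : ℕ} {φ : Q.Y → F} (hφ : ∀ y, φ y ≠ 0 → Q.dg y = i) (p : Q.Y →₀ 𝒜.A) :
    Psi Q φ (Q.inc i (Q.pj i p)) = Psi Q φ p := by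
  refine Dat.lext (f := Psi Q φ ∘ₗ Q.inc i ∘ₗ Q.pj i) (g := Psi Q φ) ?_ p
  intro y
  rw [LinearMap.comp_apply, LinearMap.comp_apply]
  by_cases h : Q.dg y = i
  · rw [Q.inc_pj_single h]
  · have : φ y = 0 := by
      by_contra h'
      exact h (hφ y h')
    rw [Q.pj_single_ne i y h, map_zero, map_zero, Psi_single, this, zero_smul]

lemma aug_pj (p : Q.Y →₀ 𝒜.A) : R.aug.lin (Q.pj 0 p) = p none • Q.t0 := by
  refine Dat.lext (f := R.aug.lin ∘ₗ Q.pj 0)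
    (g := LinearMap.toSpanSingleton 𝒜.A T.M Q.t0 ∘ₗ Finsupp.lapply none) ?_ p
  intro y
  rw [LinearMap.comp_apply, LinearMap.comp_apply, LinearMap.toSpanSingleton_apply]
  rcases y with _ | x
  · rw [Q.pj_single 0 none rfl]
    simp [Dat.t0, Dat.e0]
  · rw [Q.pj_single_ne 0 (some x) (Nat.succ_ne_zero _)]
    simp

lemma LL_single (g : Q.Y → F) (y : Q.Y) :
    LL (ap Q.a) C.ce g (Finsupp.single y 1) = phig (ap Q.a) g (C.ce y) := by
  rw [LL, Finsupp.linearCombination_single, one_smul]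

lemma Dp_LL (g : Q.Y → F) (p : Q.Y →₀ 𝒜.A) :
    Q.Dp (LL (ap Q.a) C.ce g p) = - LL (ap Q.a) C.ce g (Q.Dp p) := by
  rw [← C.DD_eq, ← C.DD_eq]
  refine DD_LL (s := fun y => (-1 : F) ^ (Q.dg y + 1)) ?_ C.Z.cst_c C.Z.cst_lam_c ?_ C.Z.dd g p
  · intro y
    rcases y with _ | x
    · simp [ap]
    · by_cases h : Q.deg x = 0
      · simp [ap, dp, h]
      · simp [ap, Q.coreHyp.a_zero x h]
  · exact pim_cp _ _ _ C.pim_c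

/-- The chain lift of a cochain. -/
def lift (j : ℕ) (g : Q.Y → F) : ChainLift T R R j (cc Q j g) where
  ℓ m k _ := (-1 : ℤ) ^ k • (Q.pj k ∘ₗ LL (ap Q.a) C.ce g ∘ₗ Q.inc m)
  comm_aug := by
    refine (Q.B j).ext fun y => ?_
    rw [cc_B, pow_zero, one_smul]
    simp only [LinearMap.comp_apply]
    rw [Q.inc_B, LL_single, aug_pj, ce, phig_cp_none, algebraMap_smul]
  comm k := by
    ext m
    simp only [LinearMap.comp_apply, LinearMap.smul_apply]
    rw [map_zsmul, ← Q.pj_Dp, C.Dp_LL, Q.Dp_inc, map_neg, pow_succ, mul_neg_one, neg_smul_neg]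

lemma m2 {i j : ℕ} {x g : Q.Y →₀ F} (hx : ∀ y, x y ≠ 0 → Q.dg y = i)
    (hg : ∀ y, g y ≠ 0 → Q.dg y = j) (y : Q.Y) :
    C.Z.m 2 ![x, g] y = (-1) ^ i * ev [⇑x, ⇑g] (C.ce y) := by
  rw [C.Z.m_hom (I := ![(i : ℤ), (j : ℤ)]), Finsupp.smul_apply, smul_eq_mul, ADat.b_apply, evM_eq]
  · congr 1
    · rw [← eps_nat]; congr 1; simp [eL]
  · intro t
    fin_cases t
    · intro y hy; exact congrArg _ (hx y hy)
    · intro y hy; exact congrArg _ (hg y hy)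

lemma mul_cc {i j : ℕ} {x g : Q.Y →₀ F} (hx : ∀ y, x y ≠ 0 → Q.dg y = i)
    (hg : ∀ y, g y ≠ 0 → Q.dg y = j) :
    cc Q (i + j) (C.Z.m 2 ![x, g]) = cc Q i x ∘ₗ (C.lift j g).ℓ (i + j) i rfl := by
  refine (Q.B (i + j)).ext fun y => ?_
  rw [cc_B, C.m2 hx hg]
  change _ = cc Q i x ((-1 : ℤ) ^ i • (Q.pj i (LL (ap Q.a) C.ce g (Q.inc (i + j) (Q.B (i + j) y)))))
  rw [Q.inc_B, LL_single, map_zsmul, cc, LinearMap.comp_apply, Psi_pj hx, Psi_phig, mul_smul]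
  rcases Nat.even_or_odd i with h | h
  · simp [h.neg_one_pow]
  · simp [h.neg_one_pow]

lemma edeg {n : ℕ} {φ : Q.Y →₀ F} :
    φ ∈ AInf.Edeg C.Z.S (n : ℤ) ↔ ∀ y, φ y ≠ 0 → Q.dg y = n := by
  rw [ADat.mem_Edeg]
  refine forall_congr' fun y => forall_congr' fun _ => ?_
  exact Nat.cast_inj

/-- The comparison isomorphism. -/
def psi (n : ℕ) : ↥(AInf.Edeg C.Z.S (n : ℤ)) ≃ₗ[F] ExtQ T R n :=
  LinearEquiv.ofBijective ((psi0 (Q := Q) n : C.Z.S.V →ₗ[F] ExtQ T R n) ∘ₗ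
      (AInf.Edeg C.Z.S (n : ℤ)).subtype) (by
    constructor
    · rw [← LinearMap.ker_eq_bot, LinearMap.ker_eq_bot']
      rintro ⟨φ, hφ⟩ h
      exact Subtype.ext (psi0_inj n φ (C.edeg.1 hφ) h)
    · intro e
      obtain ⟨φ, h1, h2⟩ := psi0_surj (Q := Q) n e
      exact ⟨⟨φ, C.edeg.2 h1⟩, h2⟩)

lemma psi_apply (n : ℕ) (φ : Q.Y →₀ F) (hφ : φ ∈ AInf.Edeg C.Z.S (n : ℤ)) :
    C.psi n ⟨φ, hφ⟩ = extCls T (cocyc_all Q n (cc Q n φ)) := rfl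

lemma comp_neg_aux (φ : Q.Y →₀ F) (n j : ℤ) (hn : n < 0) (hφ : φ ∈ C.Z.comp n j) : φ = 0 := by
  have h := C.Z.mem_comp.1 hφ
  ext y
  by_contra hy
  have h1 : ((Q.dg y : ℕ) : ℤ) = n := (h y hy).1
  omega

lemma cc_homDeg {n : ℕ} {j : ℤ} (φ : Q.Y →₀ F) (hφ : ∀ y, φ y ≠ 0 → Q.dg y = n)
    (h1 : φ ∈ C.Z.comp n j) : cc Q n φ ∈ homDeg T R n j := by
  have h2 := (C.comp_iff hφ).1 h1
  rw [homDeg_iff Q]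
  refine h2.imp_right ?_
  rintro rfl
  refine (Q.B n).ext fun y => ?_
  rw [cc_B]; simp

lemma psi_mul (μ : ∀ i j : ℕ, ExtQ T R i →ₗ[F] ExtQ T R j →ₗ[F] ExtQ T R (i + j))
    (hμ : IsYonedaMul T R R μ) (i j : ℕ) (x y : Q.Y →₀ F)
    (hx : ∀ z, x z ≠ 0 → Q.dg z = i) (hy : ∀ z, y z ≠ 0 → Q.dg z = j) :
    extCls T (cocyc_all Q (i + j) (cc Q (i + j) (C.Z.m 2 ![x, y]))) =
      μ i j (extCls T (cocyc_all Q i (cc Q i x))) (extCls T (cocyc_all Q j (cc Q j y))) := by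
  have h := hμ i j (cc Q i x) (cocyc_all Q i _) (cc Q j y) (cocyc_all Q j _) (C.lift j y)
    (cocyc_all Q _ _)
  rw [h]
  have h2 := C.mul_cc hx hy
  rw [extCls, extCls]
  congr 1
  exact Subtype.ext h2

/-- The `A_∞`-structure lives on the Koszul dual. -/
def onExt (μ : ∀ i j : ℕ, ExtQ T R i →ₗ[F] ExtQ T R j →ₗ[F] ExtQ T R (i + j))
    (hμ : IsYonedaMul T R R μ) : AInf.AInftyOnExt 𝒜 T R μ C.Z.S where
  comp_neg n j hn := by
    rw [eq_bot_iff]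
    intro φ hφ
    exact C.comp_neg_aux φ n j hn hφ
  ψ := C.psi
  ψ_comp n j := by
    ext e
    constructor
    · rintro ⟨⟨φ, hφ⟩, h1, rfl⟩
      exact ⟨⟨cc Q n (show Q.Y →₀ F from φ), cocyc_all Q n _⟩,
        C.cc_homDeg φ (C.edeg.1 hφ) h1, rfl⟩
    · rintro ⟨⟨f, hf⟩, h1, rfl⟩
      have h1 := (homDeg_iff Q).1 (show f ∈ homDeg T R n j from h1)
      obtain ⟨φ, h2, h3⟩ := psi0_surj (Q := Q) n (Submodule.Quotient.mk ⟨f, hf⟩)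
      refine ⟨⟨φ, C.edeg.2 h2⟩, ?_, h3⟩
      refine (C.comp_iff h2).2 (h1.imp_right ?_)
      rintro rfl
      refine psi0_inj n φ h2 ?_
      rw [h3]; exact Submodule.Quotient.mk_zero _
  ψ_mul i j x y hx hy hm := C.psi_mul μ hμ i j x y (C.edeg.1 hx) (C.edeg.1 hy)

end Cor

section Final
variable {F : Type} [Field F]

/-- The zero data. -/
def Zt (F : Type) [Field F] (e : ℕ) : ADat F Empty where
  degp y := y.elim
  wtp y := y.elim
  c y := y.elim
  e := e
  span y := y.elim
  dd y := y.elim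
  fin n := Set.toFinite _
  len _ y := y.elim

lemma jump_eq (d n : ℕ) (hd : 3 < d) : jump d 3 n = n + n / 3 * (d - 3) := by
  have h1 : (n - n % 3) / 3 = n / 3 := by omega
  obtain ⟨e, rfl⟩ : ∃ e, d = e + 3 := ⟨d - 3, by omega⟩
  rw [jump, h1, Nat.add_sub_cancel, mul_add]
  omega

lemma jump_mono (d : ℕ) (hd : 3 < d) : StrictMono (jump d 3) := by
  refine strictMono_nat_of_lt_succ fun n => ?_
  rw [jump_eq d n hd, jump_eq d (n + 1) hd]
  have : n / 3 * (d - 3) ≤ (n + 1) / 3 * (d - 3) :=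
    Nat.mul_le_mul_right _ (Nat.div_le_div_right (Nat.le_succ n))
  omega

lemma triv_case (𝒜 : GradedAlg F) [Subsingleton 𝒜.A] (d : ℕ)
    (T : 𝒜.GMod) (R : MinRes T)
    (μ : ∀ i j : ℕ, ExtQ T R i →ₗ[F] ExtQ T R j →ₗ[F] ExtQ T R (i + j)) :
    ∃ S : AInf.BigradedAInfty F, Nonempty (AInf.AInftyOnExt 𝒜 T R μ S) ∧
      (∀ q : ℕ, (¬ ∃ k : ℕ, q = k * (d - 3) + 2) → S.m q = 0) ∧
      AInf.GeneratedByE1 S := by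
  have hT : Subsingleton T.M := Module.subsingleton 𝒜.A T.M
  have hE : ∀ n, Subsingleton (ExtQ T R n) := by
    intro n
    have : Subsingleton ↥(cocyc T R n) :=
      ⟨fun f g => Subtype.ext (LinearMap.ext fun m => Subsingleton.elim _ _)⟩
    infer_instance
  let Z := Zt F (d - 3)
  have hV : Subsingleton Z.S.V := inferInstanceAs (Subsingleton (Empty →₀ F))
  refine ⟨Z.S, ⟨⟨fun _ _ _ => Subsingleton.elim _ _, fun n => ?_, fun n j => ?_, ?_⟩⟩,
    Z.m_zero, fun n _ => Subsingleton.elim _ _⟩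
  · exact { (0 : ↥(AInf.Edeg Z.S (n : ℤ)) →ₗ[F] ExtQ T R n) with
      invFun := fun _ => 0
      left_inv := fun _ => Subsingleton.elim _ _
      right_inv := fun _ => Subsingleton.elim _ _ }
  · exact Subsingleton.elim _ _
  · intro i j x y hx hy hm
    exact Subsingleton.elim _ _

lemma main (𝒜 : GradedAlg F) (h0 : 𝒜.grading 0 = Submodule.span F {1})
    (d : ℕ) (hd : 3 < d)
    (T : 𝒜.GMod) (hT : IsTrivialGMod T) (hpk : 𝒜.IsPKAlg 3 d T)
    (R : MinRes T)
    (μ : ∀ i j : ℕ, ExtQ T R i →ₗ[F] ExtQ T R j →ₗ[F] ExtQ T R (i + j))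
    (hμ : IsYonedaMul T R R μ) :
    ∃ S : AInf.BigradedAInfty F, Nonempty (AInf.AInftyOnExt 𝒜 T R μ S) ∧
      (∀ q : ℕ, (¬ ∃ k : ℕ, q = k * (d - 3) + 2) → S.m q = 0) ∧
      AInf.GeneratedByE1 S := by
  rcases subsingleton_or_nontrivial 𝒜.A with hs | hn
  · exact triv_case 𝒜 d T R μ
  · obtain ⟨R', hR'⟩ := hpk
    have hR := fun n => (genInDeg_all h0 R' R (s := fun n => (jump d 3 n : ℤ) + 0) hR' n).1
    simp only [add_zero] at hR
    obtain ⟨X, deg, B, hB⟩ := exists_setup h0 hT R (jump d 3) hR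
    let Q : Dat R := ⟨X, deg, jump d 3, B, hB, by simp [jump], jump_mono d hd, h0, hn, hT⟩
    obtain ⟨c, h1, h2, h3⟩ := core Q.coreHyp
    let C : Cor Q := ⟨c, h1, h2, h3, d - 3, by omega, fun n => jump_eq d n hd⟩
    exact ⟨C.Z.S, ⟨C.onExt μ hμ⟩, C.Z.m_zero, C.Z.generated C.hgen⟩

end Final
end PKA


open GradedAlg AInf in
/-- **Theorem 5.6(1).** Let `A = F ⊕ A_1 ⊕ A_2 ⊕ ⋯` be a graded algebra generated in
degree `1` which is piecewise-Koszul with period `3` and jump degree `d > 3`.  Then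
there is a bigraded `A_∞`-structure `{m_q}` on the Koszul dual `E(A)` — with `m_1 = 0`,
`m_2` the Yoneda product and `m_q = 0` unless `q = k(d−3)+2` for some `k ∈ ℕ` — under
which `E(A)` is generated by `E^1(A) = Ext^1_A(F,F)`. -/
theorem exists_ainfty_structure_generated_by_E1
    {F : Type} [Field F] (𝒜 : GradedAlg F) (hA : 𝒜.Standing)
    (h0 : 𝒜.grading 0 = Submodule.span F {1})
    (d : ℕ) (hd : 3 < d)
    (T : 𝒜.GMod) (hT : IsTrivialGMod T) (hpk : 𝒜.IsPKAlg 3 d T)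
    (R : MinRes T)
    (μ : ∀ i j : ℕ, ExtQ T R i →ₗ[F] ExtQ T R j →ₗ[F] ExtQ T R (i + j))
    (hμ : IsYonedaMul T R R μ) :
    ∃ S : BigradedAInfty F, Nonempty (AInftyOnExt 𝒜 T R μ S) ∧
      (∀ q : ℕ, (¬ ∃ k : ℕ, q = k * (d - 3) + 2) → S.m q = 0) ∧
      GeneratedByE1 S := by
  exact PKA.main 𝒜 h0 d hd T hT hpk R μ hμ
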